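/- arXiv:1304.7216 — 2 statements merged into one kernel-verified Lean document; each statement's English description precedes it below -/
import Mathlib

section
/- Let Γ be an infinite group generated by a finite set S with S = S⁻¹ and 1 ∉ S, and let G = G(Γ,S) be its Cayley graph. Let ρ ∈ Γ with ρ ≠ 1, let N be the normal closure of ρ in Γ, and suppose that the quotient group Q = Γ/N is infinite and that no element of S lies in N. Let S' ⊆ Q be the image of S under the quotient map, and let G_ρ = G(Q, S') be the Cayley graph of Q with generating set S'. If σ_n(1)^{1/n} → μ as n → ∞ (counting SAWs in G from the identity) and σ'_n(1)^{1/n} → μ' as n → ∞ (counting SAWs in G_ρ from the identity), then μ' < μ. That is, adding a further non-trivial relator strictly decreases the connective constant of the Cayley graph. -/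
open Filter

/-- The number of `n`-step self-avoiding walks in `G` starting at `v`. -/
noncomputable def sawCount {V : Type*} (G : SimpleGraph V) (v : V) (n : ℕ) : ℕ :=
  Nat.card {p : Σ w : V, G.Walk v w // p.2.IsPath ∧ p.2.length = n}

/-- The Cayley graph of a group with respect to a set `S` (assumed symmetric, `S = S⁻¹`,
and not containing `1`): distinct `g, h` are adjacent iff `g⁻¹ * h ∈ S`. -/
def cayleyGraph {G : Type*} [Group G] (S : Set G) : SimpleGraph G :=
  SimpleGraph.fromRel (fun g h => g⁻¹ * h ∈ S)

/-!
Suppose that `π : Γ →* Q` kills some `ν ≠ 1` and that `μ ≤ μ'`. Encode walks by the words of their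
steps. A word whose image in `Q` is self-avoiding is self-avoiding in `Γ`; we produce so many
further self-avoiding words in `Γ` that they outgrow every `b ^ n` with `b > μ'`.

Left multiplication by `ν` preserves the fibres of `π`. It yields a finite set `D` of vertices of
`Q`, any two of which are joined inside `D` by the image of a path of `Γ` that is not injective
under `π`. Rerouting a lifted walk along such a path, while it is inside a translate `c D`, is a
detour: the new walk ends in the same fibre, but its image in `Q` is no longer self-avoiding.

Detours made at different places must not interfere. A walk is `k`-sparse if around each of its
vertices `c` it visits the translate `c U` at most `k` times, where `U = D D⁻¹`. If a block of a
`(k + 1)`-sparse walk already makes `k + 1` visits to `c U`, the rest of the walk stays out of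
`c U`, and the block can be replaced by a detour around `c` without loss of self-avoidance.

Let `s k n` be the number of `k`-sparse walks of length `n` in `Q`. Then `s 0 1 = 0`, whereas all
self-avoiding walks are `|U|`-sparse, so that `μ' ^ n ≤ s |U| n` by submultiplicativity. It
therefore suffices to pass from `s k M < μ' ^ M` to `s (k + 1) n < μ' ^ n` for some `n`. Cut a
`(k + 1)`-sparse walk of length `q M` into `q` blocks. Those with few blocks that are not
`k`-sparse number fewer than `μ' ^ (q M)`. Those with a positive proportion of such blocks have
exponentially many sets of detours, and the decoding costs little: reading the new word from left
to right, the first moment at which its image fails to be self-avoiding locates the next detour up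
to a bounded delay.
-/

namespace CayleyWalk

open Finset

section Words

variable {α : Type*}

/-- The words of length `n` over the alphabet `A`, as lists. -/
noncomputable def words (A : Finset α) (n : ℕ) : Finset (List α) :=
  (Fintype.piFinset fun _ : Fin n ↦ A).map ⟨List.ofFn, List.ofFn_injective⟩

lemma mem_words {A : Finset α} {n : ℕ} {l : List α} :
    l ∈ words A n ↔ l.length = n ∧ ∀ x ∈ l, x ∈ A := by
  constructor
  · intro h
    obtain ⟨f, hf, rfl⟩ := Finset.mem_map.1 h
    simpa [List.forall_mem_ofFn_iff] using hf
  · rintro ⟨rfl, h⟩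
    exact Finset.mem_map.2 ⟨l.get, by simpa using fun i ↦ h _ (l.get_mem i), List.ofFn_get l⟩

lemma card_words (A : Finset α) (n : ℕ) : #(words A n) = #A ^ n := by
  simp [words]

lemma exists_infix_blocks {l : List α} {q M : ℕ} (hl : l.length = q * M) :
    ∃ w : Fin q → List α,
      (∀ i, (w i).length = M ∧ w i <:+: l) ∧ (List.ofFn w).flatten = l := by
  obtain ⟨f, rfl⟩ : ∃ f : Fin (q * M) → α, List.ofFn f = l := by
    rw [← hl]; exact ⟨l.get, List.ofFn_get l⟩
  refine ⟨_, fun i ↦ ⟨List.length_ofFn, ?_⟩, (List.ofFn_mul f).symm⟩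
  rw [List.ofFn_mul f]
  exact List.infix_of_mem_flatten (List.mem_ofFn.2 ⟨i, rfl⟩)

lemma card_filter_words_mul_le {A : Finset α} {P : List α → Prop} [DecidablePred P]
    (hP : ∀ ⦃l l'⦄, l' <:+: l → P l → P l') (q M : ℕ) :
    #{l ∈ words A (q * M) | P l} ≤ #{l ∈ words A M | P l} ^ q := by
  classical
  calc
    _ ≤ #((Fintype.piFinset fun _ : Fin q ↦ {l ∈ words A M | P l}).image
          fun w ↦ (List.ofFn w).flatten) := by
      refine card_le_card fun l hl ↦ ?_
      obtain ⟨hl, hPl⟩ := mem_filter.1 hl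
      obtain ⟨hlen, hlA⟩ := mem_words.1 hl
      obtain ⟨w, hw, hwl⟩ := exists_infix_blocks hlen
      refine mem_image.2 ⟨w, Fintype.mem_piFinset.2 fun i ↦ mem_filter.2
        ⟨mem_words.2 ⟨(hw i).1, fun x hx ↦ hlA x ((hw i).2.subset hx)⟩, hP (hw i).2 hPl⟩, hwl⟩
    _ ≤ _ := card_image_le.trans_eq (Fintype.card_piFinset_const _ _)

lemma sum_pow_length_le {F : Finset (List α)} {D b u : ℝ} (hb : 0 ≤ b) (hu : 0 ≤ u)
    (hbu : b * u < 1) (hF : ∀ n, (#{l ∈ F | l.length = n} : ℝ) ≤ D * b ^ n) :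
    ∑ l ∈ F, u ^ l.length ≤ D * (1 - b * u)⁻¹ := by
  have hD : 0 ≤ D := by simpa using (Nat.cast_nonneg _).trans (hF 0)
  have hbu0 : 0 ≤ b * u := mul_nonneg hb hu
  calc
    ∑ l ∈ F, u ^ l.length = ∑ n ∈ F.image List.length, #{l ∈ F | l.length = n} * u ^ n := by
      simp only [sum_comp (fun n ↦ u ^ n) List.length, nsmul_eq_mul]
    _ ≤ ∑ n ∈ F.image List.length, D * (b * u) ^ n := by
      refine sum_le_sum fun n _ ↦ ?_
      rw [mul_pow, ← mul_assoc]
      exact mul_le_mul_of_nonneg_right (hF n) (pow_nonneg hu n)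
    _ = D * ∑ n ∈ F.image List.length, (b * u) ^ n := (mul_sum ..).symm
    _ ≤ D * (1 - b * u)⁻¹ := by
      rw [← tsum_geometric_of_lt_one hbu0 hbu]
      gcongr
      exact (summable_geometric_of_lt_one hbu0 hbu).sum_le_tsum _ fun n _ ↦ pow_nonneg hbu0 n

end Words

section Vertices

variable {H K : Type*}

section Monoid

variable [Monoid H] [Monoid K]

/-- The vertices visited by the walk that starts at `g` and multiplies on the right by the letters
of the word, except the last one. Leaving out the endpoint makes `vertices` additive under
concatenation. -/
def vertices (g : H) : List H → List H
  | [] => []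
  | s :: l => g :: vertices (g * s) l

/-- All the vertices visited by the walk that starts at `g` and follows the word, including the
endpoint. -/
def support (g : H) (l : List H) : List H :=
  vertices g l ++ [g * l.prod]

/-- The walk following the word visits distinct vertices, its endpoint being disregarded. -/
def SelfAvoiding (l : List H) : Prop :=
  (vertices 1 l).Nodup

lemma vertices_append (g : H) (l l' : List H) :
    vertices g (l ++ l') = vertices g l ++ vertices (g * l.prod) l' := by
  induction l generalizing g with
  | nil => simp [vertices]
  | cons s l ih => simp [vertices, ih, mul_assoc]

lemma support_eq_vertices_concat (g s : H) (l : List H) :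
    support g l = vertices g (l ++ [s]) := by
  simp [support, vertices_append, vertices]

lemma map_vertices (φ : H →* K) (g : H) (l : List H) :
    (vertices g l).map φ = vertices (φ g) (l.map φ) := by
  induction l generalizing g with
  | nil => rfl
  | cons s l ih => simp [vertices, ih]

lemma vertices_mul (g h : H) (l : List H) :
    vertices (g * h) l = (vertices h l).map (g * ·) := by
  induction l generalizing h with
  | nil => rfl
  | cons s l ih => simp [vertices, mul_assoc, ih]

lemma vertices_eq_map_mul (g : H) (l : List H) :
    vertices g l = (vertices 1 l).map (g * ·) := by
  simpa using vertices_mul g 1 l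

lemma SelfAvoiding.of_map (φ : H →* K) {l : List H} (h : SelfAvoiding (l.map φ)) :
    SelfAvoiding l := by
  rw [SelfAvoiding, ← map_one φ, ← map_vertices] at h
  exact h.of_map

end Monoid

variable [Group H]

lemma nodup_vertices (g : H) {l : List H} : (vertices g l).Nodup ↔ SelfAvoiding l := by
  rw [vertices_eq_map_mul, List.nodup_map_iff (mul_right_injective g), SelfAvoiding]

lemma SelfAvoiding.of_infix {l l' : List H} (h : l' <:+: l) (hl : SelfAvoiding l) :
    SelfAvoiding l' := by
  obtain ⟨l₁, l₂, rfl⟩ := h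
  rw [SelfAvoiding, vertices_append, vertices_append] at hl
  exact (nodup_vertices _).1 hl.of_append_left.of_append_right

open Classical in
/-- The words of length `n` over `S` whose walks visit distinct vertices, the endpoint being
disregarded. -/
noncomputable def saws (S : Finset H) (n : ℕ) : Finset (List H) :=
  {l ∈ words S n | SelfAvoiding l}

open Classical in
/-- Around every vertex `c` it visits, the walk makes at most `k` visits to the translate `c U`
(its endpoint being disregarded). -/
def Sparse (U : Finset H) (k : ℕ) (l : List H) : Prop :=
  ∀ c ∈ vertices 1 l, (vertices 1 l).countP (c⁻¹ * · ∈ U) ≤ k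

open Classical in
/-- The words in `saws S n` that are `k`-sparse. -/
noncomputable def sparseSaws (S U : Finset H) (k n : ℕ) : Finset (List H) :=
  {l ∈ words S n | SelfAvoiding l ∧ Sparse U k l}

lemma Sparse.of_infix {U : Finset H} {k : ℕ} {l l' : List H} (h : l' <:+: l)
    (hl : Sparse U k l) : Sparse U k l' := by
  classical
  obtain ⟨l₁, l₂, rfl⟩ := h
  have hsub : List.Sublist ((vertices 1 l').map (l₁.prod * ·)) (vertices 1 (l₁ ++ l' ++ l₂)) := by
    rw [vertices_append, vertices_append, one_mul, ← vertices_eq_map_mul]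
    exact (List.infix_append ..).sublist
  intro c hc
  calc
    (vertices 1 l').countP (c⁻¹ * · ∈ U)
      = ((vertices 1 l').map (l₁.prod * ·)).countP ((l₁.prod * c)⁻¹ * · ∈ U) := by
        rw [List.countP_map]
        exact List.countP_congr fun v _ ↦ by simp [mul_assoc]
    _ ≤ _ := hsub.countP_le
    _ ≤ k := hl _ (hsub.subset (List.mem_map_of_mem hc))

lemma SelfAvoiding.sparse {l : List H} (hl : SelfAvoiding l) (U : Finset H) :
    Sparse U #U l := by
  classical
  intro c _
  have hnodup : ((vertices 1 l).filter (c⁻¹ * · ∈ U)).Nodup := hl.filter _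
  rw [List.countP_eq_length_filter, ← List.length_map (c⁻¹ * ·),
    ← List.toFinset_card_of_nodup (hnodup.map (mul_right_injective c⁻¹))]
  refine card_le_card fun v hv ↦ ?_
  obtain ⟨w, hw, rfl⟩ := List.mem_map.1 (List.mem_toFinset.1 hv)
  simpa using (List.mem_filter.1 hw).2

open Classical in
/-- The walk visits `c`, and it makes at least `k` visits to the translate `c U` (its endpoint being
disregarded). -/
def Crowded (U : Finset H) (k : ℕ) (l : List H) (c : H) : Prop :=
  c ∈ vertices 1 l ∧ k ≤ (vertices 1 l).countP (c⁻¹ * · ∈ U)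

lemma exists_crowded_of_not_sparse {U : Finset H} {k : ℕ} {l : List H} (hl : ¬ Sparse U k l) :
    ∃ c, Crowded U (k + 1) l c := by
  simpa [Sparse, Crowded, Nat.succ_le_iff] using hl

lemma Crowded.notMem_of_subperm {U : Finset H} {k : ℕ} {l l' vs : List H} {c g : H}
    (hc : Crowded U k l c) (hl' : Sparse U k l')
    (hsub : List.Subperm (vertices g l ++ vs) (vertices 1 l')) :
    ∀ v ∈ vs, (g * c)⁻¹ * v ∉ U := by
  classical
  have hgc : g * c ∈ vertices 1 l' := by
    refine hsub.subset (List.mem_append_left _ ?_)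
    rw [vertices_eq_map_mul]
    exact List.mem_map_of_mem hc.1
  have hcount : k ≤ (vertices g l).countP ((g * c)⁻¹ * · ∈ U) := by
    rw [vertices_eq_map_mul, List.countP_map]
    refine hc.2.trans_eq (List.countP_congr fun v _ ↦ by simp [mul_assoc])
  have htotal := (hsub.countP_le (p := ((g * c)⁻¹ * · ∈ U))).trans (hl' _ hgc)
  rw [List.countP_append] at htotal
  have hvs : vs.countP ((g * c)⁻¹ * · ∈ U) = 0 := by lia
  simpa using hvs

lemma sparseSaws_card (S U : Finset H) (n : ℕ) : sparseSaws S U #U n = saws S n := by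
  classical
  exact filter_congr fun _ _ ↦ and_iff_left_of_imp (·.sparse U)

lemma Sparse.eq_nil {U : Finset H} (hU : 1 ∈ U) {l : List H} (hl : Sparse U 0 l) : l = [] := by
  cases l with
  | nil => rfl
  | cons s l =>
    have := hl 1 (by simp [vertices])
    simp [vertices, hU] at this

lemma card_saws_mul_le (S : Finset H) (q M : ℕ) : #(saws S (q * M)) ≤ #(saws S M) ^ q := by
  classical
  exact card_filter_words_mul_le (fun _ _ h ↦ SelfAvoiding.of_infix h) q M

end Vertices

section CayleyGraph

open SimpleGraph

variable {H : Type*} [Group H]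

/-- The word of increments `u⁻¹ * v` along a walk in a graph whose vertices are group elements. -/
def steps {G : SimpleGraph H} {u v : H} : G.Walk u v → List H
  | .nil => []
  | .cons (v := w) _ p => (u⁻¹ * w) :: steps p

section Steps

variable {G : SimpleGraph H} {u v : H}

lemma mul_prod_steps (p : G.Walk u v) : u * (steps p).prod = v := by
  induction p with
  | nil => simp [steps]
  | cons _ p ih => rw [steps, List.prod_cons, ← mul_assoc, mul_inv_cancel_left, ih]

lemma length_steps (p : G.Walk u v) : (steps p).length = p.length := by
  induction p with
  | nil => rfl
  | cons _ p ih => simp [steps, ih]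

lemma support_steps (p : G.Walk u v) : support u (steps p) = p.support := by
  rw [support, mul_prod_steps]
  induction p with
  | nil => rfl
  | cons _ p ih => simp [steps, vertices, ih]

lemma sigma_ext_steps {v' : H} {p : G.Walk u v} {p' : G.Walk u v'} (h : steps p = steps p') :
    (⟨v, p⟩ : Σ w, G.Walk u w) = ⟨v', p'⟩ := by
  obtain rfl : v = v' := by rw [← mul_prod_steps p, ← mul_prod_steps p', h]
  rw [Walk.ext_support (by rw [← support_steps, ← support_steps, h] : p.support = p'.support)]

lemma mem_support_self (g : H) (l : List H) : g ∈ support g l := by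
  cases l <;> simp [support, vertices]

lemma support_cons (u s : H) (l : List H) : support u (s :: l) = u :: support (u * s) l := by
  simp [support, vertices, mul_assoc]

end Steps

variable {S : Set H}

lemma cayleyGraph_adj (hSinv : ∀ s ∈ S, s⁻¹ ∈ S) {u v : H} :
    (cayleyGraph S).Adj u v ↔ u ≠ v ∧ u⁻¹ * v ∈ S := by
  have : v⁻¹ * u ∈ S → u⁻¹ * v ∈ S := fun h ↦ by simpa using hSinv _ h
  simp only [cayleyGraph, fromRel_adj]
  tauto

lemma mem_of_mem_steps (hSinv : ∀ s ∈ S, s⁻¹ ∈ S) {u v : H} (p : (cayleyGraph S).Walk u v) :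
    ∀ s ∈ steps p, s ∈ S := by
  induction p with
  | nil => simp [steps]
  | cons h p ih => simpa [steps] using ⟨((cayleyGraph_adj hSinv).1 h).2, ih⟩

lemma exists_walk_steps_eq (hSinv : ∀ s ∈ S, s⁻¹ ∈ S) {u : H} {l : List H}
    (hlS : ∀ s ∈ l, s ∈ S) (hl : (support u l).Nodup) :
    ∃ (v : H) (p : (cayleyGraph S).Walk u v), steps p = l := by
  induction l generalizing u with
  | nil => exact ⟨u, .nil, rfl⟩
  | cons s l ih =>
    rw [List.forall_mem_cons] at hlS
    rw [support_cons, List.nodup_cons] at hl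
    have hne : u ≠ u * s := ne_of_mem_of_not_mem (mem_support_self _ l) hl.1 |>.symm
    obtain ⟨v, p, rfl⟩ := ih hlS.2 hl.2
    exact ⟨v, .cons ((cayleyGraph_adj hSinv).2 ⟨hne, by simpa using hlS.1⟩) p, by simp [steps]⟩

lemma connected_cayleyGraph (hSinv : ∀ s ∈ S, s⁻¹ ∈ S) (hgen : Subgroup.closure S = ⊤) :
    (cayleyGraph S).Connected := by
  have step (g s : H) (hs : s ∈ S) : (cayleyGraph S).Reachable g (g * s) := by
    by_cases h : g = g * s
    · rw [← h]
    · exact ((cayleyGraph_adj hSinv).2 ⟨h, by simpa using hs⟩).reachable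
  have hone (g : H) : (cayleyGraph S).Reachable 1 g := by
    refine Subgroup.closure_induction_right (s := S) (p := fun g _ ↦ (cayleyGraph S).Reachable 1 g)
      .rfl (fun g _ s hs h ↦ h.trans (step g s hs))
      (fun g _ s hs h ↦ h.trans (step g s⁻¹ (hSinv s hs))) (hgen ▸ Subgroup.mem_top g)
  exact ⟨fun g h ↦ (hone g).symm.trans (hone h)⟩

variable {S : Finset H}

lemma steps_mem_words (hSinv : ∀ s ∈ S, s⁻¹ ∈ S) {u v : H}
    (p : (cayleyGraph (S : Set H)).Walk u v) : steps p ∈ words S p.length :=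
  mem_words.2 ⟨length_steps p, fun _ h ↦ mem_of_mem_steps (S := (S : Set H)) hSinv p _ h⟩

open Classical in
lemma sawCount_cayleyGraph (hSinv : ∀ s ∈ S, s⁻¹ ∈ S) (n : ℕ) :
    sawCount (cayleyGraph (S : Set H)) 1 n = #{l ∈ words S n | (support 1 l).Nodup} := by
  rw [sawCount, ← Fintype.card_coe, ← Nat.card_eq_fintype_card]
  have hmem (p : Σ w, (cayleyGraph (S : Set H)).Walk 1 w) :
      p.2.IsPath ∧ p.2.length = n ↔
        steps p.2 ∈ ({l ∈ words S n | (support 1 l).Nodup} : Finset (List H)) := by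
    rw [mem_filter, support_steps, ← Walk.isPath_def, and_comm, and_congr_left_iff]
    exact fun _ ↦ ⟨fun h ↦ h ▸ steps_mem_words hSinv p.2,
      fun h ↦ (length_steps p.2).symm.trans (mem_words.1 h).1⟩
  refine Nat.card_eq_of_bijective (fun p ↦ ⟨steps p.1.2, (hmem p.1).1 p.2⟩) ⟨?_, ?_⟩
  · intro p q h
    exact Subtype.ext (sigma_ext_steps (congrArg Subtype.val h))
  · rintro ⟨l, hl⟩
    have hl' := mem_filter.1 hl
    obtain ⟨v, p, rfl⟩ := exists_walk_steps_eq (S := S) hSinv (mem_words.1 hl'.1).2 hl'.2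
    exact ⟨⟨⟨v, p⟩, (hmem _).2 hl⟩, rfl⟩

lemma sawCount_le_card_saws (hSinv : ∀ s ∈ S, s⁻¹ ∈ S) (n : ℕ) :
    sawCount (cayleyGraph (S : Set H)) 1 n ≤ #(saws S n) := by
  classical
  rw [sawCount_cayleyGraph hSinv]
  exact card_le_card (monotone_filter_right _ fun l _ hl ↦ List.Nodup.of_append_left hl)

lemma card_saws_succ_le (hSinv : ∀ s ∈ S, s⁻¹ ∈ S) (n : ℕ) :
    #(saws S (n + 1)) ≤ sawCount (cayleyGraph (S : Set H)) 1 n * #S := by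
  classical
  rw [sawCount_cayleyGraph hSinv, ← card_product]
  refine (card_le_card fun l hl ↦ ?_).trans (card_image_le (f := fun x ↦ x.1 ++ [x.2]))
  obtain ⟨hl, hsa⟩ := mem_filter.1 hl
  obtain ⟨hlen, hlS⟩ := mem_words.1 hl
  obtain ⟨l, s, rfl⟩ : ∃ l' s, l = l' ++ [s] :=
    ⟨_, _, (List.dropLast_append_getLast (List.ne_nil_of_length_eq_add_one hlen)).symm⟩
  simp only [List.forall_mem_append, List.forall_mem_singleton, List.length_append,
    List.length_singleton, Nat.add_right_cancel_iff] at hlS hlen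
  exact mem_image.2 ⟨(l, s), mem_product.2 ⟨mem_filter.2 ⟨mem_words.2 ⟨hlen, hlS.1⟩,
    support_eq_vertices_concat 1 s l ▸ hsa⟩, hlS.2⟩, rfl⟩

lemma one_le_sawCount [Infinite H] (hSinv : ∀ s ∈ S, s⁻¹ ∈ S)
    (hgen : Subgroup.closure (S : Set H) = ⊤) (n : ℕ) :
    1 ≤ sawCount (cayleyGraph (S : Set H)) 1 n := by
  classical
  obtain ⟨g, p, hp, hn⟩ : ∃ (g : H) (p : (cayleyGraph (S : Set H)).Walk 1 g),
      p.IsPath ∧ n ≤ p.length := by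
    by_contra! hshort
    have hconn := connected_cayleyGraph (S := (S : Set H)) hSinv hgen
    have hcover (g : H) : g ∈ ((range n).biUnion (words S)).image List.prod := by
      obtain ⟨p, hp⟩ := (hconn 1 g).exists_isPath
      refine mem_image.2 ⟨steps p, mem_biUnion.2 ⟨p.length, mem_range.2 (hshort g p hp),
        steps_mem_words hSinv p⟩, ?_⟩
      simpa using mul_prod_steps p
    exact Set.infinite_univ (Set.Finite.subset (finite_toSet _) fun g _ ↦ hcover g)
  rw [sawCount_cayleyGraph hSinv, one_le_card]
  have hmem : steps (p.take n) ∈ words S n := by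
    simpa only [Walk.take_length, min_eq_left hn] using steps_mem_words hSinv (p.take n)
  refine ⟨steps (p.take n), mem_filter.2 ⟨hmem, ?_⟩⟩
  rw [support_steps]
  exact (hp.take n).support_nodup

end CayleyGraph

section Growth

open Topology

variable {f g : ℕ → ℝ} {μ b : ℝ}

lemma exists_le_mul_pow_of_tendsto_rpow (hf : ∀ n, 0 ≤ f n)
    (hμ : Tendsto (fun n : ℕ ↦ f n ^ ((1 : ℝ) / n)) atTop (𝓝 μ)) (hμb : μ < b) (hb : 0 < b) :
    ∃ C > 0, ∀ n, f n ≤ C * b ^ n := by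
  have hbig : f =O[atTop] fun n ↦ b ^ n := by
    refine Asymptotics.IsBigO.of_bound 1 ?_
    filter_upwards [hμ.eventually_lt_const hμb, eventually_ne_atTop 0] with n hn hn0
    have : (f n ^ ((1 : ℝ) / n)) ^ n ≤ b ^ n :=
      pow_le_pow_left₀ (Real.rpow_nonneg (hf n) _) hn.le n
    rw [one_div, Real.rpow_inv_natCast_pow (hf n) hn0] at this
    rwa [one_mul, Real.norm_of_nonneg (hf n), Real.norm_of_nonneg (by positivity)]
  obtain ⟨C, hC, h⟩ := Asymptotics.bound_of_isBigO_nat_atTop hbig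
  refine ⟨C, hC, fun n ↦ ?_⟩
  simpa [Real.norm_of_nonneg (hf n), abs_of_pos hb] using h (x := n) (by positivity)

lemma pow_le_of_tendsto_rpow (hf : ∀ n, 0 ≤ f n) (hg : ∀ n, 0 ≤ g n)
    (hμ : Tendsto (fun n : ℕ ↦ f n ^ ((1 : ℝ) / n)) atTop (𝓝 μ))
    (hfg : ∀ q n, f (q * n) ≤ g n ^ q) {n : ℕ} (hn : n ≠ 0) : μ ^ n ≤ g n := by
  have hμ0 : 0 ≤ μ := ge_of_tendsto' hμ fun n ↦ Real.rpow_nonneg (hf n) _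
  have hsub : Tendsto (fun q : ℕ ↦ q * n) atTop atTop := tendsto_id.atTop_mul_const' (by lia)
  have hroot : μ ≤ g n ^ ((1 : ℝ) / n) := by
    refine le_of_tendsto (hμ.comp hsub) ?_
    filter_upwards [eventually_ne_atTop 0] with q hq
    calc
      f (q * n) ^ ((1 : ℝ) / (q * n : ℕ)) ≤ (g n ^ q) ^ ((1 : ℝ) / (q * n : ℕ)) :=
        Real.rpow_le_rpow (hf _) (hfg q n) (by positivity)
      _ = g n ^ ((1 : ℝ) / n) := by
        rw [← Real.rpow_natCast, ← Real.rpow_mul (hg n)]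
        congr 1
        push_cast
        field_simp
  calc
    μ ^ n ≤ (g n ^ ((1 : ℝ) / n)) ^ n := pow_le_pow_left₀ hμ0 hroot n
    _ = g n := by rw [one_div, Real.rpow_inv_natCast_pow (hg n) hn]

variable {H : Type*} [Group H] {S : Finset H}

lemma pow_le_card_saws (hSinv : ∀ s ∈ S, s⁻¹ ∈ S)
    (hμ : Tendsto (fun n : ℕ ↦ (sawCount (cayleyGraph (S : Set H)) 1 n : ℝ) ^ ((1 : ℝ) / n))
      atTop (𝓝 μ)) {n : ℕ} (hn : n ≠ 0) : μ ^ n ≤ #(saws S n) := by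
  refine pow_le_of_tendsto_rpow (g := fun n ↦ (#(saws S n) : ℝ)) (fun _ ↦ Nat.cast_nonneg _)
    (fun _ ↦ Nat.cast_nonneg _) hμ
    (fun q M ↦ ?_) hn
  exact_mod_cast (sawCount_le_card_saws hSinv (q * M)).trans (card_saws_mul_le S q M)

lemma exists_card_saws_le (hSinv : ∀ s ∈ S, s⁻¹ ∈ S)
    (hμ : Tendsto (fun n : ℕ ↦ (sawCount (cayleyGraph (S : Set H)) 1 n : ℝ) ^ ((1 : ℝ) / n))
      atTop (𝓝 μ)) (hμb : μ < b) (hb : 0 < b) :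
    ∃ C : ℝ, ∀ n, (#(saws S n) : ℝ) ≤ C * b ^ n := by
  obtain ⟨C, hC, h⟩ :=
    exists_le_mul_pow_of_tendsto_rpow (fun _ ↦ Nat.cast_nonneg _) hμ hμb hb
  refine ⟨max (#(saws S 0)) (C * #S / b), fun n ↦ ?_⟩
  cases n with
  | zero => simp
  | succ n =>
    calc
      (#(saws S (n + 1)) : ℝ) ≤ sawCount (cayleyGraph (S : Set H)) 1 n * #S := by
        exact_mod_cast card_saws_succ_le hSinv n
      _ ≤ C * b ^ n * #S := by gcongr; exact h n
      _ = C * #S / b * b ^ (n + 1) := by rw [pow_succ]; field_simp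
      _ ≤ _ := by gcongr; exact le_max_right ..

end Growth

section Detour

open SimpleGraph

variable {V W : Type*} {G : SimpleGraph V} {u v w x y z : V}

lemma isPath_append {p : G.Walk u v} {q : G.Walk v w} (hp : p.IsPath) (hq : q.IsPath)
    (h : ∀ t ∈ p.support, t ∈ q.support → t = v) : (p.append q).IsPath := by
  have hq' := hq.support_nodup
  rw [← Walk.cons_tail_support, List.nodup_cons] at hq'
  rw [Walk.isPath_def, Walk.support_append, List.nodup_append]
  refine ⟨hp.support_nodup, hq'.2, ?_⟩
  rintro t ht _ ht' rfl
  obtain rfl := h t ht (List.mem_of_mem_tail ht')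
  exact hq'.1 ht'

lemma exists_isPath_first_hit (A : Set V) {p : G.Walk u v} (hp : p.IsPath) (hv : v ∈ A) :
    ∃ z ∈ A, ∃ p₁ : G.Walk u z, p₁.IsPath ∧ p₁.support ⊆ p.support ∧
      ∀ t ∈ p₁.support, t ∈ A → t = z := by
  induction p with
  | @nil u => exact ⟨u, hv, .nil, by simp, by simp, by simp⟩
  | @cons u _ _ h p ih =>
    rw [Walk.cons_isPath_iff] at hp
    by_cases hu : u ∈ A
    · exact ⟨u, hu, .nil, by simp, by simp, by simp⟩
    · obtain ⟨z, hz, p₁, hp₁, hsub, hA⟩ := ih hp.1 hv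
      refine ⟨z, hz, .cons h p₁, (Walk.cons_isPath_iff ..).2 ⟨hp₁, fun hu' ↦ hp.2 (hsub hu')⟩,
        List.cons_subset_cons _ hsub, ?_⟩
      simpa [hu] using hA

lemma exists_tripod {y' : V} (hxy : G.Reachable x y) (hxy' : G.Reachable x y') :
    ∃ (z : V) (a : G.Walk x z) (b : G.Walk z y) (c : G.Walk z y'),
      (a.append b).IsPath ∧ c.IsPath ∧
        ∀ t ∈ (a.append b).support, t ∈ c.support → t = z := by
  classical
  obtain ⟨p, hp⟩ := hxy.exists_isPath
  obtain ⟨q, hq⟩ := hxy'.symm.exists_isPath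
  obtain ⟨z, hz, c, hc, -, hcp⟩ :=
    exists_isPath_first_hit {t | t ∈ p.support} hq p.start_mem_support
  refine ⟨z, p.takeUntil z hz, p.dropUntil z hz, c.reverse, by rwa [Walk.take_spec], hc.reverse, ?_⟩
  rw [Walk.take_spec]
  exact fun t ht ht' ↦ hcp t (by simpa using ht') ht

variable {π : V → W} {τ : G →g G}

lemma isPath_switch (hτ : Function.Injective τ) (hτfix : ∀ v, τ v ≠ v)
    (hπτ : ∀ v, π (τ v) = π v) {a : G.Walk x z} {b : G.Walk z y} {b₁ : G.Walk z w}
    {c : G.Walk z (τ y)} {c₁ : G.Walk z (τ w)}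
    (ha : a.IsPath) (hc : c.IsPath) (hb₁ : b₁.IsPath) (hc₁ : c₁.IsPath)
    (hbb : b₁.support ⊆ b.support) (hcc : c₁.support ⊆ c.support)
    (hmeet : ∀ t ∈ (a.append b).support, t ∈ c.support → t = z)
    (hmeet₁ : ∀ t ∈ b.support, τ t ∈ c₁.support → t = w)
    (habπ : {t | t ∈ (a.append b).support}.InjOn π)
    (hacπ : {t | t ∈ (a.append c).support}.InjOn π) :
    (a.append (c₁.append ((b₁.map τ).reverse.append (c.map τ)))).IsPath := by
  simp only [Walk.mem_support_append_iff] at hmeet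
  have habτ {s t} (hs : s ∈ a.support) (ht : t ∈ b₁.support) : τ t ≠ s := fun h ↦
    hτfix t (habπ (by simp [h, hs]) (by simp [hbb ht]) (hπτ t))
  have hacτ {s t} (hs : s ∈ (a.append c).support) (ht : t ∈ c.support) : τ t ≠ s := fun h ↦
    hτfix t (hacπ (by simpa [h] using hs) (by simp [ht]) (hπτ t))
  simp only [Walk.mem_support_append_iff] at hacτ
  refine isPath_append ha
    (isPath_append hc₁ (isPath_append (hb₁.map hτ).reverse (hc.map hτ) ?_) ?_) ?_ <;>
    simp only [Walk.mem_support_append_iff, Walk.support_reverse, Walk.support_map,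
      List.mem_reverse, List.mem_map]
  · rintro _ ⟨s, hs, rfl⟩ ⟨t, ht, hst⟩
    obtain rfl := hτ hst
    rw [hmeet t (.inr (hbb hs)) ht]
  · rintro _ hs (⟨t, ht, rfl⟩ | ⟨t, ht, rfl⟩)
    · rw [hmeet₁ t (hbb ht) hs]
    · exact absurd rfl (hacτ (.inr (hcc hs)) ht)
  · rintro s hs (hs' | ⟨t, ht, rfl⟩ | ⟨t, ht, rfl⟩)
    · exact hmeet s (.inl hs) (hcc hs')
    · exact absurd rfl (habτ hs ht)
    · exact absurd rfl (hacτ (.inl hs) ht)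

-- Suppose there is no such path. In a tripod with legs `a` from `x` to `z`, `b` from `z` to `y` and
-- `c` from `z` to `τ y`, follow `a`, then `c` up to its first vertex `τ w` on `τ b`, then `τ b`
-- backwards to `τ z`, then `τ c`: this path visits both `z` and `τ z`.
lemma exists_isPath_not_injOn (hτ : Function.Injective τ)
    (hτfix : ∀ v, τ v ≠ v) (hπτ : ∀ v, π (τ v) = π v)
    (hxy : G.Reachable x y) (hxτy : G.Reachable x (τ y)) :
    ∃ (y' : V) (p : G.Walk x y'), p.IsPath ∧ π y' = π y ∧ ¬ {t | t ∈ p.support}.InjOn π := by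
  classical
  by_contra! hinj
  obtain ⟨z, a, b, c, hab, hc, hmeet⟩ := exists_tripod hxy hxτy
  have ha : a.IsPath := hab.of_append_left
  have hac : (a.append c).IsPath :=
    isPath_append ha hc fun t ht ↦ hmeet t ((Walk.mem_support_append_iff ..).2 (.inl ht))
  obtain ⟨_, ⟨w, hw, rfl⟩, c₁, hc₁, hcc, hmeet₁⟩ :=
    exists_isPath_first_hit (τ '' {t | t ∈ b.support}) hc ⟨y, b.end_mem_support, rfl⟩
  have hswitch := isPath_switch hτ hτfix hπτ ha hc (hab.of_append_right.takeUntil hw) hc₁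
    (b.support_takeUntil_subset_support hw) hcc hmeet
    (fun t ht htc ↦ hτ (hmeet₁ _ htc ⟨t, ht, rfl⟩)) (hinj y _ hab rfl) (hinj _ _ hac (hπτ y))
  refine hτfix z (hinj _ _ hswitch (by rw [hπτ, hπτ]) ?_ (by simp) (hπτ z))
  simpa using .inr (.inr (.inr ⟨z, c.start_mem_support, rfl⟩))

lemma exists_finset_detour (hτ : Function.Injective τ) (hτfix : ∀ v, τ v ≠ v)
    (hπτ : ∀ v, π (τ v) = π v) {o : V} (p : G.Walk o (τ o)) :
    ∃ D : Finset W, π o ∈ D ∧ ∀ x ∈ D, ∀ y ∈ D, ∃ (u v : V) (q : G.Walk u v),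
      π u = x ∧ π v = y ∧ q.IsPath ∧ (∀ t ∈ q.support, π t ∈ D) ∧
        ¬ {t | t ∈ q.support}.InjOn π := by
  classical
  set D : Finset W := (p.support.map π).toFinset
  set C : Set V := {v | π v ∈ D}
  have hpC (t : V) (ht : t ∈ p.support) : t ∈ C := List.mem_toFinset.2 (List.mem_map_of_mem ht)
  let τ' : G.induce C →g G.induce C :=
    { toFun := fun v ↦ ⟨τ v, show π (τ v) ∈ D from (hπτ v).symm ▸ v.2⟩
      map_rel' := fun h ↦ τ.map_adj h }
  have hreach (t : V) (ht : t ∈ p.support) :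
      (G.induce C).Reachable ⟨o, hpC o p.start_mem_support⟩ ⟨t, hpC t ht⟩ :=
    ((p.takeUntil t ht).induce C fun s hs ↦
      hpC s (p.support_takeUntil_subset_support ht hs)).reachable
  refine ⟨D, hpC o p.start_mem_support, fun x hx y hy ↦ ?_⟩
  obtain ⟨u, hu, rfl⟩ := List.mem_map.1 (List.mem_toFinset.1 hx)
  obtain ⟨w, hw, rfl⟩ := List.mem_map.1 (List.mem_toFinset.1 hy)
  obtain ⟨v, q, hq, hv, hinj⟩ := exists_isPath_not_injOn (π := fun v : C ↦ π v) (τ := τ')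
    (fun s t h ↦ Subtype.ext (hτ (congrArg Subtype.val h)))
    (fun t h ↦ hτfix t (congrArg Subtype.val h)) (fun t ↦ hπτ t)
    ((hreach u hu).symm.trans (hreach w hw))
    ((hreach u hu).symm.trans ((hreach _ p.end_mem_support).trans ((hreach w hw).map τ')))
  obtain ⟨q', hq', hsupp⟩ : ∃ q' : G.Walk u v, q'.IsPath ∧ q'.support = q.support.map (↑) :=
    ⟨q.map (Embedding.induce C).toHom, hq.map Subtype.val_injective, Walk.support_map ..⟩
  refine ⟨u, v, q', rfl, hv, hq', ?_, fun h ↦ hinj fun s hs t ht hst ↦ Subtype.ext (h ?_ ?_ hst)⟩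
  · rw [hsupp, List.forall_mem_map]
    exact fun t _ ↦ t.2
  · exact hsupp ▸ List.mem_map_of_mem hs
  · exact hsupp ▸ List.mem_map_of_mem ht

end Detour

section DetourWords

variable {Γ Q : Type*} [Group Γ] [Group Q] {π : Γ →* Q} {S : Finset Γ} {D : Finset Q}

/-- Any two points `x` and `y` of the finite set `D` of vertices of the quotient are joined inside
`D` by the image of a self-avoiding walk of `Γ` that does not remain self-avoiding in the
quotient. -/
def HasDetours (π : Γ →* Q) (S : Finset Γ) (D : Finset Q) : Prop :=
  ∀ x ∈ D, ∀ y ∈ D, ∃ (g : Γ) (l : List Γ), (∀ s ∈ l, s ∈ S) ∧ π g = x ∧ π (g * l.prod) = y ∧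
    (support g l).Nodup ∧ (∀ v ∈ support g l, π v ∈ D) ∧ ¬ ((support g l).map π).Nodup

lemma exists_hasDetours (hSinv : ∀ s ∈ S, s⁻¹ ∈ S) (hgen : Subgroup.closure (S : Set Γ) = ⊤)
    (hπ : ¬ Function.Injective π) : ∃ D : Finset Q, 1 ∈ D ∧ HasDetours π S D := by
  obtain ⟨ν, hν, hν1⟩ : ∃ ν, π ν = 1 ∧ ν ≠ 1 := by
    simpa [injective_iff_map_eq_one] using hπ
  let τ : cayleyGraph (S : Set Γ) →g cayleyGraph (S : Set Γ) :=
    { toFun := (ν * ·)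
      map_rel' := by simp [cayleyGraph_adj (S := (S : Set Γ)) hSinv, mul_assoc] }
  obtain ⟨p⟩ := connected_cayleyGraph (S := (S : Set Γ)) hSinv hgen 1 (τ 1)
  obtain ⟨D, hD1, hD⟩ := exists_finset_detour (π := π) (τ := τ) (mul_right_injective ν)
    (fun v h ↦ hν1 (mul_eq_right.1 h)) (fun v ↦ by simp [τ, hν]) p
  refine ⟨D, by simpa using hD1, fun x hx y hy ↦ ?_⟩
  obtain ⟨u, v, q, hu, hv, hq, hqD, hinj⟩ := hD x hx y hy
  refine ⟨u, steps q, (mem_words.1 (steps_mem_words hSinv q)).2, hu, ?_⟩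
  rw [mul_prod_steps, support_steps, List.nodup_map_iff_inj_on hq.support_nodup]
  exact ⟨hv, hq.support_nodup, hqD, hinj⟩

section Visits

variable {H : Type*} [Monoid H] {p : H → Prop} {g : H} {l : List H}

lemma exists_append_first_visit (h : ∃ v ∈ vertices g l, p v) :
    ∃ l₁ l₂, l = l₁ ++ l₂ ∧ (∀ v ∈ vertices g l₁, ¬ p v) ∧ p (g * l₁.prod) ∧
      ∃ v ∈ vertices (g * l₁.prod) l₂, p v := by
  induction l generalizing g with
  | nil => simp [vertices] at h
  | cons s l ih =>
    by_cases hg : p g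
    · exact ⟨[], s :: l, by simp [vertices, hg]⟩
    · obtain ⟨l₁, l₂, rfl, hl₁, hp, hl₂⟩ := ih (g := g * s) (by simpa [vertices, hg] using h)
      exact ⟨s :: l₁, l₂, by simp, by simpa [vertices, hg] using hl₁,
        by simpa [mul_assoc] using hp, by simpa [mul_assoc] using hl₂⟩

lemma exists_append_last_visit (h : ∃ v ∈ vertices g l, p v) :
    ∃ l₁ s l₂, l = l₁ ++ [s] ++ l₂ ∧ p (g * l₁.prod) ∧
      ∀ v ∈ vertices (g * (l₁ ++ [s]).prod) l₂, ¬ p v := by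
  induction l generalizing g with
  | nil => simp [vertices] at h
  | cons s l ih =>
    by_cases hl : ∃ v ∈ vertices (g * s) l, p v
    · obtain ⟨l₁, t, l₂, rfl, hp, hl₂⟩ := ih hl
      exact ⟨s :: l₁, t, l₂, by simp, by simpa [mul_assoc] using hp,
        by simpa [mul_assoc] using hl₂⟩
    · have hg : p g := by simpa [vertices, hl] using h
      exact ⟨[], s, l, by simp, by simpa using hg, by simpa using hl⟩

end Visits

/-- `m` is a lift of a modification of `l.map π` near `c`: it leads to the same point of the
quotient as `l` and is self-avoiding in `Γ`, its image leaves the vertices of `l.map π` only inside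
`c D`, and this image is not self-avoiding. -/
structure IsDetour (π : Γ →* Q) (D : Finset Q) (c : Q) (l m : List Γ) : Prop where
  map_prod : π m.prod = π l.prod
  selfAvoiding : SelfAvoiding m
  mem_or_mem : ∀ v ∈ vertices 1 m, π v ∈ vertices 1 (l.map π) ∨ c⁻¹ * π v ∈ D
  not_selfAvoiding : ¬ SelfAvoiding (m.map π)

lemma IsDetour.of_append {c : Q} {l₁ l₂ l₃ m : List Γ}
    (hl : SelfAvoiding ((l₁ ++ l₂ ++ l₃).map π)) (hm : SelfAvoiding m)
    (hmπ : ¬ SelfAvoiding (m.map π)) (hprod : π m.prod = π l₂.prod)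
    (h₁ : ∀ v ∈ vertices 1 l₁, c⁻¹ * π v ∉ D)
    (h₃ : ∀ v ∈ vertices (l₁ ++ l₂).prod l₃, c⁻¹ * π v ∉ D)
    (hmD : ∀ v ∈ vertices l₁.prod m, c⁻¹ * π v ∈ D) :
    IsDetour π D c (l₁ ++ l₂ ++ l₃) (l₁ ++ m ++ l₃) := by
  have hstart : π (l₁ ++ m).prod = π (l₁ ++ l₂).prod := by simp [hprod]
  have hmap₃ : (vertices (l₁ ++ m).prod l₃).map π = (vertices (l₁ ++ l₂).prod l₃).map π := by
    rw [map_vertices, map_vertices, hstart]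
  have h₃' {v : Γ} (hv : v ∈ vertices (l₁ ++ m).prod l₃) : c⁻¹ * π v ∉ D := by
    obtain ⟨w, hw, hvw⟩ := List.mem_map.1 (hmap₃ ▸ List.mem_map_of_mem hv)
    exact hvw ▸ h₃ w hw
  have hl' : List.Sublist ((vertices 1 l₁ ++ vertices (l₁ ++ m).prod l₃).map π)
      (vertices 1 ((l₁ ++ l₂ ++ l₃).map π)) := by
    rw [← map_one π, ← map_vertices, List.map_append, hmap₃, ← List.map_append, vertices_append,
      vertices_append, one_mul, one_mul]
    exact ((List.sublist_append_left ..).append (.refl _)).map π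
  have hnodup := List.nodup_append.1 (hl'.nodup hl).of_map
  refine ⟨by simp [hprod], ?_, fun v hv ↦ ?_, fun h ↦ hmπ (h.of_infix ?_)⟩
  · rw [SelfAvoiding, vertices_append, vertices_append, one_mul, one_mul, List.append_assoc,
      List.nodup_append', List.nodup_append']
    refine ⟨hnodup.1, ⟨(nodup_vertices _).2 hm, hnodup.2.1, ?_⟩, ?_⟩
    · exact fun v hv hv' ↦ h₃' hv' (hmD v hv)
    · rw [List.disjoint_append_right]
      exact ⟨fun v hv hv' ↦ h₁ v hv (hmD v hv'), fun v hv hv' ↦ hnodup.2.2 v hv v hv' rfl⟩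
  · simp only [vertices_append, one_mul, List.mem_append] at hv
    rcases hv with (hv | hv) | hv
    · exact .inl (hl'.subset (List.mem_map_of_mem (List.mem_append_left _ hv)))
    · exact .inr (hmD v hv)
    · exact .inl (hl'.subset (List.mem_map_of_mem (List.mem_append_right _ hv)))
  · exact List.IsInfix.map π (List.infix_append ..)

lemma HasDetours.exists_isDetour (hD : HasDetours π S D) (h1D : 1 ∈ D) {l : List Γ}
    (hlS : ∀ s ∈ l, s ∈ S) (hl : SelfAvoiding (l.map π)) {c : Q}
    (hc : c ∈ vertices 1 (l.map π)) : ∃ m, (∀ s ∈ m, s ∈ S) ∧ IsDetour π D c l m := by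
  rw [← map_one π, ← map_vertices] at hc
  obtain ⟨v, hv, rfl⟩ := List.mem_map.1 hc
  obtain ⟨l₁, _, rfl, hl₁, hx, hvisit⟩ := exists_append_first_visit
    (p := fun w ↦ (π v)⁻¹ * π w ∈ D) ⟨v, hv, by simpa using h1D⟩
  obtain ⟨l₂, s, l₃, rfl, hy, hl₃⟩ := exists_append_last_visit hvisit
  obtain ⟨g, P, hPS, hgx, hgy, hnodup, hPD, hrep⟩ := hD _ hx _ hy
  rw [support_eq_vertices_concat g s] at hnodup hPD hrep
  rw [map_vertices, nodup_vertices] at hrep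
  have hprod : π (P ++ [s]).prod = π (l₂ ++ [s]).prod := by
    have : π P.prod = π l₂.prod := by simpa [hgx, mul_assoc] using hgy
    simp [this]
  have hmD : ∀ w ∈ vertices l₁.prod (P ++ [s]), (π v)⁻¹ * π w ∈ D := by
    rw [← inv_mul_cancel_right l₁.prod g, vertices_mul, List.forall_mem_map]
    intro w hw
    simpa [hgx, mul_assoc] using hPD w hw
  have hmS : ∀ t ∈ l₁ ++ (P ++ [s]) ++ l₃, t ∈ S := by
    simp only [List.forall_mem_append] at hlS ⊢
    tauto
  rw [← List.append_assoc] at hl ⊢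
  exact ⟨_, hmS, .of_append hl ((nodup_vertices g).1 hnodup) hrep hprod hl₁
    (by simpa [mul_assoc] using hl₃) hmD⟩

end DetourWords

section Splicing

section Blocks

variable {B X : Type*}

/-- The replacement `md b` of a marked block `(b, true)` and the plain version `pl b` of an unmarked
block `(b, false)`. -/
def block (pl md : B → List X) (x : B × Bool) : List X :=
  bif x.2 then md x.1 else pl x.1

/-- The concatenation of a sequence of blocks after replacement of the marked ones. -/
def splice (pl md : B → List X) (e : List (B × Bool)) : List X :=
  e.flatMap (block pl md)

/-- The blocks of `e`, each with the point from which the walk following the concatenation of the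
words `F x`, started at `g`, traces it. -/
def place {H : Type*} [Monoid H] (F : X → List H) (g : H) : List X → List (H × X)
  | [] => []
  | x :: e => (g, x) :: place F (g * (F x).prod) e

variable {H K : Type*} [Monoid H] [Monoid K]

lemma map_snd_place (F : X → List H) (g : H) (e : List X) : (place F g e).map Prod.snd = e := by
  induction e generalizing g with
  | nil => rfl
  | cons x e ih => simp [place, ih]

lemma vertices_flatMap {F : X → List H} {F' : X → List K} {φ : H →* K} {e : List X}
    (h : ∀ x ∈ e, φ (F x).prod = (F' x).prod) (g : H) :
    vertices (φ g) (e.flatMap F') = (place F g e).flatMap fun p ↦ vertices (φ p.1) (F' p.2) := by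
  induction e generalizing g with
  | nil => rfl
  | cons x e ih =>
    rw [List.forall_mem_cons] at h
    rw [List.flatMap_cons, vertices_append, ← h.1, ← map_mul, ih h.2]
    rfl

end Blocks

variable {B Γ Q : Type*} [Group Γ] [Group Q] {π : Γ →* Q} {D U : Finset Q} {K : ℕ}
  {pl md : B → List Γ} {c : B → Q} {e : List (B × Bool)}

lemma mem_or_mem_of_mem_vertices_block {x : B × Bool}
    (hx : x.2 = true → IsDetour π D (c x.1) (pl x.1) (md x.1)) {g v : Γ}
    (hv : v ∈ vertices g (block pl md x)) :
    π v ∈ vertices (π g) ((pl x.1).map π) ∨ x.2 = true ∧ (π g * c x.1)⁻¹ * π v ∈ D := by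
  obtain ⟨b, _ | _⟩ := x
  · exact .inl (map_vertices π g (pl b) ▸ List.mem_map_of_mem hv)
  · rw [vertices_eq_map_mul] at hv
    obtain ⟨w, hw, rfl⟩ := List.mem_map.1 hv
    refine ((hx rfl).mem_or_mem w hw).imp (fun h ↦ ?_) fun h ↦ ⟨rfl, by simpa [mul_assoc] using h⟩
    rw [vertices_eq_map_mul, map_mul]
    exact List.mem_map_of_mem h

lemma disjoint_vertices_block (hU : ∀ x ∈ D, ∀ y ∈ D, x * y⁻¹ ∈ U) (h1D : 1 ∈ D)
    {l : List Q} (hsa : SelfAvoiding l) (hsp : Sparse U K l) {p q : Γ × (B × Bool)}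
    (hpq : List.Sublist (vertices (π p.1) ((pl p.2.1).map π) ++ vertices (π q.1) ((pl q.2.1).map π))
      (vertices 1 l))
    (hp : p.2.2 = true → IsDetour π D (c p.2.1) (pl p.2.1) (md p.2.1))
    (hpc : p.2.2 = true → Crowded U K ((pl p.2.1).map π) (c p.2.1))
    (hq : q.2.2 = true → IsDetour π D (c q.2.1) (pl q.2.1) (md q.2.1))
    (hqc : q.2.2 = true → Crowded U K ((pl q.2.1).map π) (c q.2.1)) :
    List.Disjoint (vertices p.1 (block pl md p.2)) (vertices q.1 (block pl md q.2)) := by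
  have hDU {x : Q} (hx : x ∈ D) : x ∈ U := by simpa using hU x hx 1 h1D
  have hisop (h : p.2.2 = true) := (hpc h).notMem_of_subperm hsp hpq.subperm
  have hisoq (h : q.2.2 = true) :=
    (hqc h).notMem_of_subperm hsp (List.perm_append_comm.subperm.trans hpq.subperm)
  intro v hvp hvq
  rcases mem_or_mem_of_mem_vertices_block hp hvp with hvp | ⟨hpm, hvp⟩ <;>
    rcases mem_or_mem_of_mem_vertices_block hq hvq with hvq | ⟨hqm, hvq⟩
  · exact (List.disjoint_of_nodup_append (hpq.nodup hsa)) hvp hvq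
  · exact hisoq hqm _ hvp (hDU hvq)
  · exact hisop hpm _ hvq (hDU hvp)
  · refine hisop hpm (π q.1 * c q.2.1) ?_ (by simpa [mul_assoc] using hU _ hvp _ hvq)
    rw [vertices_eq_map_mul]
    exact List.mem_map_of_mem (hqc hqm).1

lemma selfAvoiding_splice (hU : ∀ x ∈ D, ∀ y ∈ D, x * y⁻¹ ∈ U) (h1D : 1 ∈ D)
    (hdet : ∀ x ∈ e, x.2 = true → IsDetour π D (c x.1) (pl x.1) (md x.1))
    (hcr : ∀ x ∈ e, x.2 = true → Crowded U K ((pl x.1).map π) (c x.1))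
    (hsa : SelfAvoiding (e.flatMap fun x ↦ (pl x.1).map π))
    (hsp : Sparse U K (e.flatMap fun x ↦ (pl x.1).map π)) :
    SelfAvoiding (splice pl md e) := by
  have hprod : ∀ x ∈ e, π (block pl md x).prod = ((pl x.1).map π).prod := by
    rintro ⟨b, _ | _⟩ hx
    · exact map_list_prod π _
    · exact ((hdet _ hx rfl).map_prod).trans (map_list_prod π _)
  have hmem {p : Γ × (B × Bool)} (hp : p ∈ place (block pl md) 1 e) : p.2 ∈ e :=
    map_snd_place (block pl md) 1 e ▸ List.mem_map_of_mem hp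
  rw [SelfAvoiding, splice, ← MonoidHom.id_apply Γ 1, vertices_flatMap fun _ _ ↦ rfl,
    List.nodup_flatMap]
  constructor
  · rintro ⟨g, b, _ | _⟩ hp
    · refine (nodup_vertices _).2 (.of_map π (hsa.of_infix (List.infix_of_mem_flatten ?_)))
      exact List.mem_map_of_mem (f := fun x : B × Bool ↦ (pl x.1).map π) (hmem hp)
    · exact (nodup_vertices _).2 (hdet _ (hmem hp) rfl).selfAvoiding
  · rw [List.pairwise_iff_forall_sublist]
    intro p q hpq
    have hp : p.2 ∈ e := hmem (hpq.subset (by simp))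
    have hq : q.2 ∈ e := hmem (hpq.subset (by simp))
    refine disjoint_vertices_block hU h1D hsa hsp ?_ (hdet _ hp) (hcr _ hp) (hdet _ hq) (hcr _ hq)
    rw [← map_one π, vertices_flatMap hprod]
    simpa using hpq.flatMap fun p ↦ vertices (π p.1) ((pl p.2.1).map π)

end Splicing

section Decoding

variable {B X : Type*}

/-- The length of the shortest prefix of `l` with the property `P` (`0` if there is none). -/
noncomputable def firstHit (P : List X → Prop) (l : List X) : ℕ :=
  sInf {t | P (l.take t)}

/-- Data that, together with the word `splice pl md e`, determine `e`: for each marked block, in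
order, the block itself and the delay, counted from the beginning of that block, with which the word
read since the end of the previous marked block first acquires the property `P`. The argument `acc`
is the part of this word that precedes `e`. -/
noncomputable def code (P : List X → Prop) (pl md : B → List X) :
    List X → List (B × Bool) → List (ℕ × B)
  | _, [] => []
  | acc, (b, false) :: e => code P pl md (acc ++ pl b) e
  | acc, (b, true) :: e => (firstHit P (acc ++ md b) - acc.length, b) :: code P pl md [] e

variable {P : List X → Prop} {pl md : B → List X} {acc : List X}

lemma length_code (acc : List X) (e : List (B × Bool)) :
    (code P pl md acc e).length = e.countP (·.2) := by
  fun_induction code P pl md acc e <;> simp_all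

lemma firstHit_le {l : List X} (hl : P l) : firstHit P l ≤ l.length :=
  Nat.sInf_le (by simpa using hl)

lemma take_firstHit {l : List X} (hl : P l) : P (l.take (firstHit P l)) :=
  Nat.sInf_mem (s := {t | P (l.take t)}) ⟨l.length, by simpa using hl⟩

lemma firstHit_append {l : List X} (hl : P l) (l' : List X) :
    firstHit P (l ++ l') = firstHit P l := by
  have htake {t : ℕ} (ht : t ≤ firstHit P l) : (l ++ l').take t = l.take t :=
    List.take_append_of_le_length (ht.trans (firstHit_le hl))
  have hmem : P ((l ++ l').take (firstHit P l)) := htake le_rfl ▸ take_firstHit hl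
  have hle : firstHit P (l ++ l') ≤ firstHit P l := Nat.sInf_le hmem
  have hmem' : P ((l ++ l').take (firstHit P (l ++ l'))) :=
    Nat.sInf_mem (s := {t | P ((l ++ l').take t)}) ⟨_, hmem⟩
  rw [htake hle] at hmem'
  exact hle.antisymm (Nat.sInf_le hmem')

section Monotone

variable (hP : ∀ ⦃l l' : List X⦄, l' <:+: l → P l' → P l)

include hP

lemma length_lt_firstHit {l l' : List X} (hl : ¬ P l) (h : P (l ++ l')) :
    l.length < firstHit P (l ++ l') := by
  by_contra! hle
  have := take_firstHit h
  rw [List.take_append_of_le_length hle] at this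
  exact hl (hP ⟨[], _, List.take_append_drop ..⟩ this)

lemma fst_le_of_mem_code {L : ℕ} {e : List (B × Bool)}
    (hmd : ∀ x ∈ e, x.2 = true → P (md x.1) ∧ (md x.1).length ≤ L) :
    ∀ x ∈ code P pl md acc e, x.1 ≤ L := by
  fun_induction code P pl md acc e with
  | case1 => simp
  | case2 _ b e ih => exact ih (List.forall_mem_cons.1 hmd).2
  | case3 acc b e ih =>
    obtain ⟨hb, he⟩ := List.forall_mem_cons.1 hmd
    refine List.forall_mem_cons.2 ⟨?_, ih he⟩
    have := firstHit_le (hP (List.suffix_append acc (md b)).isInfix (hb rfl).1)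
    have := (hb rfl).2
    simp only [List.length_append] at *
    lia

lemma length_add_eq_firstHit {b : B} (hacc : ¬ P acc) (hb : P (md b)) (l : List X) :
    acc.length + (firstHit P (acc ++ md b) - acc.length) = firstHit P (acc ++ (md b ++ l)) := by
  have h := hP (List.suffix_append acc (md b)).isInfix hb
  rw [← List.append_assoc, firstHit_append h, Nat.add_sub_cancel' (length_lt_firstHit hP hacc h).le]

lemma length_add_le_firstHit {e : List (B × Bool)} {o : ℕ} {b : B} {cs : List (ℕ × B)}
    (hmd : ∀ x ∈ e, x.2 = true → P (md x.1)) (hpl : ¬ P (acc ++ e.flatMap fun x ↦ pl x.1))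
    (h : code P pl md acc e = (o, b) :: cs) :
    acc.length + o ≤ firstHit P (acc ++ splice pl md e) := by
  fun_induction code P pl md acc e with
  | case1 => simp at h
  | case2 acc b e ih =>
    have := ih (List.forall_mem_cons.1 hmd).2 (by simpa using hpl) h
    simp only [List.length_append, List.append_assoc] at this
    exact (by lia : acc.length + o ≤ acc.length + (pl b).length + o).trans this
  | case3 acc b' e ih =>
    obtain ⟨⟨rfl, -⟩, -⟩ := by simpa using h
    have hacc : ¬ P acc := fun h ↦ hpl (hP (List.prefix_append ..).isInfix h)
    exact (length_add_eq_firstHit hP hacc (hmd (b', true) (by simp) rfl) _).le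

variable {M : ℕ} (hM : 0 < M) (hlen : ∀ b, (pl b).length = M)

include hM hlen

-- With the same delay, the first hit comes later on the left: the plain block `b` precedes the
-- marked block from which the delay is counted.
lemma code_ne_of_splice_eq {e e' : List (B × Bool)} {b b' : B}
    (hmd : ∀ x ∈ (b, false) :: e, x.2 = true → P (md x.1)) (hmd' : P (md b'))
    (hpl : ¬ P (acc ++ ((b, false) :: e).flatMap fun x ↦ pl x.1))
    (h : splice pl md ((b, false) :: e) = splice pl md ((b', true) :: e')) :
    code P pl md acc ((b, false) :: e) ≠ code P pl md acc ((b', true) :: e') := by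
  intro hc
  have hacc : ¬ P acc := fun h ↦ hpl (hP (List.prefix_append ..).isInfix h)
  have hle := length_add_le_firstHit hP (List.forall_mem_cons.1 hmd).2 (by simpa using hpl) hc
  have heq : _ = firstHit P (acc ++ splice pl md ((b', true) :: e')) :=
    length_add_eq_firstHit hP hacc hmd' _
  have hsplice : splice pl md ((b, false) :: e) = pl b ++ splice pl md e := rfl
  rw [List.append_assoc, ← hsplice, h, ← heq, List.length_append, hlen] at hle
  lia

lemma eq_of_splice_eq_of_code_eq (hinj : Function.Injective pl) {e e' : List (B × Bool)}
    (hmd : ∀ x ∈ e, x.2 = true → P (md x.1)) (hmd' : ∀ x ∈ e', x.2 = true → P (md x.1))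
    (hpl : ¬ P (acc ++ e.flatMap fun x ↦ pl x.1)) (hpl' : ¬ P (acc ++ e'.flatMap fun x ↦ pl x.1))
    (hee' : e.length = e'.length) (hs : splice pl md e = splice pl md e')
    (hc : code P pl md acc e = code P pl md acc e') : e = e' := by
  induction e generalizing acc e' with
  | nil => exact (List.length_eq_zero_iff.1 hee'.symm).symm
  | cons x e ih =>
    obtain _ | ⟨x', e'⟩ := e'
    · simp at hee'
    have hmde := (List.forall_mem_cons.1 hmd).2
    have hmde' := (List.forall_mem_cons.1 hmd').2
    replace hee' : e.length = e'.length := by simpa using hee'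
    obtain ⟨b, _ | _⟩ := x <;> obtain ⟨b', _ | _⟩ := x'
    · obtain ⟨hbb', htail⟩ := List.append_inj hs ((hlen b).trans (hlen b').symm)
      obtain rfl := hinj hbb'
      rw [ih hmde hmde' (by simpa using hpl) (by simpa using hpl') hee' htail hc]
    · exact absurd hc (code_ne_of_splice_eq hP hM hlen hmd (hmd' _ List.mem_cons_self rfl) hpl hs)
    · exact absurd hc.symm
        (code_ne_of_splice_eq hP hM hlen hmd' (hmd _ List.mem_cons_self rfl) hpl' hs.symm)
    · have hinfix (b : B) (e : List (B × Bool)) : ([] ++ e.flatMap fun x ↦ pl x.1) <:+: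
          acc ++ ((b, true) :: e).flatMap fun x ↦ pl x.1 :=
        ⟨acc ++ pl b, [], by simp⟩
      obtain ⟨⟨-, rfl⟩, htail⟩ : (_ ∧ b = b') ∧ code P pl md [] e = code P pl md [] e' := by
        simpa [code] using hc
      rw [ih hmde hmde' (fun h ↦ hpl (hP (hinfix b e) h)) (fun h ↦ hpl' (hP (hinfix b e') h)) hee'
        (List.append_cancel_left hs) htail]

end Monotone

end Decoding

section Counting

variable {B X : Type*} {q L M : ℕ}

lemma length_splice_le {pl md : B → List X} (hlen : ∀ b, (pl b).length = M)
    {e : List (B × Bool)} (hmd : ∀ x ∈ e, x.2 = true → (md x.1).length ≤ L) :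
    (splice pl md e).length ≤ e.length * M + L * e.countP (·.2) := by
  induction e with
  | nil => simp [splice]
  | cons x e ih =>
    obtain ⟨hx, he⟩ := List.forall_mem_cons.1 hmd
    have := ih he
    obtain ⟨b, _ | _⟩ := x
    · simp_all [splice, block]
      lia
    · have := hx rfl
      simp_all [splice, block]
      lia

lemma sum_pow_length_le_two [Fintype B] {F : Finset (List (ℕ × B))} {u : ℝ} (hu : 0 ≤ u)
    (hLu : (L + 1) * Fintype.card B * u ≤ 1 / 2) (hF : ∀ cs ∈ F, ∀ x ∈ cs, x.1 ≤ L) :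
    ∑ cs ∈ F, u ^ cs.length ≤ 2 := by
  have hcard (n : ℕ) :
      (#{cs ∈ F | cs.length = n} : ℝ) ≤ 1 * ((L + 1) * Fintype.card B) ^ n := by
    have hle : #{cs ∈ F | cs.length = n} ≤ #(words (range (L + 1) ×ˢ (univ : Finset B)) n) := by
      refine card_le_card fun cs hcs ↦ ?_
      obtain ⟨hcsF, hcsn⟩ := mem_filter.1 hcs
      exact mem_words.2 ⟨hcsn, fun x hx ↦ by simpa using Nat.lt_succ_of_le (hF cs hcsF x hx)⟩
    rw [card_words, card_product, card_range, card_univ] at hle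
    exact_mod_cast hle.trans_eq (one_mul _).symm
  refine (sum_pow_length_le (by positivity) hu (by linarith) hcard).trans ?_
  rw [one_mul]
  exact inv_le_of_inv_le₀ two_pos (by linarith)

lemma pow_mul_sum_pow_countP_le [Fintype B] [DecidableEq X] {P : List X → Prop}
    (hP : ∀ ⦃l l' : List X⦄, l' <:+: l → P l' → P l) {pl md : B → List X} (hM : 0 < M)
    (hlen : ∀ b, (pl b).length = M) (hinj : Function.Injective pl)
    {E : Finset (List (B × Bool))} (hE : ∀ e ∈ E, e.length = q)
    (hmd : ∀ e ∈ E, ∀ x ∈ e, x.2 = true → P (md x.1) ∧ (md x.1).length ≤ L)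
    (hpl : ∀ e ∈ E, ¬ P (e.flatMap fun x ↦ pl x.1)) {z u : ℝ} (hz : 0 ≤ z) (hz1 : z ≤ 1)
    (hu : 0 ≤ u) (hLu : (L + 1) * Fintype.card B * u ≤ 1 / 2) :
    z ^ (q * M) * ∑ e ∈ E, (z ^ L * u) ^ e.countP (·.2) ≤
      (∑ l ∈ E.image (splice pl md), z ^ l.length) * 2 := by
  classical
  have hcode : ∀ cs ∈ E.image (code P pl md []), ∀ x ∈ cs, x.1 ≤ L :=
    forall_mem_image.2 fun e he ↦ fst_le_of_mem_code hP (hmd e he)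
  have hterm : ∀ e ∈ E, z ^ (q * M) * (z ^ L * u) ^ e.countP (·.2) ≤
      z ^ (splice pl md e).length * u ^ (code P pl md [] e).length := by
    intro e he
    rw [length_code, mul_pow, ← pow_mul, ← mul_assoc, ← pow_add, ← hE e he]
    have := length_splice_le hlen fun x hx hx2 ↦ (hmd e he x hx hx2).2
    exact mul_le_mul_of_nonneg_right (pow_le_pow_of_le_one hz hz1 this) (pow_nonneg hu _)
  have hdecode : Set.InjOn (fun e ↦ (splice pl md e, code P pl md [] e)) E := by
    intro e he e' he' hee'
    obtain ⟨hs, hc⟩ := Prod.mk.inj hee'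
    exact eq_of_splice_eq_of_code_eq hP hM hlen hinj (fun x hx h ↦ (hmd e he x hx h).1)
      (fun x hx h ↦ (hmd e' he' x hx h).1) (hpl e he) (hpl e' he')
      ((hE e he).trans (hE e' he').symm) hs hc
  calc
    _ ≤ ∑ e ∈ E, z ^ (splice pl md e).length * u ^ (code P pl md [] e).length := by
      rw [mul_sum]
      exact sum_le_sum hterm
    _ = ∑ x ∈ E.image fun e ↦ (splice pl md e, code P pl md [] e),
          z ^ x.1.length * u ^ x.2.length := by rw [sum_image hdecode]
    _ ≤ ∑ x ∈ E.image (splice pl md) ×ˢ E.image (code P pl md []),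
          z ^ x.1.length * u ^ x.2.length := by
      refine sum_le_sum_of_subset_of_nonneg (image_subset_iff.2 fun e he ↦ ?_)
        fun _ _ _ ↦ by positivity
      exact mem_product.2 ⟨mem_image_of_mem _ he, mem_image_of_mem _ he⟩
    _ = (∑ l ∈ E.image (splice pl md), z ^ l.length) *
          ∑ cs ∈ E.image (code P pl md []), u ^ cs.length := by rw [sum_mul_sum, sum_product]
    _ ≤ _ := mul_le_mul_of_nonneg_left (sum_pow_length_le_two hu hLu hcode)
      (sum_nonneg fun _ _ ↦ by positivity)

section Markings

variable {good : B → Prop}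

/-- The ways of marking some of the good letters of the word `w`. -/
noncomputable def markings (good : B → Prop) (w : Fin q → B) : Finset (List (B × Bool)) := by
  classical
  exact ({i | good (w i)} : Finset (Fin q)).powerset.image
    fun T ↦ List.ofFn fun i ↦ (w i, decide (i ∈ T))

lemma map_fst_of_mem_markings {w : Fin q → B} {e : List (B × Bool)}
    (he : e ∈ markings good w) : e.map Prod.fst = List.ofFn w := by
  classical
  obtain ⟨T, -, rfl⟩ := mem_image.1 he
  exact List.map_ofFn ..

lemma good_of_mem_markings {w : Fin q → B} {e : List (B × Bool)} (he : e ∈ markings good w)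
    {x : B × Bool} (hx : x ∈ e) (hx2 : x.2 = true) : good x.1 := by
  classical
  obtain ⟨T, hT, rfl⟩ := mem_image.1 he
  obtain ⟨i, rfl⟩ := List.mem_ofFn.1 hx
  exact (mem_filter.1 (mem_powerset.1 hT (of_decide_eq_true hx2))).2

lemma flatMap_of_mem_markings {w : Fin q → B} {e : List (B × Bool)} (he : e ∈ markings good w)
    (F : B → List X) : e.flatMap (fun x ↦ F x.1) = (List.ofFn fun i ↦ F (w i)).flatten := by
  rw [← List.flatMap_map Prod.fst F, map_fst_of_mem_markings he, List.flatMap_def, List.map_ofFn]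
  rfl

variable [DecidablePred good]

lemma sum_markings (w : Fin q → B) (v : ℝ) :
    ∑ e ∈ markings good w, v ^ e.countP (·.2) = (1 + v) ^ #{i | good (w i)} := by
  classical
  have hinj : Function.Injective fun T : Finset (Fin q) ↦
      List.ofFn fun i ↦ (w i, decide (i ∈ T)) := by
    intro T T' h
    ext i
    simpa using congrFun (List.ofFn_injective h) i
  have hcount (T : Finset (Fin q)) :
      (List.ofFn fun i ↦ (w i, decide (i ∈ T))).countP (·.2) = #T := by
    rw [List.ofFn_eq_map, List.countP_map, List.countP_eq_length_filter,
      ← List.toFinset_card_of_nodup ((List.nodup_finRange q).filter _)]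
    congr 1
    ext i
    simp
  rw [markings, sum_image hinj.injOn, add_comm, ← sum_pow_mul_eq_add_pow]
  simp only [hcount, one_pow, mul_one]
  congr!

lemma sum_biUnion_markings [DecidableEq B] (W : Finset (Fin q → B)) (v : ℝ) :
    ∑ e ∈ W.biUnion (markings good), v ^ e.countP (·.2) =
      ∑ w ∈ W, (1 + v) ^ #{i | good (w i)} := by
  simp_rw [← sum_markings]
  refine sum_biUnion fun w _ w' _ hww' ↦ disjoint_left.2 fun e he he' ↦ hww' ?_
  exact List.ofFn_injective
    ((map_fst_of_mem_markings he).symm.trans (map_fst_of_mem_markings he'))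

lemma sum_pow_card_filter [Fintype B] (s : ℝ) :
    ∑ w : Fin q → B, s ^ #{i | good (w i)} = (#{b | ¬ good b} + s * #{b | good b}) ^ q := by
  have hprod (w : Fin q → B) : s ^ #{i | good (w i)} = ∏ i, if good (w i) then s else 1 := by
    simp [prod_ite]
  simp_rw [hprod, ← Fintype.sum_pow (fun b ↦ if good b then s else 1) q, sum_ite]
  simp [add_comm, mul_comm]

lemma one_le_add_inv_pow {t : ℝ} (ht : 0 < t) (r : ℕ) : 1 ≤ t + (t ^ r)⁻¹ := by
  rcases le_total 1 t with h | h
  · exact le_add_of_le_of_nonneg h (by positivity)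
  · exact le_add_of_nonneg_of_le ht.le (one_le_inv₀ (by positivity) |>.2 (pow_le_one₀ ht.le h))

-- The first term bounds the number of words with many good letters, the second that of the others:
-- for `t = lam ^ g / κ ^ q`, where `g` is the number of good letters, `1 ≤ t + t⁻¹ ^ r`.
lemma card_le_sum_pow_add [Fintype B] (W : Finset (Fin q → B)) {lam κ : ℝ} (hlam : 0 < lam)
    (hκ : 0 < κ) (r : ℕ) :
    (#W : ℝ) ≤ (κ ^ q)⁻¹ * ∑ w ∈ W, lam ^ #{i | good (w i)} +
      (κ ^ r * (#{b | ¬ good b} + (lam ^ r)⁻¹ * #{b | good b})) ^ q := by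
  have hone (g : ℕ) : 1 ≤ (κ ^ q)⁻¹ * lam ^ g + (κ ^ r) ^ q * ((lam ^ r)⁻¹) ^ g := by
    refine (one_le_add_inv_pow (t := (κ ^ q)⁻¹ * lam ^ g) (by positivity) r).trans_eq ?_
    rw [mul_pow, mul_inv, inv_pow, inv_inv, inv_pow, ← pow_mul, ← pow_mul, ← pow_mul, ← pow_mul,
      mul_comm q r, mul_comm g r]
  rw [mul_pow, ← sum_pow_card_filter, mul_sum, mul_sum]
  calc
    (#W : ℝ) = ∑ _ ∈ W, (1 : ℝ) := by simp
    _ ≤ _ := sum_le_sum fun _ _ ↦ hone _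
    _ ≤ _ := by
      rw [sum_add_distrib]
      gcongr
      exact subset_univ W

end Markings

end Counting

section DetourBlocks

variable {Γ Q : Type*} [Group Γ] [Group Q] {π : Γ →* Q} {S : Finset Γ} {S' D U : Finset Q}
  {k M q L : ℕ}

open Classical in
lemma card_sparseSaws_mul_le_card_filter (S U : Finset Q) (k q M : ℕ) :
    #(sparseSaws S U k (q * M)) ≤
      #{w : Fin q → sparseSaws S U k M |
        (List.ofFn fun i ↦ (w i).1).flatten ∈ sparseSaws S U k (q * M)} := by
  refine card_le_card_of_surjOn (fun w ↦ (List.ofFn fun i ↦ (w i).1).flatten) fun l hl ↦ ?_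
  obtain ⟨hlS, hsa, hsp⟩ := mem_filter.1 (mem_coe.1 hl)
  obtain ⟨hlen, hlS⟩ := mem_words.1 hlS
  obtain ⟨w, hw, rfl⟩ := exists_infix_blocks hlen
  exact ⟨fun i ↦ ⟨w i, mem_filter.2 ⟨mem_words.2 ⟨(hw i).1, fun x hx ↦ hlS x ((hw i).2.subset hx)⟩,
    hsa.of_infix (hw i).2, hsp.of_infix (hw i).2⟩⟩, by simpa using hl, rfl⟩

open Classical in
lemma card_filter_sparse_le {S U : Finset Q} {k j M : ℕ} :
    #{b : sparseSaws S U j M | ¬ ¬ Sparse U k b.1} ≤ #(sparseSaws S U k M) := by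
  refine card_le_card_of_injOn Subtype.val (fun b hb ↦ ?_) Subtype.val_injective.injOn
  obtain ⟨hbS, hsa, -⟩ := mem_filter.1 b.2
  exact mem_filter.2 ⟨hbS, hsa, not_not.1 (mem_filter.1 (mem_coe.1 hb)).2⟩

/-- A lift `plain b` of each word `b` of `sparseSaws S' U (k + 1) M` and, if `b` is not `k`-sparse,
a detour `detour b` of this lift around a point `center b` that the walk `b` crowds. -/
structure DetourBlocks (π : Γ →* Q) (S : Finset Γ) (S' D U : Finset Q) (k M : ℕ) where
  plain : sparseSaws S' U (k + 1) M → List Γ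
  detour : sparseSaws S' U (k + 1) M → List Γ
  center : sparseSaws S' U (k + 1) M → Q
  map_plain : ∀ b, (plain b).map π = b
  mem_of_mem_plain : ∀ b, ∀ s ∈ plain b, s ∈ S
  mem_of_mem_detour : ∀ b : sparseSaws S' U (k + 1) M, ¬ Sparse U k b.1 → ∀ s ∈ detour b, s ∈ S
  crowded : ∀ b : sparseSaws S' U (k + 1) M, ¬ Sparse U k b.1 → Crowded U (k + 1) b (center b)
  isDetour : ∀ b : sparseSaws S' U (k + 1) M, ¬ Sparse U k b.1 →
    IsDetour π D (center b) (plain b) (detour b)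

lemma HasDetours.nonempty_detourBlocks (hD : HasDetours π S D) (h1D : 1 ∈ D)
    (hS' : (S' : Set Q) ⊆ π '' S) (U : Finset Q) (k M : ℕ) :
    Nonempty (DetourBlocks π S S' D U k M) := by
  classical
  have hlift (b : sparseSaws S' U (k + 1) M) : ∃ l : List Γ, l.map π = b ∧ ∀ s ∈ l, s ∈ S := by
    have hb : ∀ x ∈ b.1, ∃ s ∈ S, π s = x := fun x hx ↦
      hS' ((mem_words.1 (mem_filter.1 b.2).1).2 x hx)
    choose! f hb using hb
    refine ⟨b.1.map f, ?_, List.forall_mem_map.2 fun x hx ↦ (hb x hx).1⟩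
    rw [List.map_map]
    exact (List.map_congr_left fun x hx ↦ (hb x hx).2).trans b.1.map_id
  choose pl hpl hplS using hlift
  have hdetour (b : sparseSaws S' U (k + 1) M) : ∃ c m, ¬ Sparse U k b.1 →
      Crowded U (k + 1) b.1 c ∧ (∀ s ∈ m, s ∈ S) ∧ IsDetour π D c (pl b) m := by
    by_cases hb : Sparse U k b.1
    · exact ⟨1, [], fun h ↦ absurd hb h⟩
    · obtain ⟨c, hc⟩ := exists_crowded_of_not_sparse hb
      obtain ⟨m, hmS, hm⟩ := hD.exists_isDetour h1D (hplS b)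
        (hpl b ▸ (mem_filter.1 b.2).2.1) (hpl b ▸ hc.1)
      exact ⟨c, m, fun _ ↦ ⟨hc, hmS, hm⟩⟩
  choose c m hcm using hdetour
  exact ⟨⟨pl, m, c, hpl, hplS, fun b hb ↦ (hcm b hb).2.1, fun b hb ↦ (hcm b hb).1,
    fun b hb ↦ (hcm b hb).2.2⟩⟩

namespace DetourBlocks

variable (X : DetourBlocks π S S' D U k M)

lemma plain_injective : Function.Injective X.plain := fun b b' h ↦
  Subtype.ext (by rw [← X.map_plain, ← X.map_plain, h])

lemma length_plain (b : sparseSaws S' U (k + 1) M) : (X.plain b).length = M := by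
  classical
  rw [← List.length_map π, X.map_plain]
  exact (mem_words.1 (mem_filter.1 b.2).1).1

lemma splice_mem_saws (hU : ∀ x ∈ D, ∀ y ∈ D, x * y⁻¹ ∈ U) (h1D : 1 ∈ D) {n : ℕ}
    {e : List (sparseSaws S' U (k + 1) M × Bool)} (hgood : ∀ x ∈ e, x.2 = true → ¬ Sparse U k x.1.1)
    (he : e.flatMap (fun x ↦ x.1.1) ∈ sparseSaws S' U (k + 1) n) :
    splice X.plain X.detour e ∈ saws S (splice X.plain X.detour e).length := by
  classical
  obtain ⟨-, hsa, hsp⟩ := mem_filter.1 he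
  refine mem_filter.2 ⟨mem_words.2 ⟨rfl, fun s hs ↦ ?_⟩,
    selfAvoiding_splice (c := X.center) (K := k + 1) hU h1D
      (fun x hx h ↦ X.isDetour _ (hgood x hx h)) (fun x hx h ↦ ?_) ?_ ?_⟩
  · obtain ⟨⟨b, _ | _⟩, hb, hs⟩ := List.mem_flatMap.1 hs
    · exact X.mem_of_mem_plain b s hs
    · exact X.mem_of_mem_detour b (hgood _ hb rfl) s hs
  · simpa only [X.map_plain] using X.crowded _ (hgood x hx h)
  · simpa only [X.map_plain] using hsa
  · simpa only [X.map_plain] using hsp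

open Classical in
lemma pow_mul_sum_pow_card_le (hU : ∀ x ∈ D, ∀ y ∈ D, x * y⁻¹ ∈ U) (h1D : 1 ∈ D) (hM : 0 < M)
    (hL : ∀ b, (X.detour b).length ≤ L) {C b z u : ℝ} (hb : 0 ≤ b)
    (hC : ∀ n, (#(saws S n) : ℝ) ≤ C * b ^ n) (hz : 0 ≤ z) (hz1 : z ≤ 1) (hbz : b * z < 1)
    (hu : 0 ≤ u) (hLu : (L + 1) * #(sparseSaws S' U (k + 1) M) * u ≤ 1 / 2)
    {W : Finset (Fin q → sparseSaws S' U (k + 1) M)}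
    (hW : ∀ w ∈ W, (List.ofFn fun i ↦ (w i).1).flatten ∈ sparseSaws S' U (k + 1) (q * M)) :
    z ^ (q * M) * ∑ w ∈ W, (1 + z ^ L * u) ^ #{i | ¬ Sparse U k (w i).1} ≤
      C * (1 - b * z)⁻¹ * 2 := by
  have hflat : ∀ e ∈ W.biUnion (markings fun b ↦ ¬ Sparse U k b.1),
      (∀ x ∈ e, x.2 = true → ¬ Sparse U k x.1.1) ∧ e.length = q ∧
        e.flatMap (fun x ↦ x.1.1) ∈ sparseSaws S' U (k + 1) (q * M) := by
    intro e he
    obtain ⟨w, hw, he⟩ := mem_biUnion.1 he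
    exact ⟨fun x ↦ good_of_mem_markings he,
      by simpa using congrArg List.length (map_fst_of_mem_markings he),
      flatMap_of_mem_markings he Subtype.val ▸ hW w hw⟩
  rw [← sum_biUnion_markings (good := fun b : sparseSaws S' U (k + 1) M ↦ ¬ Sparse U k b.1)]
  refine (pow_mul_sum_pow_countP_le (P := fun l ↦ ¬ SelfAvoiding (l.map π))
    (fun _ _ h hl hl' ↦ hl (hl'.of_infix (h.map π))) hM X.length_plain X.plain_injective
    (fun e he ↦ (hflat e he).2.1)
    (fun e he x hx hx2 ↦ ⟨(X.isDetour _ ((hflat e he).1 x hx hx2)).not_selfAvoiding, hL _⟩)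
    (fun e he ↦ ?_) hz hz1 hu (by simpa using hLu)).trans
    (mul_le_mul_of_nonneg_right (sum_pow_length_le hb hz hbz fun n ↦ ?_) two_pos.le)
  · simpa only [not_not, List.map_flatMap, X.map_plain] using (mem_filter.1 (hflat e he).2.2).2.1
  · refine (Nat.cast_le.2 (card_le_card fun l hl ↦ ?_)).trans (hC n)
    obtain ⟨hlE, rfl⟩ := mem_filter.1 hl
    obtain ⟨e, he, rfl⟩ := mem_image.1 hlE
    exact X.splice_mem_saws hU h1D (hflat e he).1 (hflat e he).2.2

lemma card_sparseSaws_mul_le (X : DetourBlocks π S S' D U k M)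
    (hU : ∀ x ∈ D, ∀ y ∈ D, x * y⁻¹ ∈ U) (h1D : 1 ∈ D) (hM : 0 < M)
    (hL : ∀ b, (X.detour b).length ≤ L) {C b z₀ z u κ : ℝ} (hb : 0 ≤ b)
    (hC : ∀ n, (#(saws S n) : ℝ) ≤ C * b ^ n) (hz₀ : 0 < z₀) (hz₀z : z₀ ≤ z) (hz1 : z ≤ 1)
    (hbz : b * z < 1) (hu : 0 ≤ u) (hLu : (L + 1) * #(sparseSaws S' U (k + 1) M) * u ≤ 1 / 2)
    (hκ : 0 < κ) (r q : ℕ) :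
    (#(sparseSaws S' U (k + 1) (q * M)) : ℝ) ≤
      C * (1 - b * z)⁻¹ * 2 * ((κ * z ^ M)⁻¹) ^ q +
        (κ ^ r * (#(sparseSaws S' U k M) +
          ((1 + z₀ ^ L * u) ^ r)⁻¹ * #(sparseSaws S' U (k + 1) M))) ^ q := by
  classical
  have hz : 0 < z := hz₀.trans_le hz₀z
  let W : Finset (Fin q → sparseSaws S' U (k + 1) M) :=
    {w | (List.ofFn fun i ↦ (w i).1).flatten ∈ sparseSaws S' U (k + 1) (q * M)}
  have hsum : ∑ w ∈ W, (1 + z₀ ^ L * u) ^ #{i | ¬ Sparse U k (w i).1} ≤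
      (z ^ (q * M))⁻¹ * (C * (1 - b * z)⁻¹ * 2) := by
    rw [le_inv_mul_iff₀ (by positivity)]
    refine le_trans ?_ (X.pow_mul_sum_pow_card_le (W := W) hU h1D hM hL hb hC hz.le hz1 hbz hu hLu
      fun w hw ↦ (mem_filter.1 hw).2)
    gcongr
  calc
    (#(sparseSaws S' U (k + 1) (q * M)) : ℝ) ≤ #W :=
      Nat.cast_le.2 (card_sparseSaws_mul_le_card_filter S' U (k + 1) q M)
    _ ≤ _ :=
      card_le_sum_pow_add (good := fun b : sparseSaws S' U (k + 1) M ↦ ¬ Sparse U k b.1) W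
        (show 0 < 1 + z₀ ^ L * u by positivity) hκ r
    _ ≤ (κ ^ q)⁻¹ * ((z ^ (q * M))⁻¹ * (C * (1 - b * z)⁻¹ * 2)) +
        (κ ^ r * (#(sparseSaws S' U k M) +
          ((1 + z₀ ^ L * u) ^ r)⁻¹ * #(sparseSaws S' U (k + 1) M))) ^ q := by
      gcongr
      · exact card_filter_sparse_le
      · exact (card_filter_le _ _).trans_eq (Fintype.card_coe _)
    _ = _ := by rw [inv_pow, mul_pow κ (z ^ M), mul_inv, ← pow_mul, mul_comm M]; ring

lemma exists_card_sparseSaws_mul_le (X : DetourBlocks π S S' D U k M)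
    (hU : ∀ x ∈ D, ∀ y ∈ D, x * y⁻¹ ∈ U) (h1D : 1 ∈ D) (hM : 0 < M) {z₀ : ℝ} (hz₀ : 0 < z₀) :
    ∃ lam > (1 : ℝ), ∀ {C b z κ : ℝ}, 0 ≤ b → (∀ n, (#(saws S n) : ℝ) ≤ C * b ^ n) →
      z₀ ≤ z → z ≤ 1 → b * z < 1 → 0 < κ → ∀ r q : ℕ,
      (#(sparseSaws S' U (k + 1) (q * M)) : ℝ) ≤
        C * (1 - b * z)⁻¹ * 2 * ((κ * z ^ M)⁻¹) ^ q +
          (κ ^ r * (#(sparseSaws S' U k M) +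
            (lam ^ r)⁻¹ * #(sparseSaws S' U (k + 1) M))) ^ q := by
  obtain ⟨L, hL⟩ : ∃ L, ∀ b, (X.detour b).length ≤ L :=
    ⟨univ.sup fun b ↦ (X.detour b).length,
      fun b ↦ le_sup (f := fun b ↦ (X.detour b).length) (mem_univ b)⟩
  obtain ⟨u, hu, hLu⟩ : ∃ u > (0 : ℝ), (L + 1) * #(sparseSaws S' U (k + 1) M) * u ≤ 1 / 2 :=
    ⟨(2 * ((L + 1) * #(sparseSaws S' U (k + 1) M) + 1))⁻¹, by positivity, by
      field_simp; linarith⟩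
  exact ⟨1 + z₀ ^ L * u, lt_add_of_pos_right _ (by positivity),
    fun hb hC hz₀z hz1 hbz hκ r q ↦
      X.card_sparseSaws_mul_le hU h1D hM hL hb hC hz₀ hz₀z hz1 hbz hu.le hLu hκ r q⟩

end DetourBlocks

end DetourBlocks

section Conclusion

open Topology

lemma eventually_mul_pow_add_pow_lt_pow {α θ β : ℝ} (hα : 0 ≤ α) (hαβ : α < β) (hθ : 0 ≤ θ)
    (hθβ : θ < β) (A : ℝ) : ∀ᶠ q : ℕ in atTop, A * α ^ q + θ ^ q < β ^ q := by
  have hβ : 0 < β := hα.trans_lt hαβ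
  have hlim : Tendsto (fun q : ℕ ↦ A * (α / β) ^ q + (θ / β) ^ q) atTop (𝓝 (A * 0 + 0)) :=
    ((tendsto_pow_atTop_nhds_zero_of_lt_one (by positivity) ((div_lt_one hβ).2 hαβ)).const_mul
      A).add (tendsto_pow_atTop_nhds_zero_of_lt_one (by positivity) ((div_lt_one hβ).2 hθβ))
  filter_upwards [hlim.eventually_lt_const (by simp : A * 0 + 0 < (1 : ℝ))] with q hq
  rw [div_pow, div_pow, mul_div_assoc', ← add_div, div_lt_one (by positivity)] at hq
  exact hq

lemma exists_pow_mul_add_lt {x y lam β : ℝ} (hlam : 1 < lam) (hx : x < β) :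
    ∃ (r : ℕ) (κ : ℝ), 1 < κ ∧ κ ^ r * (x + (lam ^ r)⁻¹ * y) < β := by
  have hr : Tendsto (fun r : ℕ ↦ x + (lam ^ r)⁻¹ * y) atTop (𝓝 (x + 0 * y)) :=
    ((tendsto_pow_atTop_atTop_of_one_lt hlam).inv_tendsto_atTop.mul_const y).const_add x
  obtain ⟨r, hr⟩ := (hr.eventually_lt_const (by simpa using hx)).exists
  have hκ : ContinuousAt (fun κ : ℝ ↦ κ ^ r * (x + (lam ^ r)⁻¹ * y)) 1 := by fun_prop
  obtain ⟨κ, hκβ, hκ1⟩ := (((hκ.eventually_lt_const (by simpa using hr)).filter_mono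
    nhdsWithin_le_nhds).and (self_mem_nhdsWithin (s := Set.Ioi 1))).exists
  exact ⟨r, κ, hκ1, hκβ⟩

lemma exists_inv_mul_pow_lt {m κ z₀ : ℝ} (hm : 0 < m) (hκ : 1 < κ) (hz₀ : z₀ < m⁻¹) (M : ℕ) :
    ∃ z, z₀ ≤ z ∧ z < m⁻¹ ∧ (κ * z ^ M)⁻¹ < m ^ M := by
  have hcont : ContinuousAt (fun z : ℝ ↦ (κ * z ^ M)⁻¹) m⁻¹ :=
    ContinuousAt.inv₀ (by fun_prop) (by positivity)
  have hlt : (κ * m⁻¹ ^ M)⁻¹ < m ^ M := by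
    rw [mul_inv, inv_pow, inv_inv]
    exact mul_lt_of_lt_one_left (by positivity) (inv_lt_one_of_one_lt₀ hκ)
  obtain ⟨z, ⟨hzM, hz₀z⟩, hzm⟩ := (((hcont.eventually_lt_const hlt).and
    (eventually_ge_nhds hz₀)).filter_mono nhdsWithin_le_nhds |>.and
    (self_mem_nhdsWithin (s := Set.Iio m⁻¹))).exists
  exact ⟨z, hz₀z, hzm, hzM⟩

variable {Γ Q : Type*} [Group Γ] [Group Q] {π : Γ →* Q} {S : Finset Γ} {S' D U : Finset Q}
  {k M : ℕ} {m : ℝ}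

lemma HasDetours.exists_card_sparseSaws_succ_lt (hD : HasDetours π S D) (h1D : 1 ∈ D)
    (hS' : (S' : Set Q) ⊆ π '' S) (hU : ∀ x ∈ D, ∀ y ∈ D, x * y⁻¹ ∈ U) (hm : 1 ≤ m)
    (hS : ∀ b, m < b → ∃ C : ℝ, ∀ n, (#(saws S n) : ℝ) ≤ C * b ^ n) (hM : M ≠ 0)
    (hk : (#(sparseSaws S' U k M) : ℝ) < m ^ M) :
    ∃ n ≠ 0, (#(sparseSaws S' U (k + 1) n) : ℝ) < m ^ n := by
  have hm0 : 0 < m := one_pos.trans_le hm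
  obtain ⟨X⟩ := hD.nonempty_detourBlocks h1D hS' U k M
  obtain ⟨lam, hlam, hcard⟩ := X.exists_card_sparseSaws_mul_le hU h1D (by lia)
    (z₀ := m⁻¹ / 2) (by positivity)
  obtain ⟨r, κ, hκ, hθ⟩ :=
    exists_pow_mul_add_lt (y := #(sparseSaws S' U (k + 1) M)) hlam hk
  obtain ⟨z, hz₀, hzm, hz⟩ := exists_inv_mul_pow_lt hm0 hκ (half_lt_self (inv_pos.2 hm0)) M
  have hz0 : 0 < z := (by positivity : 0 < m⁻¹ / 2).trans_le hz₀
  obtain ⟨b, hmb, hbz⟩ := exists_between ((lt_inv_comm₀ hz0 hm0).1 hzm)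
  obtain ⟨C, hC⟩ := hS b hmb
  obtain ⟨q, hq, hq0⟩ := ((eventually_mul_pow_add_pow_lt_pow (by positivity) hz (by positivity) hθ
    (C * (1 - b * z)⁻¹ * 2)).and (eventually_ne_atTop 0)).exists
  refine ⟨q * M, mul_ne_zero hq0 hM, ?_⟩
  rw [mul_comm q, pow_mul, mul_comm M]
  exact (hcard (hm0.trans hmb).le hC hz₀ (hzm.le.trans (inv_le_one_of_one_le₀ hm))
    (by rwa [← lt_div_iff₀ hz0, one_div]) (by positivity) r q).trans_lt hq

lemma HasDetours.exists_card_saws_lt (hD : HasDetours π S D) (h1D : 1 ∈ D)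
    (hS' : (S' : Set Q) ⊆ π '' S) (hm : 1 ≤ m)
    (hS : ∀ b, m < b → ∃ C : ℝ, ∀ n, (#(saws S n) : ℝ) ≤ C * b ^ n) :
    ∃ n ≠ 0, (#(saws S' n) : ℝ) < m ^ n := by
  classical
  let U : Finset Q := (D ×ˢ D).image fun p ↦ p.1 * p.2⁻¹
  have hU : ∀ x ∈ D, ∀ y ∈ D, x * y⁻¹ ∈ U := fun x hx y hy ↦
    mem_image_of_mem (fun p : Q × Q ↦ p.1 * p.2⁻¹) (mk_mem_product hx hy)
  have hsparse (k : ℕ) : ∃ n ≠ 0, (#(sparseSaws S' U k n) : ℝ) < m ^ n := by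
    induction k with
    | zero =>
      have hempty : sparseSaws S' U 0 1 = ∅ := by
        refine eq_empty_of_forall_notMem fun l hl ↦ ?_
        obtain ⟨hl1, -, hl⟩ := mem_filter.1 hl
        have := (mem_words.1 hl1).1
        simp [hl.eq_nil (by simpa using hU 1 h1D 1 h1D)] at this
      exact ⟨1, one_ne_zero, by simpa [hempty] using one_pos.trans_le hm⟩
    | succ k ih =>
      obtain ⟨M, hM, hk⟩ := ih
      exact hD.exists_card_sparseSaws_succ_lt h1D hS' hU hm hS hM hk
  simpa only [sparseSaws_card] using hsparse #U

lemma one_le_of_tendsto_sawCount [Infinite Γ] (hgen : Subgroup.closure (S : Set Γ) = ⊤)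
    (hSinv : ∀ s ∈ S, s⁻¹ ∈ S) {μ : ℝ}
    (hμ : Tendsto (fun n : ℕ ↦ (sawCount (cayleyGraph (S : Set Γ)) 1 n : ℝ) ^ ((1 : ℝ) / n))
      atTop (𝓝 μ)) : 1 ≤ μ :=
  ge_of_tendsto' hμ fun n ↦
    Real.one_le_rpow (by exact_mod_cast one_le_sawCount hSinv hgen n) (by positivity)

end Conclusion

end CayleyWalk

theorem cayley_add_relator_strict_decrease_general {Γ Q : Type*} [Group Γ] [Infinite Γ] [Group Q]
    (π : Γ →* Q) (hπ : ¬ Function.Injective π) (S : Finset Γ)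
    (hgen : Subgroup.closure (S : Set Γ) = ⊤)
    (hSinv : ∀ s ∈ S, s⁻¹ ∈ S) (μ μ' : ℝ)
    (hμ : Tendsto (fun n : ℕ ↦ (sawCount (cayleyGraph (S : Set Γ)) 1 n : ℝ) ^ ((1 : ℝ) / n))
      atTop (nhds μ))
    (hμ' : Tendsto
      (fun n : ℕ ↦ (sawCount (cayleyGraph (π '' (S : Set Γ))) 1 n : ℝ) ^ ((1 : ℝ) / n))
      atTop (nhds μ')) :
    μ' < μ := by
  classical
  by_contra! hle
  have hm : 1 ≤ μ' := (CayleyWalk.one_le_of_tendsto_sawCount hgen hSinv hμ).trans hle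
  obtain ⟨D, h1D, hD⟩ := CayleyWalk.exists_hasDetours hSinv hgen hπ
  obtain ⟨n, hn, hlt⟩ := hD.exists_card_saws_lt (S' := S.image π) h1D (by simp) hm
    fun b hb ↦ CayleyWalk.exists_card_saws_le hSinv hμ (hle.trans_lt hb)
      (one_pos.trans_le (hm.trans hb.le))
  have hSinv' : ∀ s ∈ S.image π, s⁻¹ ∈ S.image π := Finset.forall_mem_image.2 fun s hs ↦
    map_inv π s ▸ Finset.mem_image_of_mem π (hSinv s hs)
  rw [← Finset.coe_image] at hμ'
  exact hlt.not_ge (CayleyWalk.pow_le_card_saws hSinv' hμ' hn)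

/-- Adding a further non-trivial relator `ρ` strictly decreases the connective constant of
the Cayley graph: here `N` is the normal closure of `ρ`, the quotient `Γ/N` is assumed
infinite with no generator mapped to the identity, and `μ', μ` are the connective constants
of the Cayley graphs of `Γ/N` and `Γ`. -/
theorem cayley_add_relator_strict_decrease {Γ : Type*} [Group Γ] [Infinite Γ]
    (S : Finset Γ)
    (hgen : Subgroup.closure (S : Set Γ) = ⊤)
    (hSinv : ∀ s ∈ S, s⁻¹ ∈ S)
    (h1S : (1 : Γ) ∉ S)
    (ρ : Γ) (hρ : ρ ≠ 1)
    (hQinf : Infinite (Γ ⧸ Subgroup.normalClosure ({ρ} : Set Γ)))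
    (hSN : ∀ s ∈ S, s ∉ Subgroup.normalClosure ({ρ} : Set Γ))
    (μ μ' : ℝ)
    (hμ : Tendsto (fun n : ℕ => (sawCount (cayleyGraph (S : Set Γ)) 1 n : ℝ) ^ ((1 : ℝ) / n))
      atTop (nhds μ))
    (hμ' : Tendsto (fun n : ℕ =>
        (sawCount (cayleyGraph
          ((QuotientGroup.mk '' (S : Set Γ)) : Set (Γ ⧸ Subgroup.normalClosure ({ρ} : Set Γ))))
          1 n : ℝ) ^ ((1 : ℝ) / n))
      atTop (nhds μ')) :
    μ' < μ := by
  refine cayley_add_relator_strict_decrease_general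
    (QuotientGroup.mk' (Subgroup.normalClosure {ρ})) (fun hinj ↦ hρ (hinj ?_)) S hgen hSinv
    μ μ' hμ hμ'
  rw [map_one]
  exact (QuotientGroup.eq_one_iff ρ).2 (Subgroup.subset_normalClosure rfl)
end

section
/- Let Γ be an infinite group generated by a finite set S with S = S⁻¹ and 1 ∉ S, and let G = G(Γ,S) be its Cayley graph. Let w ∈ Γ with w ≠ 1 and w ∉ S, and set S' = S ∪ {w, w⁻¹}, with Ḡ = G(Γ, S') the Cayley graph of Γ with the enlarged generating set. If σ_n(1)^{1/n} → μ as n → ∞ (counting SAWs in G from the identity) and σ̄_n(1)^{1/n} → μ̄ as n → ∞ (counting SAWs in Ḡ from the identity), then μ < μ̄. That is, declaring a non-trivial non-generator element to be a generator strictly increases the connective constant of the Cayley graph. -/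
open Filter

/-!
Walks are words in the generators, and a self-avoiding walk over `S` is cut into blocks of length
`m`. Let `w` be a new letter. Inside a block one can try to insert `w` at a vertex `v`. This
translates the rest of the walk, but keeps it self-avoiding unless, off `v`, the vertex `v * w` is
joined to the vertex before `v`, or the vertex `v * w⁻¹` to the one after `v`; in that case a
bounded detour whose first step is `w` or `w⁻¹` leads from `v` back to the walk, and can replace the
piece of the walk that it cuts off.

A detour in one block must not run into other blocks. To ensure this, choose `k` such that walks
visiting fewer than `k` vertices of every ball of a fixed radius are exponentially rare, while those
visiting at most `k` are not. Then a typical walk of the latter kind has many blocks that visit `k`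
vertices of some ball on their own, and no other block comes near the centre of such a ball. These
blocks can be edited independently of each other, and each edit adds at most `D` letters.

Each edit leaves a new letter behind, which makes it possible to recover where the edits took place.
Give every edit a weight `y`, small enough that the ways to read a word as a sequence of kept and
edited blocks have total weight at most `1`. Then the generating function of the walks over the
enlarged set at `1 / μ`, cut off at length `O(q)`, is at least a constant times
`(1 + y / μ ^ D) ^ q`, so that their connective constant exceeds `μ`.
-/

namespace CayleyWord

open scoped Classical Pointwise

section Trace

variable {Γ : Type*} [Group Γ]

/-- The vertices visited by the walk in a Cayley graph that starts at `g` and reads the word `l`,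
multiplying on the right by one letter at a time. -/
def trace (g : Γ) (l : List Γ) : List Γ :=
  l.scanl (· * ·) g

@[simp]
lemma trace_nil (g : Γ) : trace g [] = [g] := by
  simp [trace]

@[simp]
lemma trace_cons (g s : Γ) (l : List Γ) : trace g (s :: l) = g :: trace (g * s) l := by
  simp [trace]

lemma trace_concat (g s : Γ) (l : List Γ) :
    trace g (l ++ [s]) = trace g l ++ [g * l.prod * s] := by
  induction l generalizing g with
  | nil => simp
  | cons a l ih => simp [ih, mul_assoc]

lemma start_mem_trace (g : Γ) (l : List Γ) : g ∈ trace g l := by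
  cases l <;> simp

lemma trace_mul (h g : Γ) (l : List Γ) : trace (h * g) l = (trace g l).map (h * ·) := by
  induction l generalizing g with
  | nil => simp
  | cons s l ih => simp [← ih, mul_assoc]

lemma mem_trace_mul {h g z : Γ} {l : List Γ} : z ∈ trace (h * g) l ↔ h⁻¹ * z ∈ trace g l := by
  rw [trace_mul, List.mem_map]
  exact ⟨by rintro ⟨x, hx, rfl⟩; simpa using hx, fun hx => ⟨_, hx, by simp⟩⟩

lemma mem_trace_iff_one {g z : Γ} {l : List Γ} : z ∈ trace g l ↔ g⁻¹ * z ∈ trace 1 l := by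
  rw [← mem_trace_mul, mul_one]

lemma mem_trace {g z : Γ} {l : List Γ} :
    z ∈ trace g l ↔ ∃ l₁ l₂, l = l₁ ++ l₂ ∧ z = g * l₁.prod := by
  induction l generalizing g with
  | nil => simp [eq_comm]
  | cons s l ih =>
    simp only [trace_cons, List.mem_cons, ih, List.cons_eq_append_iff]
    constructor
    · rintro (rfl | ⟨l₁, l₂, rfl, rfl⟩)
      · exact ⟨[], s :: l, .inl ⟨rfl, rfl⟩, by simp⟩
      · exact ⟨s :: l₁, l₂, .inr ⟨l₁, rfl, rfl⟩, by simp [mul_assoc]⟩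
    · rintro ⟨_, l₂, ⟨rfl, rfl⟩ | ⟨l₁, rfl, rfl⟩, rfl⟩
      · exact .inl (by simp)
      · exact .inr ⟨l₁, l₂, rfl, by simp [mul_assoc]⟩

lemma end_mem_trace (g : Γ) (l : List Γ) : g * l.prod ∈ trace g l :=
  mem_trace.2 ⟨l, [], by simp, rfl⟩

lemma mem_trace_append {g z : Γ} {l m : List Γ} :
    z ∈ trace g (l ++ m) ↔ z ∈ trace g l ∨ z ∈ trace (g * l.prod) m := by
  induction l generalizing g with
  | nil =>
    have hstart : z = g → z ∈ trace g m := by rintro rfl; exact start_mem_trace z m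
    simpa using hstart
  | cons s l ih => simp [ih, or_assoc, mul_assoc]

lemma nodup_trace_iff_one {g : Γ} {l : List Γ} : (trace g l).Nodup ↔ (trace 1 l).Nodup := by
  rw [← mul_one g, trace_mul]
  exact List.nodup_map_iff (mul_right_injective g)

lemma nodup_trace_append {g : Γ} {l m : List Γ} :
    (trace g (l ++ m)).Nodup ↔ (trace g l).Nodup ∧ (trace (g * l.prod) m).Nodup ∧
      ∀ z ∈ trace g l, z ∈ trace (g * l.prod) m → z = g * l.prod := by
  induction l generalizing g with
  | nil => simp
  | cons s l ih =>
    simp only [List.cons_append, trace_cons, List.nodup_cons, ih, mem_trace_append, List.prod_cons,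
      List.mem_cons, forall_eq_or_imp, ← mul_assoc, not_or]
    constructor
    · rintro ⟨⟨hl, hm⟩, hlnodup, hmnodup, hmeet⟩
      exact ⟨⟨hl, hlnodup⟩, hmnodup, fun h => absurd h hm, hmeet⟩
    · rintro ⟨⟨hl, hlnodup⟩, hmnodup, hstart, hmeet⟩
      refine ⟨⟨hl, fun hm => hl ?_⟩, hlnodup, hmnodup, hmeet⟩
      simpa only [← hstart hm] using end_mem_trace (g * s) l

/-- A word is self-avoiding if the walk reading it in the Cayley graph never revisits a vertex. -/
def IsSelfAvoiding (l : List Γ) : Prop :=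
  (trace 1 l).Nodup

lemma isSelfAvoiding_append {l m : List Γ} :
    IsSelfAvoiding (l ++ m) ↔ IsSelfAvoiding l ∧ IsSelfAvoiding m ∧
      ∀ z ∈ trace 1 l, z ∈ trace l.prod m → z = l.prod := by
  rw [IsSelfAvoiding, nodup_trace_append, one_mul, nodup_trace_iff_one (g := l.prod)]
  rfl

lemma isSelfAvoiding_cons {a : Γ} {l : List Γ} :
    IsSelfAvoiding (a :: l) ↔ (1 : Γ) ∉ trace a l ∧ (trace a l).Nodup := by
  simp [IsSelfAvoiding]

lemma IsSelfAvoiding.of_isInfix {l u : List Γ} (hul : u <:+: l) (hl : IsSelfAvoiding l) :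
    IsSelfAvoiding u := by
  obtain ⟨X, Y, rfl⟩ := hul
  exact (isSelfAvoiding_append.1 (isSelfAvoiding_append.1 hl).1).2.1

lemma IsSelfAvoiding.eq_nil_of_prod_eq_one {l : List Γ} (hl : IsSelfAvoiding l)
    (hprod : l.prod = 1) : l = [] := by
  cases l with
  | nil => rfl
  | cons a l =>
    refine absurd ?_ (isSelfAvoiding_cons.1 hl).1
    simpa [← hprod] using end_mem_trace a l

lemma IsSelfAvoiding.replace {X K M Y : List Γ} (h : IsSelfAvoiding (X ++ (K ++ Y)))
    (hM : IsSelfAvoiding M) (hprod : M.prod = K.prod)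
    (hmeet : ∀ z ∈ trace 1 M, X.prod * z ∈ trace 1 (X ++ (K ++ Y)) → z ∈ trace 1 K) :
    IsSelfAvoiding (X ++ (M ++ Y)) := by
  rw [isSelfAvoiding_append, isSelfAvoiding_append] at h ⊢
  obtain ⟨hX, ⟨-, hY, hKY⟩, hXK⟩ := h
  refine ⟨hX, ⟨hM, hY, fun z hzM hzY => ?_⟩, fun z hzX hz => ?_⟩
  · rw [hprod] at hzY ⊢
    refine hKY z (hmeet z hzM ?_) hzY
    rw [mem_trace_append, mem_trace_append, one_mul, mem_trace_mul (h := X.prod)]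
    exact .inr (.inr (by simpa using hzY))
  · refine hXK z hzX ?_
    rw [mem_trace_append] at hz ⊢
    refine hz.imp (fun hzM => ?_) (fun hzY => hprod ▸ hzY)
    rw [mem_trace_iff_one] at hzM ⊢
    exact hmeet _ hzM (by rw [mul_inv_cancel_left, mem_trace_append]; exact .inl hzX)

lemma exists_shorter_of_not_nodup {g : Γ} {l : List Γ} (hl : ¬ (trace g l).Nodup) :
    ∃ l' : List Γ, l'.length < l.length ∧ l'.prod = l.prod ∧ l' ⊆ l ∧ trace g l' ⊆ trace g l := by
  induction l generalizing g with
  | nil => simp at hl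
  | cons s l ih =>
    rw [trace_cons, List.nodup_cons, not_and_or, not_not] at hl
    rcases hl with hreturn | hl
    · obtain ⟨l₁, l₂, rfl, hg⟩ := mem_trace.1 hreturn
      have hloop : s * l₁.prod = 1 := by simpa [mul_assoc] using hg
      refine ⟨l₂, by simp, by simp [← mul_assoc, hloop], by simp, fun z hz => ?_⟩
      rw [trace_cons, List.mem_cons, mem_trace_append, ← hg]
      exact .inr (.inr hz)
    · obtain ⟨l', hlen, hprod, hsub, htrace⟩ := ih hl
      exact ⟨s :: l', by simpa using hlen, by simp [hprod], List.cons_subset_cons s hsub,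
        by simpa using List.subset_cons_of_subset g htrace⟩

/-- The formal inverse of a word, which reads its walk backwards. -/
def inverse (l : List Γ) : List Γ :=
  (l.map (·⁻¹)).reverse

@[simp]
lemma inverse_concat (l : List Γ) (s : Γ) : inverse (l ++ [s]) = s⁻¹ :: inverse l := by
  simp [inverse]

@[simp]
lemma prod_inverse (l : List Γ) : (inverse l).prod = l.prod⁻¹ := by
  rw [inverse, List.prod_inv_reverse]

@[simp]
lemma length_inverse (l : List Γ) : (inverse l).length = l.length := by
  simp [inverse]

lemma mem_inverse {l : List Γ} {x : Γ} : x ∈ inverse l ↔ x⁻¹ ∈ l := by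
  simp [inverse, inv_eq_iff_eq_inv]

lemma trace_inverse (g : Γ) (l : List Γ) :
    trace (g * l.prod) (inverse l) = (trace g l).reverse := by
  induction l using List.reverseRecOn with
  | nil => simp [inverse]
  | append_singleton l s ih => simp [trace_concat, ← ih, mul_assoc]

lemma mem_trace_inverse {l : List Γ} {z : Γ} :
    z ∈ trace 1 (inverse l) ↔ l.prod * z ∈ trace 1 l := by
  rw [← List.mem_reverse (as := trace 1 l), ← trace_inverse, mem_trace_iff_one (g := 1 * l.prod)]
  simp

lemma IsSelfAvoiding.inverse {l : List Γ} (hl : IsSelfAvoiding l) :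
    IsSelfAvoiding (inverse l) := by
  rw [IsSelfAvoiding, ← nodup_trace_iff_one (g := 1 * l.prod), trace_inverse]
  exact List.nodup_reverse.2 hl

end Trace

section Edits

variable {Γ : Type*} [Group Γ]

/-- `a` and `b` are joined by a path with steps in `T` that avoids the identity. -/
def ConnectedOffOne (T : Set Γ) (a b : Γ) : Prop :=
  ∃ l : List Γ, (∀ x ∈ l, x ∈ T) ∧ (1 : Γ) ∉ trace a l ∧ a * l.prod = b

lemma ConnectedOffOne.symm {T : Set Γ} (hT : ∀ s ∈ T, s⁻¹ ∈ T) {a b : Γ}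
    (h : ConnectedOffOne T a b) : ConnectedOffOne T b a := by
  obtain ⟨l, hlT, hl1, rfl⟩ := h
  refine ⟨inverse l, fun x hx => inv_inv x ▸ hT _ (hlT _ (mem_inverse.1 hx)), ?_, by simp⟩
  rwa [trace_inverse, List.mem_reverse]

lemma ConnectedOffOne.trans {T : Set Γ} {a b c : Γ} (hab : ConnectedOffOne T a b)
    (hbc : ConnectedOffOne T b c) : ConnectedOffOne T a c := by
  obtain ⟨l, hlT, hl1, rfl⟩ := hab
  obtain ⟨m, hmT, hm1, rfl⟩ := hbc
  refine ⟨l ++ m, List.forall_mem_append.2 ⟨hlT, hmT⟩, ?_, by simp [mul_assoc]⟩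
  simp [mem_trace_append, hl1, hm1]

lemma connectedOffOne_of_mem_trace {T : Set Γ} {a z : Γ} {l : List Γ} (hlT : ∀ x ∈ l, x ∈ T)
    (hl1 : (1 : Γ) ∉ trace a l) (hz : z ∈ trace a l) : ConnectedOffOne T a z := by
  obtain ⟨l₁, l₂, rfl, rfl⟩ := mem_trace.1 hz
  exact ⟨l₁, (List.forall_mem_append.1 hlT).1, fun h => hl1 (mem_trace_append.2 (.inl h)), rfl⟩

lemma IsSelfAvoiding.eq_one_or_connectedOffOne {T : Set Γ} {a z : Γ} {l : List Γ}
    (h : IsSelfAvoiding (a :: l)) (hlT : ∀ x ∈ l, x ∈ T) (hz : z ∈ trace 1 (a :: l)) :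
    z = 1 ∨ ConnectedOffOne T a z := by
  rw [trace_cons, one_mul, List.mem_cons] at hz
  exact hz.imp_right (connectedOffOne_of_mem_trace hlT (isSelfAvoiding_cons.1 h).1)

/-- `InsertStep T w U U'`: the word `U'` arises from `U` by inserting the letter `w` at an interior
vertex. Seen from that vertex, placed at `1`, the walk comes from `s⁻¹` and goes on to `s'`; the two
conditions say that no path in `T` avoiding `1` leads from `w` back to `s⁻¹`, or from `s'` to the
point `w⁻¹`, which the insertion moves to `1`. -/
inductive InsertStep (T : Set Γ) (w : Γ) : List Γ → List Γ → Prop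
  | intro {X Y : List Γ} {s s' : Γ} (hpast : ¬ ConnectedOffOne T w s⁻¹)
      (hfuture : ¬ ConnectedOffOne T s' w⁻¹) :
      InsertStep T w (X ++ s :: s' :: Y) (X ++ s :: w :: s' :: Y)

lemma InsertStep.append {T : Set Γ} {w : Γ} {U U' : List Γ} (h : InsertStep T w U U')
    (X Y : List Γ) : InsertStep T w (X ++ (U ++ Y)) (X ++ (U' ++ Y)) := by
  obtain @⟨X', Y', s, s', hpast, hfuture⟩ := h
  simpa using InsertStep.intro (X := X ++ X') (Y := Y' ++ Y) hpast hfuture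

lemma InsertStep.forall_mem {T : Set Γ} {w : Γ} {U U' : List Γ} (h : InsertStep T w U U')
    (hwT : w ∈ T) (hUT : ∀ x ∈ U, x ∈ T) : ∀ x ∈ U', x ∈ T := by
  obtain ⟨-, -⟩ := h
  simp only [List.forall_mem_append, List.forall_mem_cons] at hUT ⊢
  tauto

lemma InsertStep.isSelfAvoiding {T : Set Γ} (hT : ∀ s ∈ T, s⁻¹ ∈ T) {w : Γ} (hw : w ≠ 1)
    {U U' : List Γ} (h : InsertStep T w U U') (hUT : ∀ x ∈ U, x ∈ T) (hU : IsSelfAvoiding U) :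
    IsSelfAvoiding U' := by
  obtain @⟨X, Y, s, s', hpast, hfuture⟩ := h
  rw [List.append_cons, List.forall_mem_append, List.forall_mem_append] at hUT
  rw [List.append_cons, isSelfAvoiding_append] at hU ⊢
  obtain ⟨⟨hXT, -⟩, hYT⟩ := hUT
  obtain ⟨hXs, hsY, -⟩ := hU
  set v := (X ++ [s]).prod
  have hfuture_ne_one : (1 : Γ) ∉ trace w (s' :: Y) := by
    rw [mem_trace_iff_one, mul_one]
    exact fun h => (hsY.eq_one_or_connectedOffOne (List.forall_mem_cons.1 hYT).2 h).elim
      (by simpa using hw) hfuture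
  have hwY : IsSelfAvoiding (w :: s' :: Y) :=
    isSelfAvoiding_cons.2 ⟨hfuture_ne_one, nodup_trace_iff_one.2 hsY⟩
  refine ⟨hXs, hwY, fun z hzX hzY => ?_⟩
  have hz_past : v⁻¹ * z = 1 ∨ ConnectedOffOne T s⁻¹ (v⁻¹ * z) := by
    have hXinv := hXs.inverse
    have hz : v⁻¹ * z ∈ trace 1 (inverse (X ++ [s])) :=
      mem_trace_inverse.2 (by rwa [mul_inv_cancel_left])
    rw [inverse_concat] at hXinv hz
    exact hXinv.eq_one_or_connectedOffOne
      (fun x hx => inv_inv x ▸ hT _ (hXT _ (mem_inverse.1 hx))) hz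
  have hz_future : v⁻¹ * z = 1 ∨ ConnectedOffOne T w (v⁻¹ * z) :=
    hwY.eq_one_or_connectedOffOne hYT (mem_trace_iff_one.1 hzY)
  rcases hz_past with h | hpast_z
  · rwa [inv_mul_eq_one, eq_comm] at h
  rcases hz_future with h | hfuture_z
  · rwa [inv_mul_eq_one, eq_comm] at h
  exact absurd (hfuture_z.trans (hpast_z.symm hT)) hpast

/-- `IsLocalEdit E v U U'`: the word `U'` can replace `U`, as it is self-avoiding and has the same
product, and the vertices it adds to the walk all lie in the window `v • E`. -/
structure IsLocalEdit (E : Set Γ) (v : Γ) (U U' : List Γ) : Prop where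
  prod_eq : U'.prod = U.prod
  isSelfAvoiding : IsSelfAvoiding U'
  mem_or_mem : ∀ z ∈ trace 1 U', z ∈ trace 1 U ∨ v⁻¹ * z ∈ E

lemma IsLocalEdit.replace {E : Set Γ} {v : Γ} {X K M Y : List Γ}
    (h : IsSelfAvoiding (X ++ (K ++ Y))) (hM : IsSelfAvoiding M) (hprod : M.prod = K.prod)
    (hmeet : ∀ z ∈ trace 1 M, X.prod * z ∈ trace 1 (X ++ (K ++ Y)) → z ∈ trace 1 K)
    (hE : ∀ z ∈ trace 1 M, v⁻¹ * (X.prod * z) ∈ E) :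
    IsLocalEdit E v (X ++ (K ++ Y)) (X ++ (M ++ Y)) where
  prod_eq := by simp [hprod]
  isSelfAvoiding := h.replace hM hprod hmeet
  mem_or_mem z hz := by
    simp only [mem_trace_append, one_mul, hprod] at hz ⊢
    rcases hz with hz | hz | hz
    · exact .inl (.inl hz)
    · exact .inr (by simpa using hE _ (mem_trace_iff_one.1 hz))
    · exact .inl (.inr (.inr hz))

lemma exists_shortest_path {T : Set Γ} {a : Γ} {R : ℕ} {P : Γ → Prop}
    (h : ∃ l : List Γ, (∀ x ∈ l, x ∈ T) ∧ l.length ≤ R ∧ (1 : Γ) ∉ trace a l ∧ P (a * l.prod)) :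
    ∃ l : List Γ, (∀ x ∈ l, x ∈ T) ∧ l.length ≤ R ∧ (1 : Γ) ∉ trace a l ∧ P (a * l.prod) ∧
      (trace a l).Nodup ∧ ∀ z ∈ trace a l, P z → z = a * l.prod := by
  obtain ⟨l, ⟨hlT, hlR, hl1, hlP⟩, hmin⟩ := exists_minimalFor_of_wellFoundedLT _ List.length h
  refine ⟨l, hlT, hlR, hl1, hlP, ?_, fun z hz hzP => ?_⟩
  · by_contra hnodup
    obtain ⟨l', hlen, hprod, hsub, htrace⟩ := exists_shorter_of_not_nodup hnodup
    have := hmin ⟨fun x hx => hlT x (hsub hx), hlen.le.trans hlR, fun h => hl1 (htrace h),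
      hprod ▸ hlP⟩ hlen.le
    omega
  · obtain ⟨l₁, l₂, rfl, rfl⟩ := mem_trace.1 hz
    rw [List.length_append] at hlR
    have := hmin ⟨(List.forall_mem_append.1 hlT).1, by omega,
      fun h => hl1 (mem_trace_append.2 (.inl h)), hzP⟩ (by simp)
    obtain rfl : l₂ = [] := List.length_eq_zero_iff.1 (by simpa using this)
    simp

lemma prod_mem_pow_of_length_le {T : Set Γ} {l : List Γ} {n : ℕ} (hlT : ∀ x ∈ l, x ∈ T)
    (hln : l.length ≤ n) : l.prod ∈ (insert 1 T) ^ n := by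
  induction l generalizing n with
  | nil => simpa using Set.one_mem_pow (n := n) (Set.mem_insert 1 T)
  | cons a l ih =>
    rw [List.forall_mem_cons] at hlT
    cases n with
    | zero => simp at hln
    | succ n =>
      rw [List.prod_cons, pow_succ']
      exact Set.mul_mem_mul (.inr hlT.1) (ih hlT.2 (by simpa using hln))

lemma mem_pow_of_mem_trace {T : Set Γ} {l : List Γ} {n : ℕ} {z : Γ} (hlT : ∀ x ∈ l, x ∈ T)
    (hln : l.length ≤ n) (hz : z ∈ trace 1 l) : z ∈ (insert 1 T) ^ n := by
  obtain ⟨l₁, l₂, rfl, rfl⟩ := mem_trace.1 hz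
  rw [one_mul]
  rw [List.length_append] at hln
  exact prod_mem_pow_of_length_le (List.forall_mem_append.1 hlT).1 (by omega)

/-- `IsNewWord S T n U`: a word of length at most `n` in the letters `T`, with one outside `S`. -/
structure IsNewWord (S T : Set Γ) (n : ℕ) (U : List Γ) : Prop where
  length_le : U.length ≤ n
  forall_mem : ∀ x ∈ U, x ∈ T
  exists_notMem : ∃ x ∈ U, x ∉ S

lemma exists_isLocalEdit_of_meet {S T : Set Γ} (hS : ∀ s ∈ S, s⁻¹ ∈ S) (hT : ∀ s ∈ T, s⁻¹ ∈ T)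
    {U₁ U₂ M : List Γ} {n : ℕ} (hU : IsSelfAvoiding (U₁ ++ U₂)) (hUT : ∀ x ∈ U₁ ++ U₂, x ∈ T)
    (hMT : ∀ x ∈ M, x ∈ T) (hMS : ∃ x ∈ M, x ∉ S) (hMn : M.length ≤ n) (hM : IsSelfAvoiding M)
    (hend : U₁.prod * M.prod ∈ trace 1 (U₁ ++ U₂))
    (hmeet : ∀ z ∈ trace 1 M, U₁.prod * z ∈ trace 1 (U₁ ++ U₂) → z = 1 ∨ z = M.prod) :
    ∃ U', IsNewWord S T ((U₁ ++ U₂).length + n) U' ∧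
      IsLocalEdit ((insert 1 T) ^ n) U₁.prod (U₁ ++ U₂) U' := by
  obtain ⟨a, haM, haS⟩ := hMS
  obtain ⟨Z, V, hsplit, hprod⟩ := mem_trace.1 hend
  rw [one_mul] at hprod
  rcases List.append_eq_append_iff.1 hsplit with ⟨K, rfl, rfl⟩ | ⟨K, rfl, rfl⟩
  · have hMK : M.prod = K.prod := by simpa using hprod
    simp only [List.forall_mem_append] at hUT
    refine ⟨U₁ ++ (M ++ V), ⟨by simp; omega, ?_, a, by simp [haM], haS⟩,
      .replace hU hM hMK (fun z hz hzU => ?_)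
        fun z hz => by simpa using mem_pow_of_mem_trace hMT hMn hz⟩
    · simpa only [List.forall_mem_append] using ⟨hUT.1, hMT, hUT.2.2⟩
    rcases hmeet z hz hzU with rfl | rfl
    · exact start_mem_trace _ _
    · simpa [hMK] using end_mem_trace 1 K
  · have hKM : K.prod * M.prod = 1 := by simpa [mul_assoc] using hprod
    have hMK : (inverse M).prod = K.prod := by simp [eq_inv_of_mul_eq_one_left hKM]
    have hback : ∀ z, (Z ++ K).prod * (M.prod * z) = Z.prod * z := fun z => by
      rw [List.prod_append, mul_assoc, ← mul_assoc K.prod, hKM, one_mul]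
    rw [List.append_assoc] at hU hmeet ⊢
    simp only [List.forall_mem_append] at hUT
    refine ⟨Z ++ (inverse M ++ U₂), ⟨by simp; omega, ?_, a⁻¹, ?_, ?_⟩,
      .replace hU hM.inverse hMK (fun z hz hzU => ?_) fun z hz => ?_⟩
    · have hMT' : ∀ x ∈ inverse M, x ∈ T :=
        fun x hx => inv_inv x ▸ hT _ (hMT _ (mem_inverse.1 hx))
      simpa only [List.forall_mem_append] using ⟨hUT.1.1, hMT', hUT.2⟩
    · simp [mem_inverse, haM]
    · exact fun h => haS (inv_inv a ▸ hS _ h)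
    · rw [mem_trace_inverse] at hz
      rcases hmeet _ hz (by rwa [hback]) with h | h
      · obtain rfl : z = K.prod := by rw [← hMK, prod_inverse, eq_inv_of_mul_eq_one_right h]
        simpa using end_mem_trace 1 K
      · obtain rfl : z = 1 := by simpa using h
        exact start_mem_trace _ _
    · rw [← hback, inv_mul_cancel_left]
      exact mem_pow_of_mem_trace hMT hMn (mem_trace_inverse.1 hz)

lemma exists_isLocalEdit_of_path {S T : Set Γ} (hS : ∀ s ∈ S, s⁻¹ ∈ S) (hT : ∀ s ∈ T, s⁻¹ ∈ T)
    {U₁ U₂ : List Γ} {a : Γ} {R : ℕ} (hU : IsSelfAvoiding (U₁ ++ U₂))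
    (hUT : ∀ x ∈ U₁ ++ U₂, x ∈ T) (haT : a ∈ T) (haS : a ∉ S)
    (hpath : ∃ l : List Γ, (∀ x ∈ l, x ∈ T) ∧ l.length ≤ R ∧ (1 : Γ) ∉ trace a l ∧
      U₁.prod * (a * l.prod) ∈ trace 1 (U₁ ++ U₂)) :
    ∃ U', IsNewWord S T ((U₁ ++ U₂).length + (R + 1)) U' ∧
      IsLocalEdit ((insert 1 T) ^ (R + 1)) U₁.prod (U₁ ++ U₂) U' := by
  obtain ⟨l, hlT, hlR, hl1, hend, hl, hmeet⟩ :=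
    exists_shortest_path (P := fun z => U₁.prod * z ∈ trace 1 (U₁ ++ U₂)) hpath
  refine exists_isLocalEdit_of_meet (M := a :: l) hS hT hU hUT
    (List.forall_mem_cons.2 ⟨haT, hlT⟩) ⟨a, List.mem_cons_self, haS⟩ (by simpa using hlR)
    (isSelfAvoiding_cons.2 ⟨hl1, hl⟩) hend fun z hz hzU => ?_
  rw [trace_cons, one_mul, List.mem_cons] at hz
  exact hz.imp_right fun hz => by simpa using hmeet z hz hzU

/-- Elements of `T` that can be joined off the identity can be so by at most `R` steps. -/
def IsConnectionRadius (T : Set Γ) (R : ℕ) : Prop :=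
  ∀ a ∈ T, ∀ c ∈ T, ConnectedOffOne T a c →
    ∃ l : List Γ, (∀ x ∈ l, x ∈ T) ∧ l.length ≤ R ∧ (1 : Γ) ∉ trace a l ∧ a * l.prod = c

lemma exists_isConnectionRadius (T : Finset Γ) : ∃ R, IsConnectionRadius (T : Set Γ) R := by
  refine Eventually.exists (f := atTop) ?_
  refine (eventually_all_finset T).2 fun a _ => (eventually_all_finset T).2 fun c _ => ?_
  by_cases hac : ConnectedOffOne (T : Set Γ) a c
  · obtain ⟨l, hlT, hl1, hlc⟩ := hac
    filter_upwards [eventually_ge_atTop l.length] with R hR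
    exact fun _ => ⟨l, hlT, hR, hl1, hlc⟩
  · exact .of_forall fun R h => absurd h hac

lemma exists_edit {S T : Set Γ} (hST : S ⊆ T) (hS : ∀ s ∈ S, s⁻¹ ∈ S) (hT : ∀ s ∈ T, s⁻¹ ∈ T)
    {w : Γ} (hwT : w ∈ T) (hwS : w ∉ S) {R : ℕ} (hR : IsConnectionRadius T R)
    {U₁ U₂ : List Γ} (hU₁ : U₁ ≠ []) (hU₂ : U₂ ≠ []) (hU : IsSelfAvoiding (U₁ ++ U₂))
    (hUS : ∀ x ∈ U₁ ++ U₂, x ∈ S) :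
    ∃ U', IsNewWord S T ((U₁ ++ U₂).length + (R + 1)) U' ∧
      (InsertStep T w (U₁ ++ U₂) U' ∨
        IsLocalEdit ((insert 1 T) ^ (R + 1)) U₁.prod (U₁ ++ U₂) U') := by
  have hUT : ∀ x ∈ U₁ ++ U₂, x ∈ T := fun x hx => hST (hUS x hx)
  have hdetour : ∀ a ∈ T, a ∉ S → ∀ c ∈ T, ConnectedOffOne T a c →
      U₁.prod * c ∈ trace 1 (U₁ ++ U₂) →
      ∃ U', IsNewWord S T ((U₁ ++ U₂).length + (R + 1)) U' ∧
        IsLocalEdit ((insert 1 T) ^ (R + 1)) U₁.prod (U₁ ++ U₂) U' := by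
    intro a haT haS c hcT hac hc
    obtain ⟨l, hlT, hlR, hl1, rfl⟩ := hR a haT c hcT hac
    exact exists_isLocalEdit_of_path hS hT hU hUT haT haS ⟨l, hlT, hlR, hl1, hc⟩
  obtain ⟨X, s, rfl⟩ := (List.eq_nil_or_concat U₁).resolve_left hU₁
  obtain ⟨s', Y, rfl⟩ := List.exists_cons_of_ne_nil hU₂
  rw [List.concat_eq_append] at *
  by_cases hpast : ConnectedOffOne T w s⁻¹
  · refine (hdetour w hwT hwS _ (hT s (hUT s (by simp))) hpast ?_).imp fun _ => .imp_right .inr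
    exact mem_trace.2 ⟨X, s :: s' :: Y, by simp, by simp⟩
  by_cases hfuture : ConnectedOffOne T s' w⁻¹
  · refine (hdetour w⁻¹ (hT w hwT) (fun h => hwS (inv_inv w ▸ hS _ h)) s' (hUT s' (by simp))
      (hfuture.symm hT) ?_).imp fun _ => .imp_right .inr
    exact mem_trace.2 ⟨X ++ [s, s'], Y, by simp, by simp [mul_assoc]⟩
  have hstep : InsertStep T w (X ++ s :: s' :: Y) (X ++ s :: w :: s' :: Y) :=
    .intro hpast hfuture
  rw [List.append_assoc, List.singleton_append] at *
  exact ⟨_, ⟨by simp; omega, hstep.forall_mem hwT hUT, w, by simp, hwS⟩, .inl hstep⟩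

end Edits

section Crowding

variable {Γ : Type*} [Group Γ]

/-- The vertices of the walk `U` that lie in the neighbourhood `v • B` of `v`. -/
noncomputable def visited (B : Finset Γ) (U : List Γ) (v : Γ) : Finset Γ :=
  (trace 1 U).toFinset.filter (v⁻¹ * · ∈ B)

lemma mem_visited {B : Finset Γ} {U : List Γ} {v z : Γ} :
    z ∈ visited B U v ↔ z ∈ trace 1 U ∧ v⁻¹ * z ∈ B := by
  rw [visited, Finset.mem_filter, List.mem_toFinset]

lemma card_visited_le (B : Finset Γ) (U : List Γ) (v : Γ) : (visited B U v).card ≤ B.card :=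
  Finset.card_le_card_of_injOn (v⁻¹ * ·) (fun _ hx => (mem_visited.1 hx).2)
    (mul_right_injective v⁻¹).injOn

lemma smul_visited_subset (B : Finset Γ) (X U Y : List Γ) (v : Γ) :
    X.prod • visited B U v ⊆ visited B (X ++ (U ++ Y)) (X.prod * v) := by
  intro z hz
  obtain ⟨x, hx, rfl⟩ := Finset.mem_smul_finset.1 hz
  rw [mem_visited] at hx ⊢
  refine ⟨?_, by simpa [mul_assoc] using hx.2⟩
  rw [mem_trace_append, mem_trace_append, one_mul, mem_trace_iff_one (g := X.prod)]
  exact .inr (.inl (by simpa using hx.1))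

/-- A word is `k`-crowded if its walk has an interior vertex `v` such that it visits at least `k`
vertices of `v • B`. -/
def IsCrowded (B : Finset Γ) (k : ℕ) (U : List Γ) : Prop :=
  ∃ U₁ U₂, U = U₁ ++ U₂ ∧ U₁ ≠ [] ∧ U₂ ≠ [] ∧ k ≤ (visited B U U₁.prod).card

lemma IsCrowded.of_isInfix {B : Finset Γ} {k : ℕ} {U V : List Γ} (hUV : U <:+: V)
    (hU : IsCrowded B k U) : IsCrowded B k V := by
  obtain ⟨X, Y, rfl⟩ := hUV
  obtain ⟨U₁, U₂, rfl, hU₁, hU₂, hk⟩ := hU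
  refine ⟨X ++ U₁, U₂ ++ Y, by simp, by simp [hU₁], by simp [hU₂], hk.trans ?_⟩
  rw [← Finset.card_smul_finset X.prod, List.prod_append, List.append_assoc X]
  exact Finset.card_le_card (smul_visited_subset B X _ Y _)

lemma mem_trace_of_not_isCrowded {B : Finset Γ} {k : ℕ} {X U₁ U₂ Y : List Γ} (hU₁ : U₁ ≠ [])
    (hU₂ : U₂ ≠ []) (hk : k ≤ (visited B (U₁ ++ U₂) U₁.prod).card)
    (hcrowd : ¬ IsCrowded B (k + 1) (X ++ (U₁ ++ U₂ ++ Y))) {z : Γ}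
    (hz : z ∈ trace 1 (X ++ (U₁ ++ U₂ ++ Y))) (hzB : (X.prod * U₁.prod)⁻¹ * z ∈ B) :
    z ∈ trace X.prod (U₁ ++ U₂) := by
  have hcard : (visited B (X ++ (U₁ ++ U₂ ++ Y)) (X.prod * U₁.prod)).card ≤ k := by
    by_contra! h
    exact hcrowd ⟨X ++ U₁, U₂ ++ Y, by simp, by simp [hU₁], by simp [hU₂],
      by rwa [List.prod_append]⟩
  have hvisited : X.prod • visited B (U₁ ++ U₂) U₁.prod =
      visited B (X ++ (U₁ ++ U₂ ++ Y)) (X.prod * U₁.prod) :=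
    Finset.eq_of_subset_of_card_le (smul_visited_subset B X _ Y _)
      (by rw [Finset.card_smul_finset]; exact hcard.trans hk)
  have hzU := mem_visited.2 ⟨hz, hzB⟩
  rw [← hvisited, ← Finset.inv_smul_mem_iff, mem_visited] at hzU
  exact mem_trace_iff_one.2 hzU.1

end Crowding

section SimultaneousEdits

variable {Γ : Type*} [Group Γ]

/-- `IsIsolatedEdit E W x U U'`: the block `U` of a walk with vertex set `W`, entered at the vertex
`x`, is either kept or replaced by a local edit at an interior vertex of `U` near which no vertex of
`W` outside the block is to be found. -/
def IsIsolatedEdit (E W : Set Γ) (x : Γ) (U U' : List Γ) : Prop :=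
  U' = U ∨ ∃ U₁ U₂, U = U₁ ++ U₂ ∧ U₂ ≠ [] ∧ IsLocalEdit E U₁.prod U U' ∧
    ∀ p ∈ W, (x * U₁.prod)⁻¹ * p ∈ E / E → p ∈ trace x U

lemma IsIsolatedEdit.prod_eq {E W : Set Γ} {x : Γ} {U U' : List Γ}
    (h : IsIsolatedEdit E W x U U') : U'.prod = U.prod := by
  obtain rfl | ⟨_, _, _, _, hedit, _⟩ := h
  · rfl
  · exact hedit.prod_eq

lemma IsIsolatedEdit.nodup_trace {E W : Set Γ} {x : Γ} {U U' : List Γ}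
    (h : IsIsolatedEdit E W x U U') (hU : (trace x U).Nodup) : (trace x U').Nodup := by
  obtain rfl | ⟨_, _, _, _, hedit, _⟩ := h
  · exact hU
  · exact nodup_trace_iff_one.2 hedit.isSelfAvoiding

lemma IsIsolatedEdit.mem_or_exists {E W : Set Γ} {x : Γ} {U U' : List Γ}
    (h : IsIsolatedEdit E W x U U') (hU : (trace x U).Nodup) {z : Γ} (hz : z ∈ trace x U') :
    z ∈ trace x U ∨ ∃ c ∈ trace x U, c ≠ x * U.prod ∧ c⁻¹ * z ∈ E ∧
      ∀ p ∈ W, c⁻¹ * p ∈ E / E → p ∈ trace x U := by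
  obtain rfl | ⟨U₁, U₂, rfl, hU₂, hedit, hisolated⟩ := h
  · exact .inl hz
  rw [mem_trace_iff_one] at hz ⊢
  refine (hedit.mem_or_mem _ hz).imp_right fun hzE => ⟨x * U₁.prod, mem_trace.2 ⟨U₁, U₂, rfl, rfl⟩,
    fun hend => hU₂ ?_, by simpa [mul_assoc] using hzE, hisolated⟩
  exact (isSelfAvoiding_append.1 (nodup_trace_iff_one.1 hU)).2.1.eq_nil_of_prod_eq_one
    (by simpa using hend)

lemma nodup_trace_flatten_of_isIsolatedEdit {E W : Set Γ} (hE : 1 ∈ E)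
    (L : List (List Γ × List Γ)) (x : Γ) (hW : ∀ z ∈ trace x (L.map Prod.fst).flatten, z ∈ W)
    (hL : ∀ L₁ a L₂, L = L₁ ++ a :: L₂ →
      IsIsolatedEdit E W (x * (L₁.map Prod.fst).flatten.prod) a.1 a.2)
    (hold : (trace x (L.map Prod.fst).flatten).Nodup) :
    (trace x (L.map Prod.snd).flatten).Nodup ∧ ∀ z ∈ trace x (L.map Prod.snd).flatten,
      z ∈ trace x (L.map Prod.fst).flatten ∨
      ∃ c, c⁻¹ * z ∈ E ∧ ∀ p ∈ W, c⁻¹ * p ∈ E / E → p ∈ trace x (L.map Prod.fst).flatten := by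
  induction L generalizing x with
  | nil => simp
  | cons a L ih =>
    have hEE : ∀ z ∈ E, z ∈ E / E := fun z hz => by simpa using Set.div_mem_div hz hE
    have ha : IsIsolatedEdit E W x a.1 a.2 := by simpa using hL [] a L rfl
    simp only [List.map_cons, List.flatten_cons, nodup_trace_append, ha.prod_eq] at hold ⊢
    simp only [List.map_cons, List.flatten_cons, mem_trace_append, ha.prod_eq] at hW ⊢
    obtain ⟨hhead, htail, hmeet⟩ := hold
    obtain ⟨htail', hwindow⟩ := ih (x * a.1.prod) (fun z hz => hW z (.inr hz))
      (fun L₁ b L₂ hsplit => by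
        simpa [mul_assoc] using hL (a :: L₁) b L₂ (by rw [hsplit, List.cons_append])) htail
    refine ⟨⟨ha.nodup_trace hhead, htail', fun z hz hz' => ?_⟩, fun z hz => ?_⟩
    · rcases ha.mem_or_exists hhead hz with hzhead | ⟨v, hv, hvend, hvz, hisolated⟩ <;>
        rcases hwindow z hz' with hztail | ⟨c, hcz, hc⟩
      · exact hmeet z hzhead hztail
      · exact hmeet z hzhead (hc z (hW z (.inl hzhead)) (hEE _ hcz))
      · exact hmeet z (hisolated z (hW z (.inr hztail)) (hEE _ hvz)) hztail
      · have hcv : c⁻¹ * v ∈ E / E := by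
          simpa [div_eq_mul_inv, mul_assoc] using Set.div_mem_div hcz hvz
        exact absurd (hmeet v hv (hc v (hW v (.inl hv)) hcv)) hvend
    · rcases hz with hz | hz
      · rcases ha.mem_or_exists hhead hz with hz | ⟨v, -, -, hvz, hisolated⟩
        · exact .inl (.inl hz)
        · exact .inr ⟨v, hvz, fun p hp hvp => .inl (hisolated p hp hvp)⟩
      · rcases hwindow z hz with hz | ⟨c, hcz, hc⟩
        · exact .inl (.inr hz)
        · exact .inr ⟨c, hcz, fun p hp hcp => .inr (hc p hp hcp)⟩

/-- `IsCrowdedEdit B E k U U'`: a local edit of `U` at an interior vertex that witnesses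
that `U` is `k`-crowded. -/
def IsCrowdedEdit (B : Finset Γ) (E : Set Γ) (k : ℕ) (U U' : List Γ) : Prop :=
  ∃ U₁ U₂, U = U₁ ++ U₂ ∧ U₁ ≠ [] ∧ U₂ ≠ [] ∧ k ≤ (visited B U U₁.prod).card ∧
    IsLocalEdit E U₁.prod U U'

-- If the whole walk is not `(k + 1)`-crowded, a `k`-crowded block already contains every visited
-- vertex near its centre, so that its edit cannot collide with the rest of the walk.
lemma isSelfAvoiding_flatten_of_isCrowdedEdit {B : Finset Γ} {E : Set Γ} (hE : 1 ∈ E)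
    (hEB : E / E ⊆ B) {k : ℕ} {L : List (List Γ × List Γ)}
    (hL : ∀ a ∈ L, a.2 = a.1 ∨ IsCrowdedEdit B E k a.1 a.2)
    (hold : IsSelfAvoiding (L.map Prod.fst).flatten)
    (hcrowd : ¬ IsCrowded B (k + 1) (L.map Prod.fst).flatten) :
    IsSelfAvoiding (L.map Prod.snd).flatten := by
  refine (nodup_trace_flatten_of_isIsolatedEdit (W := {z | z ∈ trace 1 (L.map Prod.fst).flatten})
    hE L 1 (fun _ => id) ?_ hold).1
  rintro L₁ ⟨U, U'⟩ L₂ rfl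
  refine (hL (U, U') (by simp)).imp_right ?_
  rintro ⟨U₁, U₂, rfl, hU₁, hU₂, hk, hedit⟩
  rw [List.map_append, List.map_cons, List.flatten_append, List.flatten_cons] at hcrowd ⊢
  refine ⟨U₁, U₂, rfl, hU₂, hedit, fun p hp hpE => ?_⟩
  rw [one_mul] at hpE ⊢
  exact mem_trace_of_not_isCrowded hU₁ hU₂ hk hcrowd hp (hEB hpE)

lemma reflTransGen_flatten {α ι : Type*} {r : List α → List α → Prop}
    (hr : ∀ ⦃U U'⦄, r U U' → ∀ X Y, r (X ++ (U ++ Y)) (X ++ (U' ++ Y))) {f g : ι → List α}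
    {L : List ι} (hL : ∀ a ∈ L, Relation.ReflTransGen r (f a) (g a)) :
    Relation.ReflTransGen r (L.map f).flatten (L.map g).flatten := by
  induction L with
  | nil => exact .refl
  | cons a L ih =>
    rw [List.forall_mem_cons] at hL
    simp only [List.map_cons, List.flatten_cons]
    refine .trans (b := g a ++ (L.map f).flatten) (hL.1.lift (· ++ (L.map f).flatten) ?_)
      ((ih hL.2).lift (g a ++ ·) ?_)
    · exact fun U U' h => by simpa using hr h [] _
    · exact fun U U' h => by simpa using hr h (g a) []

lemma isSelfAvoiding_of_reflTransGen_insertStep {T : Set Γ} (hT : ∀ s ∈ T, s⁻¹ ∈ T) {w : Γ}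
    (hw : w ≠ 1) (hwT : w ∈ T) {U U' : List Γ}
    (h : Relation.ReflTransGen (InsertStep T w) U U') (hUT : ∀ x ∈ U, x ∈ T)
    (hU : IsSelfAvoiding U) : IsSelfAvoiding U' := by
  suffices (∀ x ∈ U', x ∈ T) ∧ IsSelfAvoiding U' from this.2
  induction h with
  | refl => exact ⟨hUT, hU⟩
  | tail _ hstep ih => exact ⟨hstep.forall_mem hwT ih.1, hstep.isSelfAvoiding hT hw ih.1 ih.2⟩

lemma isSelfAvoiding_flatten_of_edits {T : Set Γ} (hT : ∀ s ∈ T, s⁻¹ ∈ T) {w : Γ} (hw : w ≠ 1)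
    (hwT : w ∈ T) {B : Finset Γ} {E : Set Γ} (hE : 1 ∈ E) (hEB : E / E ⊆ B) {k : ℕ}
    {L : List (List Γ × List Γ)} (hLT : ∀ a ∈ L, (∀ x ∈ a.1, x ∈ T) ∧ ∀ x ∈ a.2, x ∈ T)
    (hL : ∀ a ∈ L, a.2 = a.1 ∨ InsertStep T w a.1 a.2 ∨ IsCrowdedEdit B E k a.1 a.2)
    (hold : IsSelfAvoiding (L.map Prod.fst).flatten)
    (hcrowd : ¬ IsCrowded B (k + 1) (L.map Prod.fst).flatten) :
    IsSelfAvoiding (L.map Prod.snd).flatten := by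
  let mid (a : List Γ × List Γ) : List Γ := if IsCrowdedEdit B E k a.1 a.2 then a.2 else a.1
  have hmid : ∀ a : List Γ × List Γ, mid a = a.1 ∨ IsCrowdedEdit B E k a.1 (mid a) := fun a => by
    by_cases h : IsCrowdedEdit B E k a.1 a.2 <;> simp [mid, h]
  have hmidT : ∀ x ∈ (L.map mid).flatten, x ∈ T := by
    simp only [List.mem_flatten, List.mem_map]
    rintro x ⟨_, ⟨a, ha, rfl⟩, hx⟩
    by_cases h : IsCrowdedEdit B E k a.1 a.2
    · exact (hLT a ha).2 x (by simpa [mid, h] using hx)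
    · exact (hLT a ha).1 x (by simpa [mid, h] using hx)
  refine isSelfAvoiding_of_reflTransGen_insertStep hT hw hwT
    (reflTransGen_flatten (fun _ _ h X Y => h.append X Y) fun a ha => ?_) hmidT ?_
  · by_cases h : IsCrowdedEdit B E k a.1 a.2
    · simpa [mid, h] using Relation.ReflTransGen.refl
    · rcases hL a ha with heq | hstep | hedit
      · simpa [mid, h, heq] using Relation.ReflTransGen.refl
      · simpa [mid, h] using Relation.ReflTransGen.single hstep
      · exact absurd hedit h
  · have := isSelfAvoiding_flatten_of_isCrowdedEdit (L := L.map fun a => (a.1, mid a)) hE hEB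
      (k := k) (by simp only [List.forall_mem_map]; exact fun a _ => hmid a)
    simp only [List.map_map, Function.comp_def] at this
    exact this hold hcrowd

end SimultaneousEdits

section Lists

variable {α β : Type*}

/-- The lists of length `n` with entries in `A`. -/
noncomputable def listsOver (A : Finset α) : ℕ → Finset (List α)
  | 0 => {[]}
  | n + 1 => Finset.image₂ List.cons A (listsOver A n)

lemma mem_listsOver {A : Finset α} {n : ℕ} {L : List α} :
    L ∈ listsOver A n ↔ L.length = n ∧ ∀ a ∈ L, a ∈ A := by
  induction n generalizing L with
  | zero => simp +contextual [listsOver, List.length_eq_zero_iff]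
  | succ n ih =>
    cases L with
    | nil => simp [listsOver]
    | cons a L => simp [listsOver, ih, and_left_comm]

lemma sum_listsOver_succ {M : Type*} [AddCommMonoid M] (A : Finset α) (n : ℕ) (f : List α → M) :
    ∑ L ∈ listsOver A (n + 1), f L = ∑ a ∈ A, ∑ L ∈ listsOver A n, f (a :: L) := by
  rw [listsOver, Finset.image₂, Finset.sum_image, Finset.sum_product]
  · rfl
  · rintro ⟨a, L⟩ - ⟨b, L'⟩ - h
    simpa using h

lemma sum_listsOver_prod {R : Type*} [CommSemiring R] (A : Finset α) (n : ℕ) (f : α → R) :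
    ∑ L ∈ listsOver A n, (L.map f).prod = (∑ a ∈ A, f a) ^ n := by
  induction n with
  | zero => simp [listsOver]
  | succ n ih =>
    simp only [sum_listsOver_succ, List.map_cons, List.prod_cons, ← Finset.mul_sum, ih,
      ← Finset.sum_mul, pow_succ']

lemma card_listsOver (A : Finset α) (n : ℕ) : (listsOver A n).card = A.card ^ n := by
  simpa using sum_listsOver_prod (R := ℕ) A n fun _ => 1

lemma sum_listsOver_comp_map {R : Type*} [CommSemiring R] {A : Finset α} {B : Finset β}
    {π : α → β} {f : α → R} {g : β → R}
    (h : ∀ F : β → R, ∑ a ∈ A, F (π a) * f a = ∑ b ∈ B, F b * g b) (n : ℕ) (F : List β → R) :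
    ∑ L ∈ listsOver A n, F (L.map π) * (L.map f).prod =
      ∑ p ∈ listsOver B n, F p * (p.map g).prod := by
  induction n generalizing F with
  | zero => simp [listsOver]
  | succ n ih =>
    simp only [sum_listsOver_succ, List.map_cons, List.prod_cons, mul_left_comm (F _),
      ← Finset.mul_sum]
    simp only [fun a => ih fun p => F (π a :: p)]
    simpa only [mul_comm] using h fun b => ∑ p ∈ listsOver B n, F (b :: p) * (p.map g).prod

lemma card_filter_countP_lt_mul_pow_le (A : Finset α) (good : α → Prop) [DecidablePred good]
    (n q : ℕ) {s : ℝ} (hs0 : 0 ≤ s) (hs1 : s ≤ 1) :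
    (((listsOver A n).filter fun p => p.countP (good ·) < q).card : ℝ) * s ^ q ≤
      (∑ a ∈ A, if good a then s else 1) ^ n := by
  have hprod : ∀ p : List α,
      (p.map fun a => if good a then s else 1).prod = s ^ p.countP (good ·) := fun p => by
    simp [List.prod_map_ite, List.countP_eq_length_filter]
  rw [← sum_listsOver_prod, ← nsmul_eq_mul]
  simp only [hprod]
  refine (Finset.card_nsmul_le_sum _ _ _ fun p hp => ?_).trans
    (Finset.sum_le_sum_of_subset_of_nonneg (Finset.filter_subset _ _) fun p _ _ => by positivity)
  exact pow_le_pow_of_le_one hs0 hs1 (Finset.mem_filter.1 hp).2.le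

lemma card_filter_countP_lt_le (A : Finset α) (good : α → Prop) [DecidablePred good] (q : ℕ)
    {Q : ℝ} (hQ : 0 < Q) (hQA : Q ≤ (A.card : ℝ) ^ 2)
    (hbad : ((A.filter (¬ good ·)).card : ℝ) * A.card ≤ Q / 8) :
    (((listsOver A (2 * q)).filter fun p => p.countP (good ·) < q).card : ℝ) ≤ (Q / 2) ^ q := by
  have hA : (0 : ℝ) < A.card :=
    (sq_pos_iff.1 (hQ.trans_le hQA)).lt_of_le' (Nat.cast_nonneg _)
  set s : ℝ := Q / (8 * (A.card : ℝ) ^ 2) with hs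
  have hs0 : 0 < s := by positivity
  have hs1 : s ≤ 1 := by rw [hs, div_le_one (by positivity)]; linarith
  have hsum : ∑ a ∈ A, (if good a then s else 1) ≤ Q / (4 * A.card) := by
    have hgood : ((A.filter good).card : ℝ) * s ≤ A.card * s := by
      gcongr
      exact Finset.filter_subset _ _
    have hAs : A.card * s = Q / (8 * A.card) := by rw [hs]; field_simp
    have hbad' : ((A.filter (¬ good ·)).card : ℝ) ≤ Q / (8 * A.card) := by
      rw [le_div_iff₀ (by positivity)]; linarith
    have hsplit : Q / (4 * A.card) = Q / (8 * A.card) + Q / (8 * A.card) := by field_simp; ring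
    rw [Finset.sum_ite, Finset.sum_const, Finset.sum_const, nsmul_eq_mul, nsmul_one, hsplit]
    linarith
  have hsum0 : 0 ≤ ∑ a ∈ A, if good a then s else 1 :=
    Finset.sum_nonneg fun a _ => by split_ifs <;> positivity
  have hmarkov := (card_filter_countP_lt_mul_pow_le A good (2 * q) q hs0.le hs1).trans
    (pow_le_pow_left₀ hsum0 hsum _)
  rw [← le_div_iff₀ (by positivity), pow_mul, ← div_pow] at hmarkov
  refine hmarkov.trans_eq (congrArg (· ^ q) ?_)
  rw [hs]
  field_simp
  norm_num

end Lists

section Words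

variable {α : Type*}

/-- The words of length `n` over the alphabet `A` that have the property `P`. -/
noncomputable def words (A : Finset α) (P : List α → Prop) (n : ℕ) : Finset (List α) :=
  (listsOver A n).filter P

lemma mem_words {A : Finset α} {P : List α → Prop} {n : ℕ} {l : List α} :
    l ∈ words A P n ↔ l.length = n ∧ (∀ x ∈ l, x ∈ A) ∧ P l := by
  rw [words, Finset.mem_filter, mem_listsOver, and_assoc]

lemma sum_pow_length_biUnion_words {R : Type*} [Semiring R] (A : Finset α) (P : List α → Prop)
    (N : ℕ) (z : R) : ∑ r ∈ (Finset.range N).biUnion (words A P), z ^ r.length =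
      ∑ j ∈ Finset.range N, (words A P j).card * z ^ j := by
  have hlength : ∀ {j : ℕ} {r : List α}, r ∈ words A P j → r.length = j := fun hr =>
    (mem_words.1 hr).1
  rw [Finset.sum_biUnion fun i _ j _ hij => Finset.disjoint_left.2 fun r hi hj =>
    hij ((hlength hi).symm.trans (hlength hj))]
  refine Finset.sum_congr rfl fun j _ => ?_
  rw [Finset.sum_congr rfl fun r hr => congrArg (z ^ ·) (hlength hr), Finset.sum_const,
    nsmul_eq_mul]

/-- A property of words that is inherited by contiguous subwords. -/
def IsFactorClosed (P : List α → Prop) : Prop :=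
  ∀ ⦃u l : List α⦄, u <:+: l → P l → P u

lemma exists_blocks_of_mem_words {A : Finset α} {P : List α → Prop} (hP : IsFactorClosed P)
    {m q : ℕ} {l : List α} (hl : l ∈ words A P (m * q)) :
    ∃ p ∈ listsOver (words A P m) q, p.flatten = l := by
  induction q generalizing l with
  | zero =>
    rw [mem_words, mul_zero, List.length_eq_zero_iff] at hl
    exact ⟨[], mem_listsOver.2 (by simp), hl.1.symm⟩
  | succ q ih =>
    obtain ⟨hlen, hlA, hPl⟩ := mem_words.1 hl
    rw [mul_add_one] at hlen
    obtain ⟨p, hp, hpl⟩ := ih (l := l.drop m) <| mem_words.2 ⟨by rw [List.length_drop]; omega,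
      fun x hx => hlA x (List.mem_of_mem_drop hx), hP (List.drop_suffix m l).isInfix hPl⟩
    have htake : l.take m ∈ words A P m := mem_words.2 ⟨by rw [List.length_take]; omega,
      fun x hx => hlA x (List.mem_of_mem_take hx), hP (List.take_prefix m l).isInfix hPl⟩
    rw [mem_listsOver] at hp
    exact ⟨l.take m :: p, mem_listsOver.2 (by simpa [hp.1] using ⟨htake, hp.2⟩), by simp [hpl]⟩

lemma card_words_mul_le {A : Finset α} {P : List α → Prop} (hP : IsFactorClosed P) (m q : ℕ) :
    (words A P (m * q)).card ≤ (words A P m).card ^ q := by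
  rw [← card_listsOver]
  refine (Finset.card_le_card fun l hl => ?_).trans
    (Finset.card_image_le (s := listsOver (words A P m) q) (f := List.flatten))
  exact Finset.mem_image.2 (exists_blocks_of_mem_words hP hl)

end Words

section Parsing

variable {α : Type*}

/-- A finite set of edits `(U, U')` of words `U` of length `m` in the letters `S`: each `U` is
either kept or replaced by a word of length at most `n` in the letters `T`, not all of them
in `S`. -/
structure IsEditSet (S T : Set α) (m n : ℕ) (I : Finset (List α × List α)) : Prop where
  length_eq : ∀ a ∈ I, a.1.length = m
  forall_mem : ∀ a ∈ I, ∀ x ∈ a.1, x ∈ S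
  isNewWord : ∀ a ∈ I, a.2 ≠ a.1 → IsNewWord S T n a.2

/-- An edit `(U, U')` has weight `y`, unless it keeps the word. -/
noncomputable def editWeight (y : ℝ) (a : List α × List α) : ℝ :=
  if a.2 = a.1 then 1 else y

lemma editWeight_nonneg {y : ℝ} (hy : 0 ≤ y) (a : List α × List α) : 0 ≤ editWeight y a := by
  rw [editWeight]
  split_ifs <;> positivity

/-- The total weight of the ways to obtain the word `r` by performing `q` edits from `I` in a row
and concatenating the results. -/
noncomputable def parseWeight (I : Finset (List α × List α)) (y : ℝ) (q : ℕ) (r : List α) : ℝ :=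
  ∑ L ∈ listsOver I q, if (L.map Prod.snd).flatten = r then (L.map (editWeight y)).prod else 0

lemma parseWeight_nonneg (I : Finset (List α × List α)) {y : ℝ} (hy : 0 ≤ y) (q : ℕ)
    (r : List α) : 0 ≤ parseWeight I y q r := by
  refine Finset.sum_nonneg fun L _ => ?_
  split_ifs
  · exact List.prod_nonneg (List.forall_mem_map.2 fun a _ => editWeight_nonneg hy a)
  · exact le_rfl

lemma parseWeight_zero (I : Finset (List α × List α)) (y : ℝ) (r : List α) :
    parseWeight I y 0 r = if r = [] then 1 else 0 := by
  simp [parseWeight, listsOver, eq_comm]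

lemma parseWeight_succ (I : Finset (List α × List α)) (y : ℝ) (q : ℕ) (r : List α) :
    parseWeight I y (q + 1) r = ∑ a ∈ I, if a.2 <+: r then
      editWeight y a * parseWeight I y q (r.drop a.2.length) else 0 := by
  rw [parseWeight, sum_listsOver_succ]
  refine Finset.sum_congr rfl fun a _ => ?_
  split_ifs with h
  · obtain ⟨t, rfl⟩ := h
    simp [parseWeight, Finset.mul_sum]
  · refine Finset.sum_eq_zero fun L _ => if_neg fun h' => h ?_
    rw [← h', List.map_cons, List.flatten_cons]
    exact List.prefix_append _ _

/-- The `i`-th letter of `r` exists and lies outside `S`. -/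
def HasNewLetterAt (S : Set α) (r : List α) (i : ℕ) : Prop :=
  ∃ x, r[i]? = some x ∧ x ∉ S

lemma hasNewLetterAt_drop {S : Set α} {r : List α} {m i : ℕ} :
    HasNewLetterAt S (r.drop m) i ↔ HasNewLetterAt S r (m + i) := by
  simp only [HasNewLetterAt, List.getElem?_drop]

lemma HasNewLetterAt.of_prefix {S : Set α} {u r : List α} (h : u <+: r) {i : ℕ}
    (hi : HasNewLetterAt S u i) : HasNewLetterAt S r i := by
  obtain ⟨x, hx, hxS⟩ := hi
  obtain ⟨hlt, rfl⟩ := List.getElem?_eq_some_iff.1 hx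
  exact ⟨u[i], List.prefix_iff_getElem?.1 h i hlt, hxS⟩

lemma exists_hasNewLetterAt {S : Set α} {u : List α} (hu : ∃ x ∈ u, x ∉ S) :
    ∃ i < u.length, HasNewLetterAt S u i := by
  obtain ⟨x, hx, hxS⟩ := hu
  obtain ⟨i, hi, rfl⟩ := List.mem_iff_getElem.1 hx
  exact ⟨i, hi, u[i], List.getElem?_eq_getElem hi, hxS⟩

variable {S T : Set α} {m n : ℕ} {I : Finset (List α × List α)} {y : ℝ}

lemma IsEditSet.sum_kept_le (hI : IsEditSet S T m n I) (hy : 0 ≤ y) (q : ℕ) (r : List α) :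
    (∑ a ∈ I with a.2 = a.1, if a.2 <+: r then
      editWeight y a * parseWeight I y q (r.drop a.2.length) else 0) ≤
      if ∃ i < m, HasNewLetterAt S r i then 0 else parseWeight I y q (r.drop m) := by
  have hkept : ∀ a ∈ I.filter (fun a => a.2 = a.1) |>.filter (·.2 <+: r), a = (r.take m, r.take m) ∧
      a.2 <+: r ∧ a.2.length = m ∧ ∀ x ∈ a.2, x ∈ S := by
    rintro ⟨U, U'⟩ ha
    simp only [Finset.mem_filter] at ha
    obtain ⟨⟨haI, rfl⟩, hpre⟩ := ha
    have hlen := hI.length_eq _ haI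
    have htake := List.prefix_iff_eq_take.1 hpre
    rw [hlen] at htake
    exact ⟨by rw [← htake], hpre, hlen, hI.forall_mem _ haI⟩
  rw [← Finset.sum_filter]
  split_ifs with hnew
  · obtain ⟨i, him, x, hx, hxS⟩ := hnew
    refine (Finset.sum_eq_zero fun a ha => ?_).le
    obtain ⟨-, hpre, hlen, haS⟩ := hkept a ha
    obtain ⟨t, rfl⟩ := hpre
    rw [List.getElem?_append_left (hlen ▸ him)] at hx
    exact absurd (haS x (List.mem_of_getElem? hx)) hxS
  · refine (Finset.sum_le_card_nsmul _ _ (parseWeight I y q (r.drop m)) fun a ha => ?_).trans ?_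
    · obtain ⟨haeq, -, hlen, -⟩ := hkept a ha
      rw [hlen, haeq, editWeight, if_pos rfl, one_mul]
    · rw [nsmul_eq_mul]
      refine mul_le_of_le_one_left (parseWeight_nonneg I hy q _) ?_
      exact_mod_cast Finset.card_le_one.2 fun a ha b hb => (hkept a ha).1.trans (hkept b hb).1.symm

lemma IsEditSet.sum_edited_le (hI : IsEditSet S T m n I) (hy : 0 ≤ y) {q : ℕ}
    (hq : ∀ r, parseWeight I y q r ≤ 1) (r : List α) :
    (∑ a ∈ I with ¬ a.2 = a.1, if a.2 <+: r then
      editWeight y a * parseWeight I y q (r.drop a.2.length) else 0) ≤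
      if ∃ i < n, HasNewLetterAt S r i then y * I.card else 0 := by
  split_ifs with hnew
  · calc
      _ ≤ (I.filter fun a => ¬ a.2 = a.1).card • y :=
        Finset.sum_le_card_nsmul _ _ _ fun a ha => by
          rw [editWeight, if_neg (Finset.mem_filter.1 ha).2]
          split_ifs
          · exact mul_le_of_le_one_right hy (hq _)
          · exact hy
      _ ≤ y * I.card := by
        rw [nsmul_eq_mul, mul_comm]
        gcongr
        exact Finset.filter_subset _ _
  · refine (Finset.sum_eq_zero fun a ha => if_neg fun hpre => hnew ?_).le
    rw [Finset.mem_filter] at ha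
    have hword := hI.isNewWord a ha.1 ha.2
    obtain ⟨i, hi, hiS⟩ := exists_hasNewLetterAt hword.exists_notMem
    exact ⟨i, hi.trans_le hword.length_le, hiS.of_prefix hpre⟩

-- The first new letter of `r`, if there is one, tells where the first edited block can begin: so at
-- most `n` positions need to be taken into account, and at each of them at most `I.card` edits.
lemma IsEditSet.parseWeight_le (hI : IsEditSet S T m n I) (hm : 1 ≤ m) (hy : 0 ≤ y)
    (hyn : n * (y * I.card) ≤ 1) (q : ℕ) (r : List α) : parseWeight I y q r ≤ 1 ∧
      ∀ i, HasNewLetterAt S r i → parseWeight I y q r ≤ (i + 1) * (y * I.card) := by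
  have hyI : 0 ≤ y * I.card := by positivity
  induction q generalizing r with
  | zero =>
    rw [parseWeight_zero]
    refine ⟨by split_ifs <;> norm_num, ?_⟩
    rintro i ⟨x, hx, -⟩
    rw [if_neg (by rintro rfl; simp at hx)]
    positivity
  | succ q ih =>
    have hsucc : parseWeight I y (q + 1) r ≤
        (if ∃ i < m, HasNewLetterAt S r i then 0 else parseWeight I y q (r.drop m)) +
        if ∃ i < n, HasNewLetterAt S r i then y * I.card else 0 := by
      rw [parseWeight_succ, ← Finset.sum_filter_add_sum_filter_not I fun a => a.2 = a.1]
      exact add_le_add (hI.sum_kept_le hy q r) (hI.sum_edited_le hy (fun r => (ih r).1) r)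
    have hedited : (if ∃ i < n, HasNewLetterAt S r i then y * I.card else 0) ≤ y * I.card := by
      split_ifs
      exacts [le_rfl, hyI]
    have hnew : ∀ i, HasNewLetterAt S r i →
        parseWeight I y (q + 1) r ≤ (i + 1) * (y * I.card) := fun i hi => by
      by_cases him : i < m
      · rw [if_pos ⟨i, him, hi⟩, zero_add] at hsucc
        exact hsucc.trans (hedited.trans (le_mul_of_one_le_left hyI (by simp)))
      · obtain ⟨j, rfl⟩ := Nat.exists_eq_add_of_le (not_lt.1 him)
        have hdrop := (ih (r.drop m)).2 j (hasNewLetterAt_drop.2 hi)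
        have hkept : (if ∃ i < m, HasNewLetterAt S r i then 0 else parseWeight I y q (r.drop m)) ≤
            (j + 1) * (y * I.card) := by
          split_ifs
          exacts [by positivity, hdrop]
        have hm' : (1 : ℝ) ≤ m := by exact_mod_cast hm
        push_cast
        linarith [mul_le_mul_of_nonneg_right hm' hyI]
    refine ⟨?_, hnew⟩
    by_cases hn : ∃ i < n, HasNewLetterAt S r i
    · obtain ⟨i, hin, hi⟩ := hn
      refine (hnew i hi).trans (le_trans ?_ hyn)
      gcongr
      exact_mod_cast hin
    · rw [if_neg hn, add_zero] at hsucc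
      refine hsucc.trans ?_
      split_ifs
      exacts [zero_le_one, (ih _).1]

lemma IsEditSet.sum_le_sum_pow_length (hI : IsEditSet S T m n I) (hm : 1 ≤ m) (hy : 0 ≤ y)
    (hyn : n * (y * I.card) ≤ 1) {z : ℝ} (hz : 0 ≤ z) {q : ℕ}
    {𝓛 : Finset (List (List α × List α))} (h𝓛 : 𝓛 ⊆ listsOver I q) {W : Finset (List α)}
    (hW : ∀ L ∈ 𝓛, (L.map Prod.snd).flatten ∈ W) :
    ∑ L ∈ 𝓛, (L.map (editWeight y)).prod * z ^ (L.map Prod.snd).flatten.length ≤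
      ∑ r ∈ W, z ^ r.length := by
  rw [← Finset.sum_fiberwise_of_maps_to hW]
  refine Finset.sum_le_sum fun r _ => ?_
  calc
    _ = (∑ L ∈ 𝓛, if (L.map Prod.snd).flatten = r then (L.map (editWeight y)).prod else 0) *
        z ^ r.length := by
      rw [← Finset.sum_filter, Finset.sum_mul]
      exact Finset.sum_congr rfl fun L hL => by rw [(Finset.mem_filter.1 hL).2]
    _ ≤ parseWeight I y q r * z ^ r.length := by
      refine mul_le_mul_of_nonneg_right ?_ (by positivity)
      refine Finset.sum_le_sum_of_subset_of_nonneg h𝓛 fun L _ _ => ?_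
      split_ifs
      · exact List.prod_nonneg (List.forall_mem_map.2 fun a _ => editWeight_nonneg hy a)
      · exact le_rfl
    _ ≤ z ^ r.length :=
      mul_le_of_le_one_left (by positivity) (hI.parseWeight_le hm hy hyn q r).1

lemma IsEditSet.prod_editWeight_le {D : ℕ} (hI : IsEditSet S T m (m + D) I) (hy : 0 ≤ y) {z : ℝ}
    (hz : 0 ≤ z) (hz1 : z ≤ 1) {q : ℕ} {L : List (List α × List α)} (hL : L ∈ listsOver I q) :
    (L.map (editWeight (y * z ^ D))).prod * z ^ (m * q) ≤
      (L.map (editWeight y)).prod * z ^ (L.map Prod.snd).flatten.length := by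
  obtain ⟨rfl, hLI⟩ := mem_listsOver.1 hL
  induction L with
  | nil => simp
  | cons a L ih =>
    rw [List.forall_mem_cons] at hLI
    have ha : editWeight (y * z ^ D) a * z ^ m ≤ editWeight y a * z ^ a.2.length := by
      rw [editWeight, editWeight]
      split_ifs with hkept
      · rw [hkept, hI.length_eq a hLI.1]
      · rw [mul_assoc, ← pow_add, add_comm]
        have := (hI.isNewWord a hLI.1 hkept).length_le
        exact mul_le_mul_of_nonneg_left (pow_le_pow_of_le_one hz hz1 this) hy
    have htail := ih hLI.2 (mem_listsOver.2 ⟨rfl, hLI.2⟩)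
    simp only [List.map_cons, List.prod_cons, List.length_cons, List.flatten_cons,
      List.length_append, pow_add, mul_add_one]
    have := mul_le_mul ha htail (mul_nonneg (List.prod_nonneg (List.forall_mem_map.2 fun a _ =>
      editWeight_nonneg (by positivity) a)) (by positivity))
      (mul_nonneg (editWeight_nonneg hy a) (by positivity))
    linarith

end Parsing

section Growth

/-- The sequence `c` has exponential growth rate `μ = lim (c n) ^ (1 / n)`. -/
def HasGrowthRate (c : ℕ → ℕ) (μ : ℝ) : Prop :=
  Tendsto (fun n : ℕ => (c n : ℝ) ^ ((1 : ℝ) / n)) atTop (nhds μ)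

variable {c : ℕ → ℕ} {μ : ℝ}

lemma HasGrowthRate.nonneg (h : HasGrowthRate c μ) : 0 ≤ μ :=
  ge_of_tendsto' h fun _ => by positivity

lemma HasGrowthRate.one_le (h : HasGrowthRate c μ) (hc : ∀ n, 1 ≤ c n) : 1 ≤ μ :=
  ge_of_tendsto' h fun n => Real.one_le_rpow (by exact_mod_cast hc n) (by positivity)

lemma HasGrowthRate.pow_le (h : HasGrowthRate c μ) (hc : ∀ m q, c (m * q) ≤ c m ^ q) {m : ℕ}
    (hm : m ≠ 0) : μ ^ m ≤ c m := by
  have hroot : μ ≤ (c m : ℝ) ^ ((1 : ℝ) / m) := by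
    refine le_of_tendsto (h.comp (tendsto_id.const_mul_atTop' (Nat.pos_of_ne_zero hm))) ?_
    filter_upwards [eventually_ne_atTop 0] with q hq
    calc (c (m * q) : ℝ) ^ ((1 : ℝ) / (m * q : ℕ))
      _ ≤ ((c m : ℝ) ^ q) ^ ((1 : ℝ) / (m * q : ℕ)) := by
        gcongr
        exact_mod_cast hc m q
      _ = (c m : ℝ) ^ ((1 : ℝ) / m) := by
        rw [← Real.rpow_natCast, ← Real.rpow_mul (by positivity)]
        congr 1
        push_cast
        field_simp
  calc μ ^ m ≤ ((c m : ℝ) ^ ((1 : ℝ) / m)) ^ m := pow_le_pow_left₀ h.nonneg hroot m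
    _ = c m := by rw [one_div, Real.rpow_inv_natCast_pow (by positivity) hm]

lemma HasGrowthRate.exists_le_mul_pow (h : HasGrowthRate c μ) {ν : ℝ} (hμν : μ < ν) :
    ∃ C : ℝ, 0 ≤ C ∧ ∀ j, (c j : ℝ) ≤ C * ν ^ j := by
  have hν : 0 < ν := h.nonneg.trans_lt hμν
  have hbdd : IsBoundedUnder (· ≤ ·) atTop fun j : ℕ => (c j : ℝ) / ν ^ j := by
    refine isBoundedUnder_of_eventually_le (a := 1) ?_
    filter_upwards [h.eventually_lt_const hμν, eventually_ne_atTop 0] with j hj hj0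
    rw [div_le_one (by positivity), ← Real.rpow_inv_natCast_pow (by positivity : (0 : ℝ) ≤ c j) hj0,
      ← one_div]
    gcongr
  obtain ⟨C, hC⟩ := hbdd.bddAbove_range
  have hCj : ∀ j, (c j : ℝ) / ν ^ j ≤ C := fun j => hC ⟨j, rfl⟩
  exact ⟨C, le_trans (by positivity) (hCj 0), fun j => (div_le_iff₀ (by positivity)).1 (hCj j)⟩

lemma HasGrowthRate.exists_mul_le (h : HasGrowthRate c μ) (hμ : 0 < μ) {b : ℕ → ℕ}
    (hb : ∀ m q, b (m * q) ≤ b m ^ q) {m₀ : ℕ} (hm₀ : m₀ ≠ 0) (hbm₀ : (b m₀ : ℝ) < μ ^ m₀)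
    {ε : ℝ} (hε : 0 < ε) : ∃ m, m ≠ 0 ∧ (b m : ℝ) * c m ≤ ε * (μ ^ m) ^ 2 := by
  obtain ⟨ν, hμν, hν⟩ : ∃ ν > μ, (b m₀ : ℝ) * ν ^ m₀ < (μ ^ m₀) ^ 2 := by
    have hcont : Tendsto (fun ν : ℝ => (b m₀ : ℝ) * ν ^ m₀) (nhds μ) (nhds (b m₀ * μ ^ m₀)) :=
      Continuous.tendsto (by fun_prop) μ
    have hlt : (b m₀ : ℝ) * μ ^ m₀ < (μ ^ m₀) ^ 2 := by
      rw [sq]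
      gcongr
    exact Eventually.exists (f := nhdsWithin μ (Set.Ioi μ)) (eventually_mem_nhdsWithin.and
      ((Tendsto.eventually_lt_const hlt hcont).filter_mono nhdsWithin_le_nhds))
  obtain ⟨C, _, hcC⟩ := h.exists_le_mul_pow hμν
  have hν0 : 0 < ν := hμ.trans hμν
  set r : ℝ := b m₀ * ν ^ m₀ / (μ ^ m₀) ^ 2 with hr
  have hr1 : r < 1 := (div_lt_one (by positivity)).2 hν
  have hlim : Tendsto (fun j : ℕ => C * r ^ j) atTop (nhds 0) := by
    simpa using (tendsto_pow_atTop_nhds_zero_of_lt_one (by positivity) hr1).const_mul C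
  obtain ⟨j, hj, hj0⟩ := ((hlim.eventually_le_const hε).and (eventually_ne_atTop 0)).exists
  refine ⟨m₀ * j, mul_ne_zero hm₀ hj0, ?_⟩
  calc (b (m₀ * j) : ℝ) * c (m₀ * j)
    _ ≤ (b m₀ : ℝ) ^ j * (C * ν ^ (m₀ * j)) := by
      gcongr
      · exact_mod_cast hb m₀ j
      · exact hcC _
    _ = C * r ^ j * ((μ ^ m₀) ^ 2) ^ j := by
      rw [mul_assoc C, ← mul_pow, hr, div_mul_cancel₀ _ (by positivity), mul_pow, pow_mul]
      ring
    _ ≤ ε * ((μ ^ m₀) ^ 2) ^ j := by gcongr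
    _ = ε * (μ ^ (m₀ * j)) ^ 2 := by rw [pow_mul, pow_right_comm]

lemma sum_range_mul_inv_pow_le {C x : ℝ} (hC : 0 ≤ C) (hcC : ∀ j, (c j : ℝ) ≤ C * x ^ j)
    (hμ : 0 < μ) (hμx : μ ≤ x) (N : ℕ) :
    ∑ j ∈ Finset.range (N + 1), c j * μ⁻¹ ^ j ≤ (N + 1) * (C * (x / μ) ^ N) := by
  have hterm : ∀ j ∈ Finset.range (N + 1), c j * μ⁻¹ ^ j ≤ C * (x / μ) ^ N := fun j hj => calc
    c j * μ⁻¹ ^ j ≤ C * x ^ j * μ⁻¹ ^ j := by gcongr; exact hcC j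
    _ = C * (x / μ) ^ j := by rw [mul_assoc, ← mul_pow, div_eq_mul_inv]
    _ ≤ C * (x / μ) ^ N := by
      gcongr
      · exact (one_le_div hμ).2 hμx
      · exact Finset.mem_range_succ_iff.1 hj
  refine (Finset.sum_le_card_nsmul _ _ _ hterm).trans_eq ?_
  rw [Finset.card_range, nsmul_eq_mul, Nat.cast_succ]

lemma HasGrowthRate.lt_of_forall_pow_le {ν : ℝ} (h : HasGrowthRate c ν) (hμ : 0 < μ) {t : ℝ}
    (ht : 0 < t) {K : ℝ} (hK : 0 ≤ K) {M : ℕ}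
    (hgrowth : ∀ q ≠ 0, (1 + t) ^ q ≤ K * ∑ j ∈ Finset.range (M * q + 1), c j * μ⁻¹ ^ j) :
    μ < ν := by
  by_contra! hνμ
  obtain ⟨x, hμx, hx⟩ : ∃ x > μ, (x / μ) ^ M < 1 + t := by
    have hcont : Tendsto (fun x : ℝ => (x / μ) ^ M) (nhds μ) (nhds ((μ / μ) ^ M)) :=
      Continuous.tendsto (by fun_prop) μ
    have hlt : (μ / μ) ^ M < 1 + t := by
      rw [div_self hμ.ne', one_pow]
      linarith
    exact Eventually.exists (f := nhdsWithin μ (Set.Ioi μ)) (eventually_mem_nhdsWithin.and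
      ((Tendsto.eventually_lt_const hlt hcont).filter_mono nhdsWithin_le_nhds))
  obtain ⟨C, hC, hcC⟩ := h.exists_le_mul_pow (hνμ.trans_lt hμx)
  have hx0 : 0 < x := hμ.trans hμx
  set r : ℝ := (x / μ) ^ M / (1 + t) with hr
  have hr1 : r < 1 := (div_lt_one (by positivity)).2 hx
  have hle : ∀ q : ℕ, q ≠ 0 → 1 ≤ K * C * (M * (q * r ^ q) + r ^ q) := fun q hq => by
    have hq' := (hgrowth q hq).trans (mul_le_mul_of_nonneg_left
      (sum_range_mul_inv_pow_le hC hcC hμ hμx.le (M * q)) hK)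
    rw [← div_le_div_iff_of_pos_right (c := (1 + t) ^ q) (by positivity),
      div_self (by positivity)] at hq'
    refine hq'.trans_eq ?_
    rw [hr, div_pow, pow_mul]
    push_cast
    ring
  have hr0 : 0 ≤ r := by positivity
  have hlim : Tendsto (fun q : ℕ => K * C * (M * (q * r ^ q) + r ^ q)) atTop (nhds 0) := by
    simpa using (((tendsto_self_mul_const_pow_of_lt_one hr0 hr1).const_mul (M : ℝ)).add
      (tendsto_pow_atTop_nhds_zero_of_lt_one hr0 hr1)).const_mul (K * C)
  obtain ⟨q, hq, hq0⟩ := ((hlim.eventually_lt_const one_pos).and (eventually_ne_atTop 0)).exists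
  exact (hle q hq0).not_gt hq

end Growth

section EditFamily

variable {α : Type*} {𝓑 𝓖 : Finset (List α)} {edit : List α → List α}

/-- The edits that keep a word of `𝓑` or replace a word `U` of `𝓖` by `edit U`. -/
noncomputable def editPairs (𝓑 𝓖 : Finset (List α)) (edit : List α → List α) :
    Finset (List α × List α) :=
  𝓑.image (fun U => (U, U)) ∪ 𝓖.image fun U => (U, edit U)

lemma mem_editPairs {a : List α × List α} :
    a ∈ editPairs 𝓑 𝓖 edit ↔ (a.1 ∈ 𝓑 ∧ a.2 = a.1) ∨ (a.1 ∈ 𝓖 ∧ a.2 = edit a.1) := by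
  obtain ⟨U, V⟩ := a
  simp only [editPairs, Finset.mem_union, Finset.mem_image, Prod.mk.injEq]
  constructor
  · rintro (⟨_, hU, rfl, rfl⟩ | ⟨_, hU, rfl, rfl⟩)
    exacts [.inl ⟨hU, rfl⟩, .inr ⟨hU, rfl⟩]
  · rintro (⟨hU, rfl⟩ | ⟨hU, rfl⟩)
    exacts [.inl ⟨V, hU, rfl, rfl⟩, .inr ⟨U, hU, rfl, rfl⟩]

lemma card_editPairs_le (h𝓖 : 𝓖 ⊆ 𝓑) : (editPairs 𝓑 𝓖 edit).card ≤ 2 * 𝓑.card :=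
  calc
    _ ≤ 𝓑.card + 𝓖.card := (Finset.card_union_le _ _).trans
      (add_le_add Finset.card_image_le Finset.card_image_le)
    _ ≤ 2 * 𝓑.card := by
      have := Finset.card_le_card h𝓖
      omega

lemma sum_editPairs (h𝓖 : 𝓖 ⊆ 𝓑) (hedit : ∀ U ∈ 𝓖, edit U ≠ U) (t : ℝ) (F : List α → ℝ) :
    ∑ a ∈ editPairs 𝓑 𝓖 edit, F a.1 * editWeight t a =
      ∑ U ∈ 𝓑, F U * if U ∈ 𝓖 then 1 + t else 1 := by
  have hdisj : Disjoint (𝓑.image fun U => (U, U)) (𝓖.image fun U => (U, edit U)) := by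
    simp only [Finset.disjoint_left, Finset.mem_image]
    rintro _ ⟨U, -, rfl⟩ ⟨V, hV, hVU⟩
    obtain ⟨rfl, hVU⟩ := Prod.mk.inj hVU
    exact hedit V hV hVU
  have hkept : ∑ a ∈ 𝓑.image (fun U => (U, U)), F a.1 * editWeight t a = ∑ U ∈ 𝓑, F U := by
    rw [Finset.sum_image fun U _ V _ h => congrArg Prod.fst h]
    simp [editWeight]
  have hedited : ∑ a ∈ 𝓖.image (fun U => (U, edit U)), F a.1 * editWeight t a =
      ∑ U ∈ 𝓖, F U * t := by
    rw [Finset.sum_image fun U _ V _ h => congrArg Prod.fst h]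
    exact Finset.sum_congr rfl fun U hU => by rw [editWeight, if_neg (hedit U hU)]
  have hsplit : ∀ U, (F U * if U ∈ 𝓖 then 1 + t else 1) =
      F U + if U ∈ 𝓖 then F U * t else 0 := fun U => by
    split_ifs <;> ring
  rw [editPairs, Finset.sum_union hdisj, hkept, hedited]
  simp only [hsplit, Finset.sum_add_distrib, ← Finset.sum_filter, Finset.filter_mem_eq_inter,
    Finset.inter_eq_right.2 h𝓖]

lemma sum_prod_editWeight_le (h𝓖 : 𝓖 ⊆ 𝓑) {S T : Set α} {m D : ℕ} (hm : 1 ≤ m)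
    (h𝓑 : ∀ U ∈ 𝓑, U.length = m ∧ ∀ x ∈ U, x ∈ S)
    (hedit : ∀ U ∈ 𝓖, IsNewWord S T (m + D) (edit U)) {y z : ℝ} (hy : 0 ≤ y)
    (hy𝓑 : (m + D : ℕ) * (y * (2 * 𝓑.card)) ≤ 1) (hz : 0 ≤ z) (hz1 : z ≤ 1) {q : ℕ}
    {A : Finset (List (List α))} (hA : A ⊆ listsOver 𝓑 q) {W : Finset (List α)}
    (hW : ∀ L ∈ listsOver (editPairs 𝓑 𝓖 edit) q, L.map Prod.fst ∈ A →
      (L.map Prod.snd).flatten ∈ W) :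
    ∑ p ∈ A, (p.map fun U => if U ∈ 𝓖 then 1 + y * z ^ D else 1).prod * z ^ (m * q) ≤
      ∑ r ∈ W, z ^ r.length := by
  have hne : ∀ U ∈ 𝓖, edit U ≠ U := fun U hU h => by
    obtain ⟨x, hx, hxS⟩ := (hedit U hU).exists_notMem
    exact hxS ((h𝓑 U (h𝓖 hU)).2 x (h ▸ hx))
  have hI : IsEditSet S T m (m + D) (editPairs 𝓑 𝓖 edit) := by
    have hfst : ∀ a ∈ editPairs 𝓑 𝓖 edit, a.1 ∈ 𝓑 := fun a ha =>
      (mem_editPairs.1 ha).elim And.left fun h => h𝓖 h.1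
    refine ⟨fun a ha => (h𝓑 _ (hfst a ha)).1, fun a ha => (h𝓑 _ (hfst a ha)).2, fun a ha h => ?_⟩
    rcases mem_editPairs.1 ha with ⟨-, ha⟩ | ⟨ha𝓖, ha⟩
    · exact absurd ha h
    · exact ha ▸ hedit _ ha𝓖
  have hyI : (m + D : ℕ) * (y * (editPairs 𝓑 𝓖 edit).card) ≤ 1 := by
    refine le_trans ?_ hy𝓑
    gcongr
    exact_mod_cast card_editPairs_le h𝓖
  set 𝓛 := (listsOver (editPairs 𝓑 𝓖 edit) q).filter fun L => L.map Prod.fst ∈ A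
  calc
    _ = ∑ L ∈ 𝓛, (L.map (editWeight (y * z ^ D))).prod * z ^ (m * q) := by
      have := sum_listsOver_comp_map (sum_editPairs h𝓖 hne (y * z ^ D)) q
        fun p => if p ∈ A then z ^ (m * q) else 0
      simp only [ite_mul, zero_mul, ← Finset.sum_filter, Finset.filter_mem_eq_inter,
        Finset.inter_eq_right.2 hA, mul_comm (z ^ (m * q))] at this
      exact this.symm
    _ ≤ ∑ L ∈ 𝓛, (L.map (editWeight y)).prod * z ^ (L.map Prod.snd).flatten.length :=
      Finset.sum_le_sum fun L hL =>
        hI.prod_editWeight_le hy hz hz1 (Finset.mem_filter.1 hL).1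
    _ ≤ ∑ r ∈ W, z ^ r.length :=
      hI.sum_le_sum_pow_length hm hy hyI hz (Finset.filter_subset _ _) fun L hL =>
        hW L (Finset.mem_filter.1 hL).1 (Finset.mem_filter.1 hL).2

lemma card_filter_le_countP_mul_le {A : Finset (List (List α))} {t : ℝ} (ht : 0 ≤ t) (q : ℕ) :
    ((A.filter fun p => q ≤ p.countP (· ∈ 𝓖)).card : ℝ) * (1 + t) ^ q ≤
      ∑ p ∈ A, (p.map fun U => if U ∈ 𝓖 then 1 + t else 1).prod := by
  have hprod : ∀ p : List (List α), (p.map fun U => if U ∈ 𝓖 then 1 + t else 1).prod =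
      (1 + t) ^ p.countP (· ∈ 𝓖) := fun p => by
    simp [List.prod_map_ite, List.countP_eq_length_filter]
  simp only [hprod]
  rw [← nsmul_eq_mul]
  refine (Finset.card_nsmul_le_sum _ _ _ fun p hp => ?_).trans
    (Finset.sum_le_sum_of_subset_of_nonneg (Finset.filter_subset _ _) fun p _ _ => by positivity)
  exact pow_le_pow_right₀ (by linarith) (Finset.mem_filter.1 hp).2

end EditFamily

section CayleyGraph

variable {Γ : Type*} [Group Γ]

/-- The sequence of generators labelling the edges of a walk in a Cayley graph. -/
def walkWord {S : Set Γ} : ∀ {u v : Γ}, (cayleyGraph S).Walk u v → List Γ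
  | _, _, .nil => []
  | _, _, @SimpleGraph.Walk.cons _ _ u v _ _ p => (u⁻¹ * v) :: walkWord p

lemma length_walkWord {S : Set Γ} {u v : Γ} (p : (cayleyGraph S).Walk u v) :
    (walkWord p).length = p.length := by
  induction p with
  | nil => rfl
  | cons _ p ih => simp [walkWord, ih]

lemma trace_walkWord {S : Set Γ} {u v : Γ} (p : (cayleyGraph S).Walk u v) :
    trace u (walkWord p) = p.support := by
  induction p with
  | nil => simp [walkWord]
  | cons _ p ih => simp [walkWord, ih]

lemma mul_prod_walkWord {S : Set Γ} {u v : Γ} (p : (cayleyGraph S).Walk u v) :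
    u * (walkWord p).prod = v := by
  induction p with
  | nil => simp [walkWord]
  | cons _ p ih => simpa [walkWord, mul_assoc] using ih

lemma walkWord_injective {S : Set Γ} {u v v' : Γ} {p : (cayleyGraph S).Walk u v}
    {p' : (cayleyGraph S).Walk u v'} (h : walkWord p = walkWord p') :
    (⟨v, p⟩ : Σ w : Γ, (cayleyGraph S).Walk u w) = ⟨v', p'⟩ := by
  obtain rfl : v = v' := by rw [← mul_prod_walkWord p, h, mul_prod_walkWord]
  have hsupport : p.support = p'.support := by rw [← trace_walkWord, h, trace_walkWord]
  rw [SimpleGraph.Walk.ext_support hsupport]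

lemma cayleyGraph_adj {S : Set Γ} (hS : ∀ s ∈ S, s⁻¹ ∈ S) {u v : Γ} :
    (cayleyGraph S).Adj u v ↔ u ≠ v ∧ u⁻¹ * v ∈ S := by
  rw [cayleyGraph, SimpleGraph.fromRel_adj]
  refine and_congr_right fun _ => or_iff_left_of_imp fun h => ?_
  simpa using hS _ h

lemma mem_of_mem_walkWord {S : Set Γ} (hS : ∀ s ∈ S, s⁻¹ ∈ S) {u v : Γ}
    (p : (cayleyGraph S).Walk u v) : ∀ x ∈ walkWord p, x ∈ S := by
  induction p with
  | nil => simp [walkWord]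
  | cons h p ih =>
    rw [walkWord, List.forall_mem_cons]
    exact ⟨((cayleyGraph_adj hS).1 h).2, ih⟩

lemma exists_walkWord_eq {S : Set Γ} (hS : ∀ s ∈ S, s⁻¹ ∈ S) (h1S : (1 : Γ) ∉ S) {l : List Γ}
    (hl : ∀ x ∈ l, x ∈ S) (u : Γ) : ∃ v, ∃ p : (cayleyGraph S).Walk u v, walkWord p = l := by
  induction l generalizing u with
  | nil => exact ⟨u, .nil, rfl⟩
  | cons s l ih =>
    rw [List.forall_mem_cons] at hl
    obtain ⟨v, p, rfl⟩ := ih hl.2 (u * s)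
    have hadj : (cayleyGraph S).Adj u (u * s) := by
      rw [cayleyGraph_adj hS, inv_mul_cancel_left, Ne, left_eq_mul]
      exact ⟨fun h => h1S (h ▸ hl.1), hl.1⟩
    exact ⟨v, .cons hadj p, by simp [walkWord]⟩

lemma sawCount_cayleyGraph {S : Finset Γ} (hS : ∀ s ∈ S, s⁻¹ ∈ S) (h1S : (1 : Γ) ∉ S) (n : ℕ) :
    sawCount (cayleyGraph (S : Set Γ)) 1 n = (words S IsSelfAvoiding n).card := by
  have hpath : ∀ {v : Γ} (p : (cayleyGraph (S : Set Γ)).Walk 1 v),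
      walkWord p ∈ words S IsSelfAvoiding n ↔ p.IsPath ∧ p.length = n := fun p => by
    rw [mem_words, length_walkWord, SimpleGraph.Walk.isPath_def, ← trace_walkWord, IsSelfAvoiding,
      and_iff_right (a := ∀ x ∈ walkWord p, x ∈ S) (mem_of_mem_walkWord hS p), and_comm]
  rw [sawCount, ← Fintype.card_coe, ← Nat.card_eq_fintype_card]
  refine Nat.card_eq_of_bijective (fun p => ⟨walkWord p.1.2, (hpath p.1.2).2 p.2⟩) ⟨?_, ?_⟩
  · intro p p' h
    exact Subtype.ext (walkWord_injective (Subtype.ext_iff.1 h))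
  · rintro ⟨l, hl⟩
    obtain ⟨v, p, rfl⟩ := exists_walkWord_eq hS h1S (mem_words.1 hl).2.1 1
    exact ⟨⟨⟨v, p⟩, (hpath p).1 hl⟩, rfl⟩

lemma exists_prod_eq_of_mem_closure {S : Set Γ} (hS : ∀ s ∈ S, s⁻¹ ∈ S) {g : Γ}
    (hg : g ∈ Subgroup.closure S) : ∃ l : List Γ, (∀ x ∈ l, x ∈ S) ∧ l.prod = g := by
  have hsymm : S⁻¹ ∪ S = S := Set.union_eq_self_of_subset_left fun s hs => inv_inv s ▸ hS _ hs
  rw [← Subgroup.mem_toSubmonoid, Subgroup.closure_toSubmonoid, Set.union_comm, hsymm] at hg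
  exact Submonoid.exists_list_of_mem_closure hg

lemma exists_isSelfAvoiding_prod_eq {S : Set Γ} (hS : ∀ s ∈ S, s⁻¹ ∈ S) {g : Γ}
    (hg : g ∈ Subgroup.closure S) :
    ∃ l : List Γ, (∀ x ∈ l, x ∈ S) ∧ IsSelfAvoiding l ∧ l.prod = g := by
  obtain ⟨l, ⟨hlS, hlg⟩, hmin⟩ := exists_minimalFor_of_wellFoundedLT
    (fun l : List Γ => (∀ x ∈ l, x ∈ S) ∧ l.prod = g) List.length
    (exists_prod_eq_of_mem_closure hS hg)
  refine ⟨l, hlS, ?_, hlg⟩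
  by_contra hl
  obtain ⟨l', hlen, hprod, hsub, -⟩ := exists_shorter_of_not_nodup hl
  exact hlen.not_ge (hmin ⟨fun x hx => hlS x (hsub hx), hprod.trans hlg⟩ hlen.le)

lemma isFactorClosed_isSelfAvoiding : IsFactorClosed (IsSelfAvoiding (Γ := Γ)) :=
  fun _ _ hul hl => hl.of_isInfix hul

lemma nonempty_words_isSelfAvoiding {S : Finset Γ} [Infinite (Subgroup.closure (S : Set Γ))]
    (hS : ∀ s ∈ S, s⁻¹ ∈ S) (n : ℕ) : (words S IsSelfAvoiding n).Nonempty := by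
  by_contra hempty
  have hlength : ∀ l : List Γ, (∀ x ∈ l, x ∈ S) → IsSelfAvoiding l → l.length < n := by
    intro l hlS hl
    by_contra! hn
    exact hempty ⟨l.take n, mem_words.2 ⟨List.length_take_of_le hn,
      fun x hx => hlS x (List.mem_of_mem_take hx), hl.of_isInfix (List.take_prefix n l).isInfix⟩⟩
  have hfinite : (Subgroup.closure (S : Set Γ) : Set Γ) ⊆
      (Finset.range n).biUnion fun j => (words S IsSelfAvoiding j).image List.prod := by
    intro g hg
    obtain ⟨l, hlS, hl, rfl⟩ := exists_isSelfAvoiding_prod_eq (S := (S : Set Γ)) hS hg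
    exact Finset.mem_biUnion.2 ⟨l.length, Finset.mem_range.2 (hlength l hlS hl),
      Finset.mem_image_of_mem _ (mem_words.2 ⟨rfl, hlS, hl⟩)⟩
  exact (Set.infinite_coe_iff.1 ‹_›) ((Finset.finite_toSet _).subset hfinite)

end CayleyGraph

section Crowdedness

variable {Γ : Type*} [Group Γ]

lemma isFactorClosed_isSelfAvoiding_not_isCrowded (B : Finset Γ) (k : ℕ) :
    IsFactorClosed fun l => IsSelfAvoiding l ∧ ¬ IsCrowded B k l :=
  fun _ _ hul hl => ⟨hl.1.of_isInfix hul, fun h => hl.2 (h.of_isInfix hul)⟩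

lemma exists_critical_crowding {S : Finset Γ} (B : Finset Γ) {μ : ℝ} (hμ : 0 < μ)
    (hS : ∀ m ≠ 0, μ ^ m ≤ (words S IsSelfAvoiding m).card) :
    ∃ k, (∃ m ≠ 0, ((words S (fun l => IsSelfAvoiding l ∧ ¬ IsCrowded B k l) m).card : ℝ) < μ ^ m) ∧
      ∀ m ≠ 0, μ ^ m ≤ (words S (fun l => IsSelfAvoiding l ∧ ¬ IsCrowded B (k + 1) l) m).card := by
  set P : ℕ → Prop := fun k =>
    ∃ m ≠ 0, ((words S (fun l => IsSelfAvoiding l ∧ ¬ IsCrowded B k l) m).card : ℝ) < μ ^ m with hP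
  have hzero : P 0 := by
    refine ⟨2, two_ne_zero, ?_⟩
    have hempty : words S (fun l => IsSelfAvoiding l ∧ ¬ IsCrowded B 0 l) 2 = ∅ := by
      refine Finset.eq_empty_of_forall_notMem fun l hl => ?_
      obtain ⟨hlen, -, -, hcrowd⟩ := mem_words.1 hl
      obtain ⟨a, b, rfl⟩ := List.length_eq_two.1 hlen
      exact hcrowd ⟨[a], [b], rfl, by simp, by simp, Nat.zero_le _⟩
    rw [hempty, Finset.card_empty, Nat.cast_zero]
    positivity
  have hlarge : ¬ P (B.card + 1) := by
    rintro ⟨m, hm, hlt⟩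
    refine hlt.not_ge ((hS m hm).trans ?_)
    gcongr
    intro l hl
    obtain ⟨hlen, hlS, hl⟩ := mem_words.1 hl
    refine mem_words.2 ⟨hlen, hlS, hl, ?_⟩
    rintro ⟨U₁, -, -, -, -, hk⟩
    exact (card_visited_le B l U₁.prod).not_gt hk
  obtain ⟨k, hk, hk'⟩ : ∃ k, P k ∧ ¬ P (k + 1) := by
    by_contra! hstep
    exact hlarge (Nat.rec (motive := P) hzero hstep _)
  refine ⟨k, hk, ?_⟩
  simpa only [hP, not_exists, not_and, not_lt] using hk'

end Crowdedness

section Assembly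

variable {Γ : Type*} [Group Γ]

lemma exists_edit_of_isCrowded {S T B : Finset Γ} (hST : S ⊆ T) (hS : ∀ s ∈ S, s⁻¹ ∈ S)
    (hT : ∀ s ∈ T, s⁻¹ ∈ T) {w : Γ} (hwT : w ∈ T) (hwS : w ∉ S) {R : ℕ}
    (hR : IsConnectionRadius (T : Set Γ) R) {k : ℕ} {U : List Γ} (hU : IsSelfAvoiding U)
    (hUS : ∀ x ∈ U, x ∈ S) (hcrowd : IsCrowded B k U) :
    ∃ U', IsNewWord (S : Set Γ) T (U.length + (R + 1)) U' ∧
      (InsertStep (T : Set Γ) w U U' ∨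
        IsCrowdedEdit B ((insert 1 T : Set Γ) ^ (R + 1)) k U U') := by
  obtain ⟨U₁, U₂, rfl, hU₁, hU₂, hk⟩ := hcrowd
  obtain ⟨U', hnew, hedit⟩ := exists_edit (S := (S : Set Γ)) (T := (T : Set Γ))
    (Finset.coe_subset.2 hST) hS hT hwT hwS hR hU₁ hU₂ hU hUS
  exact ⟨U', hnew, hedit.imp_right fun h => ⟨U₁, U₂, rfl, hU₁, hU₂, hk, h⟩⟩

/-- The sequences of `q` self-avoiding words of length `m` that concatenate to a self-avoiding word
which is not `k`-crowded. -/
noncomputable def sparseBlocks (S B : Finset Γ) (k m q : ℕ) : Finset (List (List Γ)) :=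
  (listsOver (words S IsSelfAvoiding m) q).filter fun p =>
    IsSelfAvoiding p.flatten ∧ ¬ IsCrowded B k p.flatten

/-- The `k`-crowded self-avoiding words of length `m`. -/
noncomputable def crowdedWords (S B : Finset Γ) (k m : ℕ) : Finset (List Γ) :=
  words S (fun l => IsSelfAvoiding l ∧ IsCrowded B k l) m

lemma crowdedWords_subset {S B : Finset Γ} {k m : ℕ} :
    crowdedWords S B k m ⊆ words S IsSelfAvoiding m := fun _ hl => by
  obtain ⟨hlen, hlS, hl, -⟩ := mem_words.1 hl
  exact mem_words.2 ⟨hlen, hlS, hl⟩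

lemma filter_notMem_crowdedWords (S B : Finset Γ) (k m : ℕ) :
    (words S IsSelfAvoiding m).filter (¬ · ∈ crowdedWords S B k m) =
      words S (fun l => IsSelfAvoiding l ∧ ¬ IsCrowded B k l) m := by
  ext l
  rw [Finset.mem_filter, crowdedWords]
  simp only [mem_words]
  tauto

lemma card_words_le_card_sparseBlocks (S B : Finset Γ) (k m q : ℕ) :
    (words S (fun l => IsSelfAvoiding l ∧ ¬ IsCrowded B k l) (m * q)).card ≤
      (sparseBlocks S B k m q).card := by
  refine (Finset.card_le_card fun l hl => ?_).trans
    (Finset.card_image_le (s := sparseBlocks S B k m q) (f := List.flatten))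
  obtain ⟨hlen, hlS, hl, hcrowd⟩ := mem_words.1 hl
  obtain ⟨p, hp, rfl⟩ := exists_blocks_of_mem_words isFactorClosed_isSelfAvoiding
    (mem_words.2 ⟨hlen, hlS, hl⟩)
  exact Finset.mem_image_of_mem _ (Finset.mem_filter.2 ⟨hp, hl, hcrowd⟩)

lemma half_pow_le_card_sparseBlocks {S B : Finset Γ} {k m : ℕ} (hm : m ≠ 0) {μ : ℝ} (hμ : 0 < μ)
    (hpow : μ ^ m ≤ (words S IsSelfAvoiding m).card)
    (hfew : ((words S (fun l => IsSelfAvoiding l ∧ ¬ IsCrowded B k l) m).card : ℝ) *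
      (words S IsSelfAvoiding m).card ≤ (μ ^ m) ^ 2 / 8)
    (hmany : ∀ n ≠ 0, μ ^ n ≤
      (words S (fun l => IsSelfAvoiding l ∧ ¬ IsCrowded B (k + 1) l) n).card)
    {q : ℕ} (hq : q ≠ 0) :
    μ ^ (m * (2 * q)) / 2 ≤ ((sparseBlocks S B (k + 1) m (2 * q)).filter
      fun p => q ≤ p.countP (· ∈ crowdedWords S B k m)).card := by
  set 𝓑 := sparseBlocks S B (k + 1) m (2 * q)
  have hall : μ ^ (m * (2 * q)) ≤ 𝓑.card := (hmany _ (by positivity)).trans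
    (Nat.cast_le.2 (card_words_le_card_sparseBlocks S B (k + 1) m (2 * q)))
  have hbad : ((𝓑.filter fun p => ¬ q ≤ p.countP (· ∈ crowdedWords S B k m)).card : ℝ) ≤
      μ ^ (m * (2 * q)) / 2 := calc
    _ ≤ (((listsOver (words S IsSelfAvoiding m) (2 * q)).filter fun p =>
        p.countP (· ∈ crowdedWords S B k m) < q).card : ℝ) := by
      simp only [not_le]
      gcongr
      exact Finset.filter_subset _ _
    _ ≤ ((μ ^ m) ^ 2 / 2) ^ q := by
      refine card_filter_countP_lt_le _ _ q (by positivity) (by gcongr) ?_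
      rwa [filter_notMem_crowdedWords]
    _ ≤ μ ^ (m * (2 * q)) / 2 := by
      rw [div_pow, ← pow_mul, ← pow_mul]
      gcongr
      exact le_self_pow₀ one_le_two hq
  have hsplit := Finset.card_filter_add_card_filter_not (s := 𝓑)
    fun p => q ≤ p.countP (· ∈ crowdedWords S B k m)
  have hsplit' : ((𝓑.filter fun p => q ≤ p.countP (· ∈ crowdedWords S B k m)).card : ℝ) +
      (𝓑.filter fun p => ¬ q ≤ p.countP (· ∈ crowdedWords S B k m)).card = 𝓑.card := by
    exact_mod_cast hsplit
  linarith

lemma exists_isSelfAvoiding_flatten_edits {S T : Finset Γ} (hST : S ⊂ T) (hS : ∀ s ∈ S, s⁻¹ ∈ S)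
    (hT : ∀ s ∈ T, s⁻¹ ∈ T) (h1T : 1 ∉ T) {R : ℕ} (hR : IsConnectionRadius (T : Set Γ) R)
    {B : Finset Γ} (hB : B = insert 1 T ^ (R + 1) / insert 1 T ^ (R + 1)) (k m : ℕ) :
    ∃ edit : List Γ → List Γ,
      (∀ U ∈ crowdedWords S B k m, IsNewWord (S : Set Γ) T (m + (R + 1)) (edit U)) ∧
      ∀ q, ∀ L ∈ listsOver (editPairs (words S IsSelfAvoiding m) (crowdedWords S B k m) edit) q,
        L.map Prod.fst ∈ sparseBlocks S B (k + 1) m q →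
          (∀ x ∈ (L.map Prod.snd).flatten, x ∈ T) ∧
          IsSelfAvoiding (L.map Prod.snd).flatten := by
  obtain ⟨w, hwT, hwS⟩ := Finset.exists_of_ssubset hST
  set E : Set Γ := insert 1 (T : Set Γ) ^ (R + 1) with hE
  have hex : ∀ U, ∃ U', U ∈ crowdedWords S B k m →
      IsNewWord (S : Set Γ) T (m + (R + 1)) U' ∧
        (InsertStep (T : Set Γ) w U U' ∨ IsCrowdedEdit B E k U U') := fun U => by
    by_cases hU : U ∈ crowdedWords S B k m
    · obtain ⟨rfl, hUS, hsaw, hcrowd⟩ := mem_words.1 hU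
      obtain ⟨U', hU'⟩ := exists_edit_of_isCrowded hST.1 hS hT hwT hwS hR hsaw hUS hcrowd
      exact ⟨U', fun _ => hU'⟩
    · exact ⟨U, fun h => absurd h hU⟩
  choose edit hedit using hex
  refine ⟨edit, fun U hU => (hedit U hU).1, fun q L hL hLB => ?_⟩
  obtain ⟨-, hsaw, hsparse⟩ := Finset.mem_filter.1 hLB
  have hLT : ∀ a ∈ L, (∀ x ∈ a.1, x ∈ T) ∧ ∀ x ∈ a.2, x ∈ T := fun a ha => by
    rcases mem_editPairs.1 ((mem_listsOver.1 hL).2 a ha) with ⟨ha𝓑, ha'⟩ | ⟨ha𝓖, ha'⟩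
    · have haT : ∀ x ∈ a.1, x ∈ T := fun x hx => hST.1 ((mem_words.1 ha𝓑).2.1 x hx)
      exact ⟨haT, ha' ▸ haT⟩
    · exact ⟨fun x hx => hST.1 ((mem_words.1 ha𝓖).2.1 x hx), ha' ▸ (hedit _ ha𝓖).1.forall_mem⟩
  refine ⟨fun x hx => ?_, isSelfAvoiding_flatten_of_edits (T := (T : Set Γ)) (B := B) (E := E)
    hT (ne_of_mem_of_not_mem hwT h1T) hwT ?_ ?_ hLT (fun a ha => ?_) hsaw hsparse⟩
  · obtain ⟨_, hu, hx⟩ := List.mem_flatten.1 hx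
    obtain ⟨a, ha, rfl⟩ := List.mem_map.1 hu
    exact (hLT a ha).2 x hx
  · exact Set.one_mem_pow (Set.mem_insert _ _)
  · rw [hB, hE]
    push_cast
    rfl
  · rcases mem_editPairs.1 ((mem_listsOver.1 hL).2 a ha) with ⟨-, ha'⟩ | ⟨ha𝓖, ha'⟩
    exacts [.inl ha', .inr (ha' ▸ (hedit _ ha𝓖).2)]

lemma card_filter_mul_pow_le {S T : Finset Γ} (hST : S ⊂ T) (hS : ∀ s ∈ S, s⁻¹ ∈ S)
    (hT : ∀ s ∈ T, s⁻¹ ∈ T) (h1T : 1 ∉ T) {R : ℕ} (hR : IsConnectionRadius (T : Set Γ) R)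
    {B : Finset Γ} (hB : B = insert 1 T ^ (R + 1) / insert 1 T ^ (R + 1)) (k : ℕ) {m : ℕ}
    (hm : 1 ≤ m) {y z : ℝ} (hy : 0 ≤ y)
    (hyS : (m + (R + 1) : ℕ) * (y * (2 * (words S IsSelfAvoiding m).card)) ≤ 1) (hz : 0 ≤ z)
    (hz1 : z ≤ 1) (q N : ℕ) :
    (((sparseBlocks S B (k + 1) m N).filter
      fun p => q ≤ p.countP (· ∈ crowdedWords S B k m)).card : ℝ) *
        (1 + y * z ^ (R + 1)) ^ q * z ^ (m * N) ≤
      ∑ j ∈ Finset.range ((m + (R + 1)) * N + 1), (words T IsSelfAvoiding j).card * z ^ j := by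
  obtain ⟨edit, hnew, hedit⟩ := exists_isSelfAvoiding_flatten_edits hST hS hT h1T hR hB k m
  set W := (Finset.range ((m + (R + 1)) * N + 1)).biUnion (words T IsSelfAvoiding)
  have hlength : ∀ a ∈ editPairs (words S IsSelfAvoiding m) (crowdedWords S B k m) edit,
      a.2.length ≤ m + (R + 1) := fun a ha => by
    rcases mem_editPairs.1 ha with ⟨ha, h⟩ | ⟨ha, h⟩
    · rw [h, (mem_words.1 ha).1]
      omega
    · exact h ▸ (hnew _ ha).length_le
  have hmem : ∀ L ∈ listsOver (editPairs (words S IsSelfAvoiding m) (crowdedWords S B k m) edit) N,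
      L.map Prod.fst ∈ sparseBlocks S B (k + 1) m N → (L.map Prod.snd).flatten ∈ W := by
    intro L hL hLB
    obtain ⟨hLT, hsaw⟩ := hedit N L hL hLB
    obtain ⟨rfl, hLI⟩ := mem_listsOver.1 hL
    have hlen : (L.map Prod.snd).flatten.length ≤ (m + (R + 1)) * L.length := by
      rw [List.length_flatten, List.map_map, mul_comm, ← smul_eq_mul]
      simpa using List.sum_le_card_nsmul (L.map (List.length ∘ Prod.snd)) (m + (R + 1))
        (List.forall_mem_map.2 fun a ha => hlength a (hLI a ha))
    exact Finset.mem_biUnion.2 ⟨_, Finset.mem_range_succ_iff.2 hlen, mem_words.2 ⟨rfl, hLT, hsaw⟩⟩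
  calc
    _ ≤ ∑ r ∈ W, z ^ r.length := by
      refine le_trans ?_ (sum_prod_editWeight_le crowdedWords_subset hm
        (fun U hU => ⟨(mem_words.1 hU).1, (mem_words.1 hU).2.1⟩) hnew hy hyS hz hz1
        (Finset.filter_subset _ _) hmem)
      rw [← Finset.sum_mul]
      exact mul_le_mul_of_nonneg_right (card_filter_le_countP_mul_le (by positivity) q)
        (by positivity)
    _ = _ := sum_pow_length_biUnion_words _ _ _ z

lemma HasGrowthRate.lt_of_ssubset {S T : Finset Γ} [Infinite (Subgroup.closure (S : Set Γ))]
    (hST : S ⊂ T) (hS : ∀ s ∈ S, s⁻¹ ∈ S) (hT : ∀ s ∈ T, s⁻¹ ∈ T) (h1T : 1 ∉ T) {μ ν : ℝ}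
    (hμ : HasGrowthRate (fun n => (words S IsSelfAvoiding n).card) μ)
    (hν : HasGrowthRate (fun n => (words T IsSelfAvoiding n).card) ν) : μ < ν := by
  have hμ1 : 1 ≤ μ := hμ.one_le fun n => (nonempty_words_isSelfAvoiding hS n).card_pos
  have hμ0 : 0 < μ := one_pos.trans_le hμ1
  have hpow : ∀ m ≠ 0, μ ^ m ≤ (words S IsSelfAvoiding m).card := fun m hm =>
    hμ.pow_le (card_words_mul_le isFactorClosed_isSelfAvoiding) hm
  obtain ⟨R, hR⟩ := exists_isConnectionRadius T
  set B : Finset Γ := insert 1 T ^ (R + 1) / insert 1 T ^ (R + 1) with hB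
  obtain ⟨k, ⟨m₀, hm₀, hfew⟩, hmany⟩ := exists_critical_crowding B hμ0 hpow
  obtain ⟨m, hm, hbad⟩ := hμ.exists_mul_le hμ0
    (b := fun m => (words S (fun l => IsSelfAvoiding l ∧ ¬ IsCrowded B k l) m).card)
    (card_words_mul_le (isFactorClosed_isSelfAvoiding_not_isCrowded B k)) hm₀ hfew
    (ε := 1 / 8) (by norm_num)
  rw [one_div_mul_eq_div] at hbad
  have hcard : (0 : ℝ) < (words S IsSelfAvoiding m).card := (pow_pos hμ0 m).trans_le (hpow m hm)
  set y : ℝ := ((m + (R + 1) : ℕ) * (2 * (words S IsSelfAvoiding m).card))⁻¹ with hy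
  have hy0 : 0 < y := by positivity
  have hyS : (m + (R + 1) : ℕ) * (y * (2 * (words S IsSelfAvoiding m).card)) ≤ 1 := by
    rw [mul_left_comm, hy, inv_mul_cancel₀ (by positivity)]
  refine hν.lt_of_forall_pow_le hμ0 (t := y * μ⁻¹ ^ (R + 1)) (by positivity) zero_le_two
    (M := (m + (R + 1)) * 2) fun q hq => ?_
  have hle := card_filter_mul_pow_le hST hS hT h1T hR hB k (Nat.one_le_iff_ne_zero.2 hm) hy0.le
    hyS (inv_nonneg.2 hμ0.le) (inv_le_one_of_one_le₀ hμ1) q (2 * q)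
  have hhalf := half_pow_le_card_sparseBlocks hm hμ0 (hpow m hm) hbad hmany hq
  calc (1 + y * μ⁻¹ ^ (R + 1)) ^ q
    _ = 2 * (μ ^ (m * (2 * q)) / 2 * (1 + y * μ⁻¹ ^ (R + 1)) ^ q * μ⁻¹ ^ (m * (2 * q))) := by
      rw [inv_pow μ (m * (2 * q))]
      field_simp
    _ ≤ 2 * ∑ j ∈ Finset.range ((m + (R + 1)) * (2 * q) + 1),
        (words T IsSelfAvoiding j).card * μ⁻¹ ^ j := by
      refine mul_le_mul_of_nonneg_left (le_trans ?_ hle) zero_le_two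
      gcongr
    _ = _ := by rw [mul_assoc]

end Assembly

end CayleyWord

theorem cayley_add_generator_strict_increase_general {Γ : Type*} [Group Γ] {S T : Set Γ}
    [Infinite (Subgroup.closure S)] (hTfin : T.Finite) (hST : S ⊂ T) (hS : ∀ s ∈ S, s⁻¹ ∈ S)
    (hT : ∀ s ∈ T, s⁻¹ ∈ T) (h1T : 1 ∉ T) {μ ν : ℝ}
    (hμ : Tendsto (fun n : ℕ => (sawCount (cayleyGraph S) 1 n : ℝ) ^ ((1 : ℝ) / n))
      atTop (nhds μ))
    (hν : Tendsto (fun n : ℕ => (sawCount (cayleyGraph T) 1 n : ℝ) ^ ((1 : ℝ) / n))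
      atTop (nhds ν)) :
    μ < ν := by
  have hSfin : S.Finite := hTfin.subset hST.1
  lift T to Finset Γ using hTfin
  lift S to Finset Γ using hSfin
  simp only [Finset.mem_coe] at hS hT h1T
  simp only [CayleyWord.sawCount_cayleyGraph hS fun h => h1T (Finset.coe_subset.1 hST.1 h)] at hμ
  simp only [CayleyWord.sawCount_cayleyGraph hT h1T] at hν
  exact CayleyWord.HasGrowthRate.lt_of_ssubset (Finset.coe_ssubset.1 hST) hS hT h1T hμ hν

/-- Declaring a non-trivial element `w ∉ S` to be a generator strictly increases the
connective constant of the Cayley graph. -/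
theorem cayley_add_generator_strict_increase {Γ : Type*} [Group Γ] [Infinite Γ]
    (S : Finset Γ)
    (hgen : Subgroup.closure (S : Set Γ) = ⊤)
    (hSinv : ∀ s ∈ S, s⁻¹ ∈ S)
    (h1S : (1 : Γ) ∉ S)
    (w : Γ) (hw1 : w ≠ 1) (hwS : w ∉ S)
    (μ μbar : ℝ)
    (hμ : Tendsto (fun n : ℕ => (sawCount (cayleyGraph (S : Set Γ)) 1 n : ℝ) ^ ((1 : ℝ) / n))
      atTop (nhds μ))
    (hμbar : Tendsto (fun n : ℕ =>
        (sawCount (cayleyGraph ((S : Set Γ) ∪ {w, w⁻¹})) 1 n : ℝ) ^ ((1 : ℝ) / n))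
      atTop (nhds μbar)) :
    μ < μbar := by
  have : Infinite (Subgroup.closure (S : Set Γ)) :=
    hgen ▸ Subgroup.topEquiv.toEquiv.infinite_iff.2 ‹_›
  exact cayley_add_generator_strict_increase_general (T := (S : Set Γ) ∪ {w, w⁻¹})
    (Set.toFinite _) ⟨Set.subset_union_left, fun h => hwS (h (by simp))⟩ hSinv
    (by rintro s (hs | rfl | rfl); exacts [.inl (hSinv s hs), by simp, by simp])
    (by simp [h1S, hw1, hw1.symm]) hμ hμbar
end
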